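/- arXiv:2309.15598 — 2 statements merged into one kernel-verified Lean document; each statement's English description precedes it below -/
import Mathlib

section
/- Let n ≥ 2 and let M^n be a smooth, closed, strictly convex hypersurface in ℝ^{n+1} enclosing the origin, with positive support function h. If M satisfies the isotropic L_p dual Minkowski equation h^{p-1} |Dh|^{n+1-q} 𝒦 = 1 on S^n (where 𝒦 is the Gauss curvature and Dh = ∇̄h + h x is the inverse Gauss map), and if −(n+1) ≤ p ≤ −n and 1 ≤ q < n+1, then M is the unit sphere. -/
open MeasureTheory Matrix Metric
open scoped RealInnerProductSpace

noncomputable section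

/-- Euclidean space `ℝ^{n+1}`. -/
abbrev Euc (n : ℕ) : Type := EuclideanSpace ℝ (Fin (n + 1))

/-- The Euclidean Hessian matrix of `H : ℝ^{n+1} → ℝ` at `x`. -/
def ehess (n : ℕ) (H : Euc n → ℝ) (x : Euc n) : Matrix (Fin (n + 1)) (Fin (n + 1)) ℝ :=
  Matrix.of fun i j =>
    fderiv ℝ (fun y => fderiv ℝ H y (EuclideanSpace.single j 1)) x (EuclideanSpace.single i 1)

/-- For the 1-homogeneous extension `H` of the support function `h` and `x ∈ S^n`, the matrix
`D²H(x) + h(x)·x xᵀ`.  Its restriction to the tangent space `x^⊥ = T_x S^n` is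
`A[h] = ∇̄²h + h ḡ`, and `x` is an eigenvector with eigenvalue `h(x)`. -/
def bmat (n : ℕ) (H : Euc n → ℝ) (x : Euc n) : Matrix (Fin (n + 1)) (Fin (n + 1)) ℝ :=
  ehess n H x + Matrix.of fun i j => H x * (x i * x j)

/-- `σ_n = det A[h] = det(∇̄²h + h ḡ)/det ḡ`, computed as `det(bmat)/h`. -/
def sigman (n : ℕ) (H : Euc n → ℝ) (x : Euc n) : ℝ :=
  Matrix.det (bmat n H x) / H x

/-- The Gauss curvature `𝒦 = 1/σ_n`. -/
def gaussCurv (n : ℕ) (H : Euc n → ℝ) (x : Euc n) : ℝ := (sigman n H x)⁻¹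

/-- The round (spherical) gradient `∇̄f` at `x ∈ S^n`: the Euclidean gradient of the
0-homogeneous extension `y ↦ f(y/‖y‖)`.  It depends only on `f|_{S^n}` and lies in `T_x S^n`. -/
def sphGrad (n : ℕ) (f : Euc n → ℝ) (x : Euc n) : Euc n :=
  gradient (fun y => f (‖y‖⁻¹ • y)) x

/-- The function `log (h^{n+2}/𝒦)` (as a function of `y`; on the sphere it agrees with the
centro-affine expression appearing in the paper). -/
def logQ (n : ℕ) (H : Euc n → ℝ) (y : Euc n) : ℝ :=
  Real.log ((H y) ^ (n + 2) / gaussCurv n H y)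

/-- The centro-affine inner product `g(∇f, ∇u) = h ⟨A[h]⁻¹ ∇̄f, ∇̄u⟩` of the `g`-gradients of
`f` and `u`, where `g = A[h]/h` is the centro-affine metric. -/
def gInner (n : ℕ) (H f u : Euc n → ℝ) (x : Euc n) : ℝ :=
  H x * ∑ i, (bmat n H x)⁻¹.mulVec (fun j => sphGrad n f x j) i * sphGrad n u x i

/-- The squared centro-affine norm `|∇f|_g²` of the `g`-gradient of `f`. -/
def gNormSq (n : ℕ) (H f : Euc n → ℝ) (x : Euc n) : ℝ := gInner n H f f x

/-- The centro-affine Laplacian `Δf = div_g(∇ f)` (with respect to the centro-affine connection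
`∇` induced by the centro-affine normal `ξ = X`, and the centro-affine metric `g = A[h]/h`),
computed via the identity `Δf = tr_g(A[hf]/h) - n f`, i.e.
`Δf = tr(B[h]⁻¹ B[hf]) - (n+1) f` where `B[u] = D²ũ + u·x xᵀ` for the 1-homogeneous
extension `ũ` of `u`. -/
def caLap (n : ℕ) (H f : Euc n → ℝ) (x : Euc n) : ℝ :=
  Matrix.trace ((bmat n H x)⁻¹ * bmat n (fun y => H y * f (‖y‖⁻¹ • y)) x) - (n + 1) * f x

/-- The spherical Lebesgue measure on `S^n ⊂ ℝ^{n+1}` (up to a positive constant). -/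
def sphMeasure (n : ℕ) : Measure (sphere (0 : Euc n) 1) :=
  (volume : Measure (Euc n)).toSphere

/-- The density of the cone-volume-type measure `dV = h σ_n dμ` with respect to the spherical
Lebesgue measure. -/
def volDens (n : ℕ) (H : Euc n → ℝ) (x : Euc n) : ℝ := H x * sigman n H x

/-! ### Part 1 : Prekopa-Leindler -/

lemma vol_half_preimage (m : ℝ) (S : Set ℝ) :
    volume {a : ℝ | (1/2:ℝ) • (a + m) ∈ S} = 2 * volume S := by
  have h1 : {a : ℝ | (1/2:ℝ) • (a + m) ∈ S}
      = (fun x => (1/2:ℝ) * x) ⁻¹' ((fun x => x + m/2) ⁻¹' S) := by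
    ext a
    simp only [smul_eq_mul, Set.mem_ofPred_eq, Set.mem_preimage]
    rw [show (1/2:ℝ) * (a + m) = 1/2 * a + m/2 by ring]
  rw [h1, Real.volume_preimage_mul_left (by norm_num), measure_preimage_add_right]
  norm_num

lemma bm1 (A B W : Set ℝ) (hA : MeasurableSet A) (hB : MeasurableSet B)
    (hA0 : A.Nonempty) (hB0 : B.Nonempty)
    (h : ∀ a ∈ A, ∀ b ∈ B, (1/2:ℝ) • (a + b) ∈ W) : volume A + volume B ≤ 2 * volume W := by
  obtain ⟨a0, ha0⟩ := hA0
  obtain ⟨b0, hb0⟩ := hB0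
  have key : ∀ K1 K2 : Set ℝ, K1 ⊆ A → K2 ⊆ B → IsCompact K1 → IsCompact K2 →
      volume K1 + volume K2 ≤ 2 * volume W := by
    intro K1' K2' h1' h2' c1' c2'
    suffices ∀ K1 K2 : Set ℝ, K1 ⊆ A → K2 ⊆ B → IsCompact K1 → IsCompact K2 →
      K1.Nonempty → K2.Nonempty → volume K1 + volume K2 ≤ 2 * volume W by
      refine le_trans ?_ (this (insert a0 K1') (insert b0 K2') (Set.insert_subset ha0 h1')
        (Set.insert_subset hb0 h2') (c1'.insert _) (c2'.insert _) (Set.insert_nonempty _ _)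
        (Set.insert_nonempty _ _))
      gcongr <;> exact Set.subset_insert _ _
    intro K1 K2 h1 h2 c1 c2 n1 n2
    obtain ⟨M, hM, hM'⟩ := c1.exists_isGreatest n1
    obtain ⟨m, hm, hm'⟩ := c2.exists_isLeast n2
    have e1 : volume K1 ≤ 2 * volume (W ∩ Set.Iic ((1/2:ℝ) • (M + m))) := by
      rw [← vol_half_preimage m]
      apply measure_mono
      intro a ha
      refine ⟨h a (h1 ha) m (h2 hm), ?_⟩
      have := hM' ha
      simp only [smul_eq_mul, Set.mem_Iic]; linarith
    have e2 : volume K2 ≤ 2 * volume (W ∩ Set.Ici ((1/2:ℝ) • (M + m))) := by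
      rw [← vol_half_preimage M]
      apply measure_mono
      intro b hb
      have e := h M (h1 hM) b (h2 hb)
      rw [add_comm] at e
      refine ⟨e, ?_⟩
      have := hm' hb
      simp only [smul_eq_mul, Set.mem_Ici]; linarith
    have e3 : volume (W ∩ Set.Ici ((1/2:ℝ) • (M + m)))
        ≤ volume (W \ Set.Iic ((1/2:ℝ) • (M + m))) := by
      have : W ∩ Set.Ici ((1/2:ℝ) • (M + m)) ⊆
        (W \ Set.Iic ((1/2:ℝ) • (M + m))) ∪ {(1/2:ℝ) • (M + m)} := by
        rintro x ⟨hx, hx'⟩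
        by_cases hh : x = (1/2:ℝ) • (M + m)
        · right; exact hh
        · left; exact ⟨hx, fun hx2 => hh (le_antisymm hx2 hx')⟩
      refine (measure_mono this).trans ((measure_union_le _ _).trans ?_)
      simp
    calc volume K1 + volume K2 ≤ 2 * volume (W ∩ Set.Iic ((1/2:ℝ) • (M + m)))
          + 2 * volume (W \ Set.Iic ((1/2:ℝ) • (M + m))) := by
          gcongr
          exact e2.trans (by gcongr)
      _ = 2 * volume W := by
          rw [← mul_add, measure_inter_add_sdiff _ measurableSet_Iic]
  refine le_of_forall_lt fun r hr => ?_
  by_contra hcon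
  push Not at hcon
  have hb : volume A + volume B ≤ 2 * volume W := by
    rw [hA.measure_eq_iSup_isCompact, hB.measure_eq_iSup_isCompact]
    simp only [iSup_and']
    refine ENNReal.biSup_add_biSup_le' ⟨∅, Set.empty_subset _, isCompact_empty⟩
      ⟨∅, Set.empty_subset _, isCompact_empty⟩ ?_
    rintro K1 ⟨h1, c1⟩ K2 ⟨h2, c2⟩
    exact key K1 K2 h1 h2 c1 c2
  exact absurd (hr.trans_le (hb.trans hcon)) (lt_irrefl _)

lemma layer_le_one (u : ℝ → ENNReal) (hu : Measurable u) (hu1 : ∀ x, u x ≤ 1) :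
    ∫⁻ x, u x = ∫⁻ t in Set.Ioi (0:ℝ), volume {a | ENNReal.ofReal t < u a} := by
  have hfin : ∀ x, u x ≠ ⊤ := fun x => ne_top_of_le_ne_top ENNReal.one_ne_top (hu1 x)
  have := lintegral_eq_lintegral_meas_lt (volume : Measure ℝ) (f := fun x => (u x).toReal)
    (Filter.Eventually.of_forall fun x => ENNReal.toReal_nonneg) (by fun_prop)
  simp only [ENNReal.ofReal_toReal (hfin _)] at this
  rw [this]
  refine setLIntegral_congr_fun measurableSet_Ioi fun t ht => ?_
  simp only [ENNReal.ofReal_lt_iff_lt_toReal (le_of_lt ht) (hfin _)]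

lemma pl1_norm (u v w : ℝ → ENNReal) (hu : Measurable u) (hv : Measurable v) (hw : Measurable w)
    (hu1 : ∀ x, u x ≤ 1) (hv1 : ∀ x, v x ≤ 1)
    (hu2 : ∀ r < 1, ∃ x, r < u x) (hv2 : ∀ r < 1, ∃ x, r < v x)
    (h : ∀ x y, u x * v y ≤ w ((1/2:ℝ) • (x + y)) ^ 2) :
    (∫⁻ x, u x) + (∫⁻ x, v x) ≤ 2 * ∫⁻ x, w x := by
  have e0 : ∫⁻ x, min (w x) 1 ≤ ∫⁻ x, w x := lintegral_mono fun x => min_le_left _ _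
  refine le_trans ?_ (mul_le_mul_right e0 2)
  rw [layer_le_one u hu hu1, layer_le_one v hv hv1,
    layer_le_one _ (hw.min measurable_const) (fun x => min_le_right _ _),
    ← lintegral_const_mul', ← lintegral_add_left']
  · refine setLIntegral_mono' measurableSet_Ioi fun t ht => ?_
    by_cases ht1 : ENNReal.ofReal t < 1
    · refine bm1 _ _ _ (measurableSet_lt measurable_const hu) (measurableSet_lt measurable_const hv)
        (hu2 _ ht1) (hv2 _ ht1) ?_
      intro a ha b hb
      simp only [Set.mem_ofPred_eq] at ha hb ⊢
      refine lt_min ?_ ht1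
      by_contra hcon
      push Not at hcon
      have h1 := h a b
      have h2 : w ((1/2:ℝ) • (a + b)) ^ 2 ≤ ENNReal.ofReal t * ENNReal.ofReal t := by
        rw [sq]; gcongr
      have h3 : ENNReal.ofReal t * ENNReal.ofReal t < u a * v b := ENNReal.mul_lt_mul ha hb
      exact absurd (h3.trans_le (h1.trans h2)) (lt_irrefl _)
    · have z1 : {a | ENNReal.ofReal t < u a} = ∅ := by
        ext a; simp only [Set.mem_ofPred_eq, Set.mem_empty_iff_false, iff_false]
        exact fun hh => ht1 (hh.trans_le (hu1 a))
      have z2 : {a | ENNReal.ofReal t < v a} = ∅ := by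
        ext a; simp only [Set.mem_ofPred_eq, Set.mem_empty_iff_false, iff_false]
        exact fun hh => ht1 (hh.trans_le (hv1 a))
      rw [z1, z2]; simp
  · refine Measurable.aemeasurable (Antitone.measurable ?_)
    intro s t hst
    apply measure_mono
    intro a ha
    exact lt_of_le_of_lt (ENNReal.ofReal_le_ofReal hst) ha
  · simp

lemma pl1_bdd (u v w : ℝ → ENNReal) (hu : Measurable u) (hv : Measurable v) (hw : Measurable w)
    (k : ENNReal) (hk : k ≠ ⊤)
    (hu1 : ∀ x, u x ≤ k) (hv1 : ∀ x, v x ≤ k)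
    (h : ∀ x y, u x * v y ≤ w ((1/2:ℝ) • (x + y)) ^ 2) :
    (∫⁻ x, u x) * ∫⁻ x, v x ≤ (∫⁻ x, w x) ^ 2 := by
  set α := ⨆ x, u x with hα
  set β := ⨆ x, v x with hβ
  have hαt : α ≠ ⊤ := ne_top_of_le_ne_top hk (iSup_le hu1)
  have hβt : β ≠ ⊤ := ne_top_of_le_ne_top hk (iSup_le hv1)
  by_cases hα0 : α = 0
  · have : ∀ x, u x = 0 := fun x => le_antisymm (hα0 ▸ le_iSup u x) (zero_le)
    simp [this]
  by_cases hβ0 : β = 0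
  · have : ∀ x, v x = 0 := fun x => le_antisymm (hβ0 ▸ le_iSup v x) (zero_le)
    simp [this]
  set γ := (α * β) ^ (1/2:ℝ) with hγ
  have hγ2 : γ ^ 2 = α * β := by
    rw [hγ, ← ENNReal.rpow_natCast, ← ENNReal.rpow_mul]; norm_num
  have hγ0 : γ ≠ 0 := by
    intro hh; rw [hh] at hγ2; simp [hα0, hβ0] at hγ2
  have hγt : γ ≠ ⊤ := by
    intro hh; rw [hh] at hγ2
    exact ENNReal.mul_ne_top hαt hβt (by rw [← hγ2]; simp)
  have key := pl1_norm (fun x => α⁻¹ * u x) (fun x => β⁻¹ * v x) (fun x => γ⁻¹ * w x)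
    (by fun_prop) (by fun_prop) (by fun_prop)
    (fun x => by
      rw [← ENNReal.inv_mul_cancel hα0 hαt]; gcongr; exact le_iSup u x)
    (fun x => by
      rw [← ENNReal.inv_mul_cancel hβ0 hβt]; gcongr; exact le_iSup v x)
    (fun r hr => by
      have : r * α < α := by
        calc r * α < 1 * α := ENNReal.mul_lt_mul_left hα0 hαt hr
          _ = α := one_mul _
      obtain ⟨x, hx⟩ := lt_iSup_iff.1 this
      refine ⟨x, ?_⟩
      rw [mul_comm, ← div_eq_mul_inv]
      exact (ENNReal.lt_div_iff_mul_lt (Or.inl hα0) (Or.inl hαt)).2 hx)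
    (fun r hr => by
      have : r * β < β := by
        calc r * β < 1 * β := ENNReal.mul_lt_mul_left hβ0 hβt hr
          _ = β := one_mul _
      obtain ⟨x, hx⟩ := lt_iSup_iff.1 this
      refine ⟨x, ?_⟩
      rw [mul_comm, ← div_eq_mul_inv]
      exact (ENNReal.lt_div_iff_mul_lt (Or.inl hβ0) (Or.inl hβt)).2 hx)
    (fun x y => by
      calc α⁻¹ * u x * (β⁻¹ * v y) = (α * β)⁻¹ * (u x * v y) := by
            rw [ENNReal.mul_inv (Or.inl hα0) (Or.inl hαt)]; ring
        _ ≤ (α * β)⁻¹ * w ((1/2:ℝ) • (x + y)) ^ 2 := by gcongr; exact h x y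
        _ = _ := by rw [← hγ2, mul_pow, ENNReal.inv_pow])
  rw [lintegral_const_mul _ hu, lintegral_const_mul _ hv, lintegral_const_mul _ hw] at key
  set U := ∫⁻ x, u x
  set V := ∫⁻ x, v x
  set W := ∫⁻ x, w x
  have am : 4 * ((α⁻¹ * U) * (β⁻¹ * V)) ≤ (α⁻¹ * U + β⁻¹ * V) ^ 2 := by
    generalize α⁻¹ * U = a
    generalize β⁻¹ * V = b
    by_cases ha : a = ⊤
    · simp [ha]
    by_cases hb : b = ⊤
    · simp [hb]
    lift a to NNReal using ha
    lift b to NNReal using hb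
    have := four_mul_le_sq_add a b
    rw [mul_assoc] at this
    exact_mod_cast this
  have e1 : 4 * ((α⁻¹ * U) * (β⁻¹ * V)) ≤ 4 * (γ⁻¹ * W) ^ 2 := by
    refine am.trans ?_
    calc (α⁻¹ * U + β⁻¹ * V) ^ 2 ≤ (2 * (γ⁻¹ * W)) ^ 2 := by gcongr
      _ = _ := by rw [mul_pow]; norm_num
  have e2 : (α⁻¹ * U) * (β⁻¹ * V) ≤ (γ⁻¹ * W) ^ 2 :=
    (ENNReal.mul_le_mul_iff_right (by norm_num) (by norm_num)).1 e1
  have e3 : (α * β)⁻¹ * (U * V) ≤ (α * β)⁻¹ * W ^ 2 := by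
    calc (α * β)⁻¹ * (U * V) = (α⁻¹ * U) * (β⁻¹ * V) := by
          rw [ENNReal.mul_inv (Or.inl hα0) (Or.inl hαt)]; ring
      _ ≤ (γ⁻¹ * W) ^ 2 := e2
      _ = _ := by rw [← hγ2, mul_pow, ENNReal.inv_pow]
  exact (ENNReal.mul_le_mul_iff_right (by simp [ENNReal.mul_eq_top, hαt, hβt])
    (by simp [hα0, hβ0])).1 e3

/-- midpoint Prekopa-Leindler property of a measure space -/
def PLprop (α : Type) [AddCommGroup α] [Module ℝ α] [MeasureSpace α] : Prop :=
  ∀ u v w : α → ENNReal, Measurable u → Measurable v → Measurable w →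
    (∀ x y, u x * v y ≤ w ((1/2:ℝ) • (x + y)) ^ 2) →
    (∫⁻ x, u x) * ∫⁻ x, v x ≤ (∫⁻ x, w x) ^ 2

lemma pl_real : PLprop ℝ := by
  intro u v w hu hv hw h
  have lim : ∀ f : ℝ → ENNReal, Measurable f → ∫⁻ x, f x = ⨆ k : ℕ, ∫⁻ x, min (f x) k := by
    intro f hf
    rw [← lintegral_iSup]
    · congr 1
      ext x
      apply le_antisymm
      · rcases eq_or_ne (f x) ⊤ with hx | hx
        · simp [hx, ENNReal.iSup_natCast]
        · obtain ⟨k, hk⟩ := ENNReal.exists_nat_gt hx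
          exact le_iSup_of_le k (le_min le_rfl hk.le)
      · exact iSup_le fun k => min_le_left _ _
    · intro k; exact hf.min measurable_const
    · intro k l hkl x
      exact min_le_min le_rfl (by exact_mod_cast hkl)
  rw [lim u hu, lim v hv, ENNReal.iSup_mul]
  refine iSup_le fun k => ?_
  rw [ENNReal.mul_iSup]
  refine iSup_le fun l => ?_
  refine pl1_bdd _ _ _ (hu.min measurable_const) (hv.min measurable_const) hw ((max k l : ℕ) : ENNReal)
    (ENNReal.natCast_ne_top _) ?_ ?_ ?_
  · intro x; exact (min_le_right _ _).trans (by exact_mod_cast le_max_left _ _)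
  · intro x; exact (min_le_right _ _).trans (by exact_mod_cast le_max_right _ _)
  · intro x y
    refine le_trans ?_ (h x y)
    gcongr <;> exact min_le_left _ _

lemma pl_prod (α β : Type) [AddCommGroup α] [Module ℝ α] [MeasureSpace α]
    [AddCommGroup β] [Module ℝ β] [MeasureSpace β] [SFinite (volume : Measure α)]
    [SFinite (volume : Measure β)]
    (hα : PLprop α) (hβ : PLprop β) : PLprop (α × β) := by
  intro u v w hu hv hw h
  rw [Measure.volume_eq_prod, lintegral_prod _ hu.aemeasurable, lintegral_prod _ hv.aemeasurable,
    lintegral_prod _ hw.aemeasurable]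
  refine hα _ _ _ hu.lintegral_prod_right' hv.lintegral_prod_right' hw.lintegral_prod_right' ?_
  intro x y
  refine hβ _ _ _ (hu.comp measurable_prodMk_left) (hv.comp measurable_prodMk_left)
    (hw.comp measurable_prodMk_left) ?_
  intro a b
  exact h (x, a) (y, b)

lemma pl_transfer (α β : Type) [AddCommGroup α] [Module ℝ α] [MeasureSpace α]
    [AddCommGroup β] [Module ℝ β] [MeasureSpace β] (e : α → β)
    (he : MeasurePreserving e volume volume)
    (hlin : ∀ x y, e ((1/2:ℝ) • (x + y)) = (1/2:ℝ) • (e x + e y))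
    (hα : PLprop α) : PLprop β := by
  intro u v w hu hv hw h
  rw [← he.lintegral_comp hu, ← he.lintegral_comp hv, ← he.lintegral_comp hw]
  refine hα _ _ _ (hu.comp he.measurable) (hv.comp he.measurable) (hw.comp he.measurable) ?_
  intro x y
  rw [hlin]
  exact h _ _

lemma pl_pi (m : ℕ) : PLprop (Fin m → ℝ) := by
  induction m with
  | zero =>
    intro u v w hu hv hw h
    rw [Measure.volume_pi_eq_dirac (x := default), lintegral_dirac, lintegral_dirac, lintegral_dirac]
    have := h default default
    rwa [Subsingleton.elim ((1/2:ℝ) • (default + default)) (default : Fin 0 → ℝ)] at this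
  | succ m ih =>
    refine pl_transfer (ℝ × (Fin m → ℝ)) _
      (MeasurableEquiv.piFinSuccAbove (fun _ : Fin (m+1) => ℝ) 0).symm
      (volume_preserving_piFinSuccAbove (fun _ : Fin (m+1) => ℝ) 0).symm ?_
      (pl_prod _ _ pl_real ih)
    rintro ⟨a, x⟩ ⟨b, y⟩
    ext i
    refine Fin.cases ?_ (fun j => ?_) i <;>
    simp [MeasurableEquiv.piFinSuccAbove, mul_add]

lemma pl_euc (m : ℕ) : PLprop (EuclideanSpace ℝ (Fin m)) := by
  refine pl_transfer _ _ _ (PiLp.volume_preserving_toLp (Fin m)) ?_ (pl_pi m)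
  intro x y
  ext i
  simp [mul_add]

/-! ### Part 2 : Brascamp-Lieb -/

lemma exp_lower (s : ℝ) : 1 + s + s ^ 2 / 2 - |s| ^ 3 ≤ Real.exp s := by
  rcases le_or_gt 0 s with hs | hs
  · have := Real.quadratic_le_exp_of_nonneg hs
    have h2 : 0 ≤ |s| ^ 3 := by positivity
    linarith
  · rcases le_or_gt (-1) s with h1 | h1
    · have := Real.exp_bound (x := s) (by rw [abs_le]; constructor <;> linarith) (n := 3) (by norm_num)
      have h2 := (abs_le.1 this).1
      simp only [Finset.sum_range_succ, Finset.sum_range_zero] at h2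
      norm_num [Nat.factorial] at h2
      have h3 : 0 ≤ |s| ^ 3 := by positivity
      nlinarith
    · have h0 := Real.exp_pos s
      rw [abs_of_neg hs]
      nlinarith [sq_nonneg s, mul_pos (neg_pos.2 hs) (neg_pos.2 hs), mul_nonneg (sq_nonneg s) (by linarith : 0 ≤ -s - 1)]

lemma gauss_int (m : ℕ) (hm : m ≠ 0) (κ : ℝ) (hκ : 0 < κ) (k : ℕ) :
    Integrable (fun x : EuclideanSpace ℝ (Fin m) => (1 + ‖x‖) ^ k * Real.exp (-κ * ‖x‖ ^ 2)) := by
  have : Nonempty (Fin m) := Fin.pos_iff_nonempty.1 (Nat.pos_of_ne_zero hm)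
  have h := (integrable_fun_norm_addHaar (volume : Measure (EuclideanSpace ℝ (Fin m)))
    (f := fun y : ℝ => (1 + y) ^ k * Real.exp (-κ * y ^ 2))).2
  apply h
  have e : ∀ j : ℕ, IntegrableOn (fun y : ℝ => y ^ j * Real.exp (-κ * y ^ 2)) (Set.Ioi 0) := by
    intro j
    have := integrableOn_rpow_mul_exp_neg_mul_sq hκ (s := (j : ℝ)) (by
      have : (0:ℝ) ≤ j := Nat.cast_nonneg j
      linarith)
    simpa using this
  have : ∀ y : ℝ, y ^ (Module.finrank ℝ (EuclideanSpace ℝ (Fin m)) - 1) • ((1 + y) ^ k * Real.exp (-κ * y ^ 2))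
      = ∑ i ∈ Finset.range (k+1), (k.choose i : ℝ) * (y ^ (Module.finrank ℝ (EuclideanSpace ℝ (Fin m)) - 1 + (k - i)) * Real.exp (-κ * y ^ 2)) := by
    intro y
    rw [add_pow, smul_eq_mul, Finset.sum_mul, Finset.mul_sum]
    refine Finset.sum_congr rfl fun i _ => ?_
    rw [pow_add, one_pow]; ring
  simp only [this]
  exact integrable_finsetSum _ fun i _ => (e _).const_mul _

lemma weight_int (m : ℕ) (hm : m ≠ 0) (V f : EuclideanSpace ℝ (Fin m) → ℝ) (κ : ℝ) (hκ : 0 < κ)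
    (hV : Continuous V) (hVl : ∀ x, κ * ‖x‖ ^ 2 ≤ V x) (hf : Measurable f) (C : ℝ) (k : ℕ)
    (hb : ∀ x, |f x| ≤ C * (1 + ‖x‖) ^ k) :
    Integrable (fun x => f x * Real.exp (-V x)) := by
  refine ((gauss_int m hm κ hκ k).const_mul C).mono' (by fun_prop) (Filter.Eventually.of_forall fun x => ?_)
  rw [norm_mul, Real.norm_eq_abs, Real.norm_eq_abs, abs_of_pos (Real.exp_pos _), ← mul_assoc]
  gcongr
  · exact (abs_nonneg _).trans (hb x)
  · exact hb x
  · linarith [hVl x]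

set_option maxHeartbeats 4000000 in
theorem bl_abs (m : ℕ) (hm : m ≠ 0) (V F N : EuclideanSpace ℝ (Fin m) → ℝ) (c L C0 κ : ℝ)
    (hc : 0 < c) (hκ : 0 < κ) (hL0 : 0 ≤ L) (hV : Continuous V) (hVl : ∀ x, κ * ‖x‖ ^ 2 ≤ V x)
    (hF : Measurable F) (hL : ∀ x y, |F x - F y| ≤ L * ‖x - y‖) (hFb : ∀ x, |F x| ≤ L * ‖x‖)
    (hN : Measurable N) (hN0 : ∀ x, 0 ≤ N x) (hNC : ∀ x, N x ≤ C0)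
    (h1 : ∀ x y, c * ‖x - y‖ ^ 2 ≤ V x + V y - 2 * V ((1/2:ℝ) • (x + y)))
    (h3 : ∀ ε > 0, ∀ η > 0, ∃ t0 > 0, ∀ t, 0 < t → t < t0 → ∀ x y, η ≤ ‖x‖ → η ≤ ‖y‖ →
      0 ≤ V x + V y - 2 * V ((1/2:ℝ) • (x + y)) + t * (F x - F y) + 1/2 * t^2 * (N x + N y + 2 * ε))
    (hmean : ∫ x, F x * Real.exp (-V x) = 0) :
    ∫ x, F x ^ 2 * Real.exp (-V x) ≤ ∫ x, N x * Real.exp (-V x) := by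
  have hV0 : ∀ x, 0 ≤ V x := fun x => le_trans (by positivity) (hVl x)
  have wi := fun (f : EuclideanSpace ℝ (Fin m) → ℝ) (hf : Measurable f) C k hb =>
    weight_int m hm V f κ hκ hV hVl hf C k hb
  have iZ : Integrable (fun x => Real.exp (-V x)) := by
    have := wi (fun _ => 1) measurable_const 1 0 (by simp)
    simpa using this
  have iF : Integrable (fun x => F x * Real.exp (-V x)) := wi F hF L 1 fun x => (hFb x).trans (by
    rw [pow_one]; gcongr; linarith)
  have iF2 : Integrable (fun x => F x ^ 2 * Real.exp (-V x)) :=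
    wi (fun x => F x ^ 2) (hF.pow_const 2) (L^2) 2 fun x => by
      rw [abs_pow, ← mul_pow]
      gcongr
      exact (hFb x).trans (by gcongr; linarith)
  have iN : Integrable (fun x => N x * Real.exp (-V x)) := wi N hN C0 0 fun x => by
    rw [abs_of_nonneg (hN0 x)]; simpa using hNC x
  set Z := ∫ x, Real.exp (-V x) with hZ
  have hZ0 : 0 ≤ Z := integral_nonneg fun x => (Real.exp_pos _).le
  have hC0 : 0 ≤ C0 := (hN0 0).trans (hNC 0)
  set C1 := L ^ 2 / (2 * c) with hC1
  have hC10 : 0 ≤ C1 := by positivity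
  set v1 := (volume (Metric.ball (0 : EuclideanSpace ℝ (Fin m)) 1)).toReal with hv1
  have hv10 : 0 ≤ v1 := ENNReal.toReal_nonneg
  -- main estimate with parameters
  have main : ∀ ε, 0 < ε → ∀ η, 0 < η → η ≤ 1 →
      ∫ x, F x ^ 2 * Real.exp (-V x) ≤ (∫ x, N x * Real.exp (-V x)) + ε * Z + C1 * (η * v1) := by
    intro ε hε η hη hη1
    obtain ⟨t0, ht0, h3'⟩ := h3 ε hε η hη
    set Q : EuclideanSpace ℝ (Fin m) → ℝ := fun x => if ‖x‖ < η then C1 else N x + ε with hQ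
    have hQm : Measurable Q := Measurable.ite (measurableSet_lt measurable_norm measurable_const)
      measurable_const (hN.add_const ε)
    have hQ0 : ∀ x, 0 ≤ Q x := by
      intro x; simp only [hQ]; split_ifs
      · exact hC10
      · linarith [hN0 x]
    have hQC : ∀ x, Q x ≤ C0 + C1 + ε := by
      intro x; simp only [hQ]; split_ifs
      · linarith
      · linarith [hNC x]
    have iQ : Integrable (fun x => Q x * Real.exp (-V x)) := wi Q hQm (C0 + C1 + ε) 0 fun x => by
      rw [abs_of_nonneg (hQ0 x)]; simpa using hQC x
    have ineq : ∀ t, 0 < t → t < t0 → ∀ x y,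
        0 ≤ V x + V y - 2 * V ((1/2:ℝ) • (x + y)) + t * (F x - F y) + 1/2 * t^2 * (Q x + Q y) := by
      intro t ht htt x y
      have crude : C1 ≤ Q x + Q y → 0 ≤ V x + V y - 2 * V ((1/2:ℝ) • (x + y)) + t * (F x - F y) + 1/2 * t^2 * (Q x + Q y) := by
        intro hq
        have a1 := h1 x y
        have a2 := (abs_le.1 (hL x y)).1
        have a3 : t * (F x - F y) ≥ - (t * (L * ‖x - y‖)) := by nlinarith
        have a4 : 1/2 * t^2 * (Q x + Q y) ≥ 1/2 * t^2 * C1 := by gcongr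
        have a5 : 0 ≤ c * ‖x - y‖ ^ 2 - t * (L * ‖x-y‖) + 1/2 * t^2 * C1 := by
          have : c * ‖x - y‖ ^ 2 - t * (L * ‖x-y‖) + 1/2 * t^2 * C1 = c * (‖x-y‖ - t * L / (2 * c)) ^ 2 := by
            rw [hC1]; field_simp; ring
          rw [this]; positivity
        linarith
      by_cases hx : ‖x‖ < η
      · apply crude
        have : Q x = C1 := by simp [hQ, hx]
        linarith [hQ0 y]
      by_cases hy : ‖y‖ < η
      · apply crude
        have : Q y = C1 := by simp [hQ, hy]
        linarith [hQ0 x]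
      have e1 : Q x = N x + ε := by simp [hQ, hx]
      have e2 : Q y = N y + ε := by simp [hQ, hy]
      have := h3' t ht htt x y (not_lt.1 hx) (not_lt.1 hy)
      rw [e1, e2]
      convert this using 2
      ring
    -- Prekopa-Leindler
    have hpl : ∀ t, 0 < t → t < t0 →
        (∫ x, Real.exp (-V x - t * F x - 1/2 * t^2 * Q x)) * (∫ x, Real.exp (-V x + t * F x - 1/2 * t^2 * Q x))
          ≤ Z ^ 2 := by
      intro t ht htt
      have p := pl_euc m (fun x => ENNReal.ofReal (Real.exp (-V x - t * F x - 1/2 * t^2 * Q x)))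
        (fun x => ENNReal.ofReal (Real.exp (-V x + t * F x - 1/2 * t^2 * Q x)))
        (fun x => ENNReal.ofReal (Real.exp (-V x))) (by fun_prop) (by fun_prop) (by fun_prop)
        (by
          intro x y
          rw [← ENNReal.ofReal_mul (Real.exp_pos _).le, ← ENNReal.ofReal_pow (Real.exp_pos _).le]
          apply ENNReal.ofReal_le_ofReal
          rw [← Real.exp_add, ← Real.exp_nat_mul]
          apply Real.exp_le_exp.2
          have := ineq t ht htt x y
          push_cast
          linarith)
      rw [integral_eq_lintegral_of_nonneg_ae (Filter.Eventually.of_forall fun x => (Real.exp_pos _).le)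
        (by fun_prop), integral_eq_lintegral_of_nonneg_ae (Filter.Eventually.of_forall fun x => (Real.exp_pos _).le)
        (by fun_prop), hZ, integral_eq_lintegral_of_nonneg_ae (Filter.Eventually.of_forall fun x => (Real.exp_pos _).le)
        (by fun_prop), ← ENNReal.toReal_mul, ← ENNReal.toReal_pow]
      refine ENNReal.toReal_mono ?_ p
      apply ENNReal.pow_ne_top
      exact iZ.lintegral_lt_top.ne
    set C := C0 + C1 + ε with hC
    have hCpos : 0 < C := by linarith
    have hGm : Measurable (fun x => (|F x| + C) ^ 3 + (|F x| + C) ^ 2) := by fun_prop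
    have iG : Integrable (fun x => ((|F x| + C) ^ 3 + (|F x| + C) ^ 2) * Real.exp (-V x)) := by
      have b : ∀ x, |F x| + C ≤ (L + C) * (1 + ‖x‖) := by
        intro x
        have := hFb x
        nlinarith [norm_nonneg x]
      refine wi _ hGm ((L + C)^3 + (L+C)^2) 3 fun x => ?_
      rw [abs_of_nonneg (by positivity), add_mul]
      have b1 : (1:ℝ) ≤ 1 + ‖x‖ := by linarith [norm_nonneg x]
      gcongr
      · rw [← mul_pow]; gcongr; exact b x
      · calc (|F x| + C) ^ 2 ≤ ((L + C) * (1 + ‖x‖)) ^ 2 := by gcongr; exact b x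
          _ = (L + C)^2 * (1 + ‖x‖) ^ 2 := by ring
          _ ≤ _ := by gcongr; norm_num
    set D := ∫ x, ((|F x| + C) ^ 3 + (|F x| + C) ^ 2) * Real.exp (-V x) with hD
    set A := ∫ x, F x ^ 2 * Real.exp (-V x) with hA
    set B := ∫ x, Q x * Real.exp (-V x) with hB
    have lower : ∀ t σ : ℝ, 0 < t → t ≤ 1 → (σ = 1 ∨ σ = -1) →
        Z + t^2/2 * (A - B) - t^3 * D ≤ ∫ x, Real.exp (-V x - σ * t * F x - 1/2 * t^2 * Q x) := by
      intro t σ ht ht1 hσ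
      have hσ2 : σ ^ 2 = 1 := by rcases hσ with h | h <;> simp [h]
      have hσa : |σ| = 1 := by rcases hσ with h | h <;> simp [h]
      have e : Z + t^2/2 * (A - B) - t^3 * D = ∫ x, (Real.exp (-V x) - σ * t * (F x * Real.exp (-V x))
          + t^2/2 * (F x ^ 2 * Real.exp (-V x)) - t^2/2 * (Q x * Real.exp (-V x))
          - t^3 * (((|F x| + C) ^ 3 + (|F x| + C) ^ 2) * Real.exp (-V x))) := by
        rw [integral_sub, integral_sub, integral_add, integral_sub, integral_const_mul, integral_const_mul,
          integral_const_mul, integral_const_mul, hmean]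
        · ring
        · exact iZ
        · exact iF.const_mul _
        · exact iZ.sub (iF.const_mul _)
        · exact iF2.const_mul _
        · exact (iZ.sub (iF.const_mul _)).add (iF2.const_mul _)
        · exact iQ.const_mul _
        · exact ((iZ.sub (iF.const_mul _)).add (iF2.const_mul _)).sub (iQ.const_mul _)
        · exact iG.const_mul _
      rw [e]
      apply integral_mono
      · exact (((iZ.sub (iF.const_mul _)).add (iF2.const_mul _)).sub (iQ.const_mul _)).sub (iG.const_mul _)
      · have hb : ∀ x, Real.exp (-V x - σ * t * F x - 1/2 * t^2 * Q x) ≤ Real.exp (L^2 / κ) * Real.exp (-(κ/2) * ‖x‖ ^ 2) := by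
          intro x
          rw [← Real.exp_add]
          apply Real.exp_le_exp.2
          have a1 := hVl x
          have a2 : |σ * t * F x| ≤ L * ‖x‖ := by
            rw [abs_mul, abs_mul, hσa, one_mul, abs_of_pos ht]
            calc t * |F x| ≤ 1 * |F x| := by gcongr
              _ ≤ _ := by rw [one_mul]; exact hFb x
          have a3 := (abs_le.1 a2).1
          have a4 : 0 ≤ 1/2 * t^2 * Q x := by have := hQ0 x; positivity
          have a5 : L * ‖x‖ ≤ L^2/κ + κ/2 * ‖x‖^2 := by
            have : L^2/κ + κ/2 * ‖x‖^2 - L * ‖x‖ = (κ / 2) * (‖x‖ - L/κ) ^ 2 + L^2/(2*κ) := by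
              field_simp; ring
            have : 0 ≤ (κ / 2) * (‖x‖ - L/κ) ^ 2 + L^2/(2*κ) := by positivity
            linarith
          linarith
        have gi := (gauss_int m hm (κ/2) (by positivity) 0).const_mul (Real.exp (L^2 / κ))
        simp only [pow_zero, one_mul] at gi
        refine gi.mono' (by fun_prop) (Filter.Eventually.of_forall fun x => ?_)
        rw [Real.norm_eq_abs, abs_of_pos (Real.exp_pos _)]
        exact hb x
      · intro x
        simp only
        rw [show -V x - σ * t * F x - 1/2 * t^2 * Q x = (- σ * t * F x - 1/2 * t^2 * Q x) + (-V x) by ring,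
          Real.exp_add (- σ * t * F x - 1/2 * t^2 * Q x)]
        set s := - σ * t * F x - 1/2 * t^2 * Q x with hs
        have hE := Real.exp_pos (-V x)
        have l := exp_lower s
        have q0 := hQ0 x
        have q1 := hQC x
        have s1 : |s| ≤ t * (|F x| + C) := by
          rw [hs]
          calc |- σ * t * F x - 1/2 * t^2 * Q x| ≤ |- σ * t * F x| + |1/2 * t^2 * Q x| := abs_sub _ _
            _ = t * |F x| + 1/2 * t^2 * Q x := by
              rw [abs_mul, abs_mul, abs_neg, hσa, one_mul, abs_of_pos ht, abs_of_nonneg (by positivity : 0 ≤ 1/2 * t^2 * Q x)]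
            _ ≤ t * (|F x| + C) := by
              have : t^2 ≤ t := by nlinarith
              have : 1/2 * t^2 * Q x ≤ 1 * t * C := by gcongr; norm_num
              linarith
        have s3 : |s| ^ 3 ≤ t^3 * (|F x| + C) ^ 3 := by
          rw [← mul_pow]; gcongr
        have s2 : s ^ 2 / 2 ≥ t^2/2 * F x ^ 2 - t^3 * (|F x| + C) ^ 2 := by
          have e1 : s ^ 2 = t^2 * F x ^ 2 + t^3 * (σ * F x) * Q x + (1/2 * t^2 * Q x) ^ 2 := by
            rw [hs]; linear_combination (t^2 * F x^2) * hσ2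
          have e2 : |(σ * F x) * Q x| ≤ (|F x| + C) ^ 2 := by
            rw [abs_mul, abs_mul, hσa, one_mul, abs_of_nonneg q0]
            nlinarith [abs_nonneg (F x)]
          have e3 := (abs_le.1 e2).1
          have e4 : 0 ≤ (1/2 * t^2 * Q x) ^ 2 := sq_nonneg _
          have e5 : 0 < t^3 := by positivity
          have e6 : 0 ≤ t^3 * (|F x| + C) ^ 2 := by positivity
          have e7 : t^3 * (-(|F x| + C) ^ 2) ≤ t^3 * ((σ * F x) * Q x) :=
            mul_le_mul_of_nonneg_left e3 e5.le
          have e8 : t^3 * (σ * F x) * Q x = t^3 * ((σ * F x) * Q x) := by ring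
          rw [ge_iff_le, e1, e8]
          linarith
        have fin : 1 - σ * t * F x + t^2/2 * F x ^ 2 - t^2/2 * Q x - t^3 * ((|F x| + C) ^ 3 + (|F x| + C) ^ 2) ≤ Real.exp s := by
          have : s = - σ * t * F x - 1/2 * t^2 * Q x := hs
          linarith
        calc _ = (1 - σ * t * F x + t^2/2 * F x ^ 2 - t^2/2 * Q x - t^3 * ((|F x| + C) ^ 3 + (|F x| + C) ^ 2)) * Real.exp (-V x) := by ring
          _ ≤ _ := by gcongr
    have AB : A ≤ B := by
      by_contra hcon
      push Not at hcon
      have hD0 : 0 ≤ D := integral_nonneg fun x => by positivity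
      obtain ⟨t, ht, htt, ht1, htD⟩ : ∃ t : ℝ, 0 < t ∧ t < t0 ∧ t ≤ 1 ∧ t * D < (A - B) / 2 := by
        have hδ : 0 < (A - B) / 2 := by linarith
        refine ⟨min (min (t0/2) 1) ((A - B) / 2 / (2 * (D + 1))), by positivity, ?_, ?_, ?_⟩
        · exact lt_of_le_of_lt ((min_le_left _ _).trans (min_le_left _ _)) (by linarith)
        · exact (min_le_left _ _).trans (min_le_right _ _)
        · calc _ ≤ (A - B) / 2 / (2 * (D + 1)) * D := by gcongr; exact min_le_right _ _
            _ < (A - B) / 2 := by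
              rw [div_mul_eq_mul_div, div_lt_iff₀ (by positivity)]
              nlinarith
      have l1 := lower t 1 ht ht1 (Or.inl rfl)
      have l2 := lower t (-1) ht ht1 (Or.inr rfl)
      have l3 := hpl t ht htt
      have l4 : Z < Z + t^2/2 * (A - B) - t^3 * D := by
        have : t^2 * (t * D) < t^2 * ((A-B)/2) := by gcongr
        nlinarith
      simp only [one_mul, neg_mul, sub_neg_eq_add] at l1 l2
      have l5 : Z * Z < (∫ x, Real.exp (-V x - t * F x - 1/2 * t^2 * Q x)) * (∫ x, Real.exp (-V x + t * F x - 1/2 * t^2 * Q x)) :=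
        mul_lt_mul'' (by linarith) (by linarith) hZ0 hZ0
      nlinarith
    refine AB.trans ?_
    have hball : Integrable (fun x : EuclideanSpace ℝ (Fin m) => (Metric.ball (0 : EuclideanSpace ℝ (Fin m)) η).indicator (fun _ => (1:ℝ)) x) :=
      (integrable_indicator_iff measurableSet_ball).2 (integrableOn_const (by exact measure_ball_lt_top.ne))
    have hballv : ∫ x : EuclideanSpace ℝ (Fin m), (Metric.ball (0 : EuclideanSpace ℝ (Fin m)) η).indicator (fun _ => (1:ℝ)) x ≤ η * v1 := by
      have : Nonempty (Fin m) := Fin.pos_iff_nonempty.1 (Nat.pos_of_ne_zero hm)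
      rw [integral_indicator measurableSet_ball]
      simp only [integral_const, smul_eq_mul, mul_one]
      rw [measureReal_restrict_apply_univ, measureReal_def, Measure.addHaar_ball _ _ hη.le, ENNReal.toReal_mul, ENNReal.toReal_ofReal (by positivity), hv1]
      gcongr
      exact pow_le_of_le_one hη.le hη1 (by simpa using hm)
    calc B ≤ ∫ x, (N x * Real.exp (-V x) + ε * Real.exp (-V x) + C1 * (Metric.ball (0 : EuclideanSpace ℝ (Fin m)) η).indicator (fun _ => (1:ℝ)) x) := by
          apply integral_mono iQ ((iN.add (iZ.const_mul _)).add (hball.const_mul _))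
          intro x
          have hE := Real.exp_pos (-V x)
          have hE1 : Real.exp (-V x) ≤ 1 := Real.exp_le_one_iff.2 (by linarith [hV0 x])
          have := hN0 x
          by_cases hx : ‖x‖ < η
          · have hxx : x ∈ Metric.ball (0 : EuclideanSpace ℝ (Fin m)) η := by simpa using hx
            have e1 : Q x = C1 := by simp [hQ, hx]
            simp only [Pi.add_apply]
            rw [e1, Set.indicator_of_mem hxx]
            have e9 : C1 * Real.exp (-V x) ≤ C1 * 1 := by gcongr
            have : 0 ≤ N x * Real.exp (-V x) := by positivity
            have : 0 ≤ ε * Real.exp (-V x) := by positivity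
            linarith
          · have hxx : x ∉ Metric.ball (0 : EuclideanSpace ℝ (Fin m)) η := by simpa using hx
            have e1 : Q x = N x + ε := by simp [hQ, hx]
            simp only [Pi.add_apply]
            rw [e1, Set.indicator_of_notMem hxx]
            apply le_of_eq
            ring
      _ = (∫ x, N x * Real.exp (-V x)) + ε * Z + C1 * ∫ x, (Metric.ball (0 : EuclideanSpace ℝ (Fin m)) η).indicator (fun _ => (1:ℝ)) x := by
          rw [integral_add, integral_add, integral_const_mul, integral_const_mul]
          · exact iN
          · exact iZ.const_mul _
          · exact iN.add (iZ.const_mul _)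
          · exact hball.const_mul _
      _ ≤ _ := by gcongr
  refine le_of_forall_pos_le_add fun δ hδ => ?_
  set ε := min 1 (δ / (Z + C1 * v1 + 1)) with hε
  have hp : 0 < Z + C1 * v1 + 1 := by positivity
  have hε0 : 0 < ε := by positivity
  have := main ε hε0 ε hε0 (min_le_left _ _)
  have h2 : ε * (Z + C1 * v1 + 1) ≤ δ := by
    calc ε * (Z + C1 * v1 + 1) ≤ δ / (Z + C1 * v1 + 1) * (Z + C1 * v1 + 1) := by
          gcongr; exact min_le_right _ _
      _ = δ := by field_simp
  nlinarith

/-! Part 3: calculus on punctured space -/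

/-- partial derivative -/
def pd {n : ℕ} (f : Euc n → ℝ) (i : Fin (n + 1)) (y : Euc n) : ℝ :=
  fderiv ℝ f y (EuclideanSpace.single i 1)

/-- smooth away from the origin -/
def Sm {n : ℕ} (f : Euc n → ℝ) : Prop := ContDiffOn ℝ (⊤ : ℕ∞) f {(0 : Euc n)}ᶜ

def Hg0 {n : ℕ} (f : Euc n → ℝ) : Prop := ∀ c : ℝ, 0 < c → ∀ y, f (c • y) = f y
def Hg1 {n : ℕ} (f : Euc n → ℝ) : Prop := ∀ c : ℝ, 0 < c → ∀ y, f (c • y) = c * f y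

lemma isOpen_punct {n : ℕ} : IsOpen ({(0 : Euc n)}ᶜ) := isOpen_compl_singleton

lemma Sm.cda {n : ℕ} {f : Euc n → ℝ} (hf : Sm f) {y : Euc n} (hy : y ≠ 0) :
    ContDiffAt ℝ (⊤ : ℕ∞) f y :=
  ContDiffOn.contDiffAt hf (isOpen_punct.mem_nhds hy)

lemma Sm.da {n : ℕ} {f : Euc n → ℝ} (hf : Sm f) {y : Euc n} (hy : y ≠ 0) :
    DifferentiableAt ℝ f y := (hf.cda hy).differentiableAt (by simp)

lemma Sm.co {n : ℕ} {f : Euc n → ℝ} (hf : Sm f) : ContinuousOn f {(0 : Euc n)}ᶜ :=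
  ContDiffOn.continuousOn hf

lemma Sm.pd {n : ℕ} {f : Euc n → ℝ} (hf : Sm f) (i : Fin (n + 1)) : Sm (pd f i) := by
  have := ContDiffOn.fderiv_of_isOpen hf isOpen_punct (m := (⊤ : ℕ∞)) (by simp)
  exact this.clm_apply contDiffOn_const

lemma Sm.mul {n : ℕ} {f g : Euc n → ℝ} (hf : Sm f) (hg : Sm g) : Sm (fun y => f y * g y) :=
  ContDiffOn.mul hf hg
lemma Sm.add {n : ℕ} {f g : Euc n → ℝ} (hf : Sm f) (hg : Sm g) : Sm (fun y => f y + g y) :=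
  ContDiffOn.add hf hg
lemma Sm.sub {n : ℕ} {f g : Euc n → ℝ} (hf : Sm f) (hg : Sm g) : Sm (fun y => f y - g y) :=
  ContDiffOn.sub hf hg
lemma Sm.const {n : ℕ} (c : ℝ) : Sm (fun _ : Euc n => c) := contDiffOn_const
lemma Sm.sum {n : ℕ} {ι : Type*} {s : Finset ι} {f : ι → Euc n → ℝ} (hf : ∀ i ∈ s, Sm (f i)) :
    Sm (fun y => ∑ i ∈ s, f i y) := ContDiffOn.sum hf
lemma Sm.prod {n : ℕ} {ι : Type*} {s : Finset ι} {f : ι → Euc n → ℝ} (hf : ∀ i ∈ s, Sm (f i)) :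
    Sm (fun y => ∏ i ∈ s, f i y) := contDiffOn_prod hf
lemma Sm.rpow {n : ℕ} {f : Euc n → ℝ} (hf : Sm f) (h : ∀ y ≠ 0, 0 < f y) (a : ℝ) :
    Sm (fun y => f y ^ a) :=
  ContDiffOn.rpow_const_of_ne hf (fun y hy => (h y hy).ne')
lemma Sm.inv {n : ℕ} {f : Euc n → ℝ} (hf : Sm f) (h : ∀ y ≠ 0, f y ≠ 0) :
    Sm (fun y => (f y)⁻¹) := ContDiffOn.inv hf h
lemma Sm.div {n : ℕ} {f g : Euc n → ℝ} (hf : Sm f) (hg : Sm g) (h : ∀ y ≠ 0, g y ≠ 0) :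
    Sm (fun y => f y / g y) := ContDiffOn.div hf hg h
lemma Sm.pow {n : ℕ} {f : Euc n → ℝ} (hf : Sm f) (k : ℕ) : Sm (fun y => f y ^ k) :=
  ContDiffOn.pow hf k
lemma Sm.coord {n : ℕ} (i : Fin (n + 1)) : Sm (fun y : Euc n => y i) :=
  (by fun_prop : ContDiff ℝ (⊤ : ℕ∞) (fun y : Euc n => y i)).contDiffOn
lemma Sm.comp {n : ℕ} {f : Euc n → ℝ} (hf : Sm f) {g : ℝ → ℝ} (hg : ContDiff ℝ (⊤ : ℕ∞) g) :
    Sm (fun y => g (f y)) := hg.comp_contDiffOn hf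
lemma Sm.normsq {n : ℕ} : Sm (fun y : Euc n => ‖y‖ ^ 2) :=
  (contDiff_norm_sq ℝ).contDiffOn
lemma Sm.congr {n : ℕ} {f g : Euc n → ℝ} (hf : Sm f) (h : ∀ y ≠ 0, g y = f y) : Sm g :=
  ContDiffOn.congr hf h

lemma fderiv_eq_sum {n : ℕ} (f : Euc n → ℝ) (y z : Euc n) :
    fderiv ℝ f y z = ∑ i, z i * pd f i y := by
  conv_lhs => rw [show z = ∑ i, z i • (EuclideanSpace.single i (1:ℝ) : Euc n) by
    ext j; simp [Finset.sum_apply, Pi.single_apply]]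
  rw [map_sum]
  simp [pd]

lemma pd_congr {n : ℕ} {f g : Euc n → ℝ} (h : ∀ y ≠ 0, f y = g y) (i : Fin (n + 1)) {y : Euc n}
    (hy : y ≠ 0) : pd f i y = pd g i y := by
  unfold pd
  rw [Filter.EventuallyEq.fderiv_eq (Filter.eventuallyEq_of_mem (isOpen_punct.mem_nhds hy) h)]

lemma pd_mul {n : ℕ} {f g : Euc n → ℝ} {y : Euc n} (hf : DifferentiableAt ℝ f y)
    (hg : DifferentiableAt ℝ g y) (i : Fin (n + 1)) :
    pd (fun z => f z * g z) i y = pd f i y * g y + f y * pd g i y := by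
  unfold pd
  rw [fderiv_fun_mul hf hg]
  simp; ring

lemma pd_add {n : ℕ} {f g : Euc n → ℝ} {y : Euc n} (hf : DifferentiableAt ℝ f y)
    (hg : DifferentiableAt ℝ g y) (i : Fin (n + 1)) :
    pd (fun z => f z + g z) i y = pd f i y + pd g i y := by
  unfold pd
  rw [fderiv_fun_add hf hg]
  simp

lemma pd_sub {n : ℕ} {f g : Euc n → ℝ} {y : Euc n} (hf : DifferentiableAt ℝ f y)
    (hg : DifferentiableAt ℝ g y) (i : Fin (n + 1)) :
    pd (fun z => f z - g z) i y = pd f i y - pd g i y := by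
  unfold pd
  rw [fderiv_fun_sub hf hg]
  simp

lemma pd_const {n : ℕ} (c : ℝ) (y : Euc n) (i : Fin (n + 1)) : pd (fun _ => c) i y = 0 := by
  simp [pd]

lemma pd_sum {n : ℕ} {ι : Type*} {s : Finset ι} {f : ι → Euc n → ℝ} {y : Euc n}
    (hf : ∀ j ∈ s, DifferentiableAt ℝ (f j) y) (i : Fin (n + 1)) :
    pd (fun z => ∑ j ∈ s, f j z) i y = ∑ j ∈ s, pd (f j) i y := by
  unfold pd
  rw [fderiv_fun_sum hf]
  simp

lemma pd_comp {n : ℕ} {f : Euc n → ℝ} {y : Euc n} (hf : DifferentiableAt ℝ f y) {g : ℝ → ℝ} {g' : ℝ}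
    (hg : HasDerivAt g g' (f y)) (i : Fin (n + 1)) :
    pd (fun z => g (f z)) i y = g' * pd f i y := by
  unfold pd
  have := (hg.comp_hasFDerivAt y hf.hasFDerivAt).fderiv
  rw [show (fun z => g (f z)) = g ∘ f from rfl, this]
  simp

lemma pd_coord {n : ℕ} (i j : Fin (n + 1)) (y : Euc n) :
    pd (fun z : Euc n => z j) i y = if i = j then 1 else 0 := by
  unfold pd
  have : HasFDerivAt (fun z : Euc n => z j) (EuclideanSpace.proj j : Euc n →L[ℝ] ℝ) y :=
    (EuclideanSpace.proj j : Euc n →L[ℝ] ℝ).hasFDerivAt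
  rw [this.fderiv]
  simp [eq_comm]

lemma pd_normsq {n : ℕ} (i : Fin (n + 1)) (y : Euc n) :
    pd (fun z : Euc n => ‖z‖ ^ 2) i y = 2 * y i := by
  unfold pd
  have := (hasStrictFDerivAt_norm_sq y).hasFDerivAt
  rw [this.fderiv]
  simp [EuclideanSpace.inner_single_right]

lemma pd_rpow {n : ℕ} {f : Euc n → ℝ} {y : Euc n} (hf : DifferentiableAt ℝ f y) (h : 0 < f y) (a : ℝ)
    (i : Fin (n + 1)) : pd (fun z => f z ^ a) i y = a * f y ^ a * (pd f i y / f y) := by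
  rw [pd_comp hf (Real.hasDerivAt_rpow_const (Or.inl h.ne')) i, Real.rpow_sub_one h.ne']
  ring

lemma pd_symm {n : ℕ} {f : Euc n → ℝ} (hf : Sm f) {y : Euc n} (hy : y ≠ 0) (i j : Fin (n + 1)) :
    pd (pd f j) i y = pd (pd f i) j y := by
  have h2 : ContDiffAt ℝ (⊤ : ℕ∞) f y := hf.cda hy
  have := h2.isSymmSndFDerivAt (by rw [minSmoothness_of_isRCLikeNormedField]; exact WithTop.coe_le_coe.2 (le_top : (2 : ℕ∞) ≤ ⊤))
  have d : DifferentiableAt ℝ (fderiv ℝ f) y :=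
    (h2.fderiv_right (m := (⊤ : ℕ∞)) (by simp)).differentiableAt (by simp)
  have key : ∀ i j : Fin (n+1), pd (pd f j) i y =
      fderiv ℝ (fderiv ℝ f) y (EuclideanSpace.single i 1) (EuclideanSpace.single j 1) := by
    intro i j
    change fderiv ℝ (fun z => fderiv ℝ f z (EuclideanSpace.single j 1)) y _ = _
    rw [fderiv_clm_apply d (differentiableAt_const _)]
    simp
  rw [key, key]
  exact this _ _

lemma Hg1.pd {n : ℕ} {f : Euc n → ℝ} (hf : Hg1 f) (i : Fin (n + 1)) : Hg0 (pd f i) := by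
  intro c hc y
  have h1 := fderiv_comp_smul (𝕜 := ℝ) (f := f) (x := y) c
  have h2 : (fun z => f (c • z)) = c • f := by
    funext z; simp [hf c hc z]
  rw [h2, fderiv_const_smul_field] at h1
  have := congrArg (fun L => L (EuclideanSpace.single i 1)) h1
  simp only [ContinuousLinearMap.smul_apply, smul_eq_mul] at this
  exact (mul_left_cancel₀ hc.ne' this).symm

lemma euler1 {n : ℕ} {f : Euc n → ℝ} (hf : Hg1 f) (hs : Sm f) {y : Euc n} (hy : y ≠ 0) :
    ∑ i, y i * pd f i y = f y := by
  rw [← fderiv_eq_sum]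
  have h1 : HasDerivAt (fun c : ℝ => c • y) y 1 := by
    simpa using (hasDerivAt_id (1:ℝ)).smul_const y
  have h2 : HasFDerivAt f (fderiv ℝ f y) ((1:ℝ) • y) := by
    rw [one_smul]; exact (hs.da hy).hasFDerivAt
  have h3 := h2.comp_hasDerivAt (1:ℝ) h1
  have h4 : HasDerivAt (fun c : ℝ => c * f y) (f y) 1 := by
    simpa using (hasDerivAt_id (1:ℝ)).mul_const (f y)
  refine h3.unique (h4.congr_of_eventuallyEq ?_)
  filter_upwards [lt_mem_nhds (zero_lt_one' ℝ)] with c hc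
  exact hf c hc y

lemma euler0 {n : ℕ} {f : Euc n → ℝ} (hf : Hg0 f) (hs : Sm f) {y : Euc n} (hy : y ≠ 0) :
    ∑ i, y i * pd f i y = 0 := by
  rw [← fderiv_eq_sum]
  have h1 : HasDerivAt (fun c : ℝ => c • y) y 1 := by
    simpa using (hasDerivAt_id (1:ℝ)).smul_const y
  have h2 : HasFDerivAt f (fderiv ℝ f y) ((1:ℝ) • y) := by
    rw [one_smul]; exact (hs.da hy).hasFDerivAt
  have h3 := h2.comp_hasDerivAt (1:ℝ) h1
  refine h3.unique ((hasDerivAt_const (1:ℝ) (f y)).congr_of_eventuallyEq ?_)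
  filter_upwards [lt_mem_nhds (zero_lt_one' ℝ)] with c hc
  exact hf c hc y

/-! Part 4: the Hessian matrix of half the square and Piola identity -/

lemma pd_prod {n : ℕ} {ι : Type*} [DecidableEq ι] {s : Finset ι} {f : ι → Euc n → ℝ} {y : Euc n}
    (hf : ∀ j ∈ s, DifferentiableAt ℝ (f j) y) (i : Fin (n + 1)) :
    pd (fun z => ∏ j ∈ s, f j z) i y = ∑ k ∈ s, (∏ j ∈ s.erase k, f j y) * pd (f k) i y := by
  unfold pd
  have := (HasFDerivAt.finsetProd (u := s) (g := f) (x := y) (fun j hj => (hf j hj).hasFDerivAt)).fderiv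
  rw [this]
  simp

lemma pd_det {n : ℕ} {A : Euc n → Matrix (Fin (n+1)) (Fin (n+1)) ℝ} {y : Euc n}
    (hA : ∀ i j, DifferentiableAt ℝ (fun z => A z i j) y) (hdet : (A y).det ≠ 0) (i : Fin (n + 1)) :
    pd (fun z => (A z).det) i y
      = (A y).det * ∑ k, ∑ l, (A y)⁻¹ k l * pd (fun z => A z l k) i y := by
  have e1 : (fun z => (A z).det) = fun z => ∑ σ : Equiv.Perm (Fin (n+1)),
      ((Equiv.Perm.sign σ : ℤ) : ℝ) * ∏ j, A z (σ j) j := by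
    funext z
    rw [Matrix.det_apply']
  have e2 : pd (fun z => (A z).det) i y
      = ∑ k, ((A y).updateCol k (fun l => pd (fun z => A z l k) i y)).det := by
    rw [e1, pd_sum]
    · have : ∀ σ : Equiv.Perm (Fin (n+1)), pd (fun z => ((Equiv.Perm.sign σ : ℤ) : ℝ) * ∏ j, A z (σ j) j) i y
          = ∑ k, ((Equiv.Perm.sign σ : ℤ) : ℝ) *
            ∏ j, ((A y).updateCol k (fun l => pd (fun z => A z l k) i y)) (σ j) j := by
        intro σ
        rw [pd_mul (differentiableAt_const _) (HasFDerivAt.finsetProd fun j _ => (hA (σ j) j).hasFDerivAt).differentiableAt, pd_const,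
          pd_prod fun j _ => hA _ _, zero_mul, zero_add, Finset.mul_sum]
        refine Finset.sum_congr rfl fun k _ => ?_
        congr 1
        rw [← Finset.prod_erase_mul Finset.univ _ (Finset.mem_univ k)]
        congr 1
        · refine Finset.prod_congr rfl fun j hj => ?_
          rw [Matrix.updateCol_ne (Finset.ne_of_mem_erase hj)]
        · rw [Matrix.updateCol_self]
      simp_rw [this, Matrix.det_apply']
      rw [Finset.sum_comm]
    · intro σ _
      exact (differentiableAt_const _).mul (HasFDerivAt.finsetProd fun j _ => (hA (σ j) j).hasFDerivAt).differentiableAt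
  rw [e2, Finset.mul_sum]
  refine Finset.sum_congr rfl fun k _ => ?_
  rw [← Matrix.cramer_apply, Matrix.cramer_eq_adjugate_mulVec]
  have : (A y).adjugate = (A y).det • (A y)⁻¹ := by
    rw [Matrix.inv_def, smul_smul, Ring.mul_inverse_cancel _ (isUnit_iff_ne_zero.2 hdet), one_smul]
  rw [this, Matrix.smul_mulVec, Pi.smul_apply, smul_eq_mul]
  rfl

/-- Hessian of `H^2/2`. -/
def Mm {n : ℕ} (H : Euc n → ℝ) (y : Euc n) : Matrix (Fin (n+1)) (Fin (n+1)) ℝ :=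
  Matrix.of fun i j => pd H i y * pd H j y + H y * pd (pd H j) i y

def Pm {n : ℕ} (H : Euc n → ℝ) (y : Euc n) : Matrix (Fin (n+1)) (Fin (n+1)) ℝ := (Mm H y)⁻¹

def Jd {n : ℕ} (H : Euc n → ℝ) (y : Euc n) : ℝ := (Mm H y).det

structure Good {n : ℕ} (H : Euc n → ℝ) : Prop where
  hg : Hg1 H
  sm : Sm H
  pos : ∀ y ≠ 0, 0 < H y
  pdf : ∀ y ≠ 0, (Mm H y).PosDef

namespace Good

variable {n : ℕ} {H : Euc n → ℝ}

lemma detpos (g : Good H) {y : Euc n} (hy : y ≠ 0) : 0 < Jd H y := (g.pdf y hy).det_pos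

lemma smX (g : Good H) (i) : Sm (pd H i) := g.sm.pd i

lemma smM (g : Good H) (i j) : Sm (fun y => Mm H y i j) :=
  ((g.smX i).mul (g.smX j)).add (g.sm.mul ((g.smX j).pd i))

lemma M_eq (g : Good H) {y : Euc n} (hy : y ≠ 0) (i j) :
    pd (fun z => H z * pd H j z) i y = Mm H y i j := by
  rw [pd_mul (g.sm.da hy) ((g.smX j).da hy)]
  rfl

lemma M_symm (g : Good H) {y : Euc n} (hy : y ≠ 0) (i j) : Mm H y i j = Mm H y j i := by
  simp only [Mm, Matrix.of_apply]
  rw [pd_symm g.sm hy i j]; ring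

lemma third (g : Good H) {y : Euc n} (hy : y ≠ 0) (i j k) :
    pd (fun z => Mm H z i j) k y = pd (fun z => Mm H z k j) i y := by
  have hT : Sm (fun z => H z * pd H j z) := g.sm.mul (g.smX j)
  rw [pd_congr (fun z hz => (g.M_eq hz i j).symm) k hy, pd_congr (fun z hz => (g.M_eq hz k j).symm) i hy]
  exact pd_symm hT hy k i

lemma third2 (g : Good H) {y : Euc n} (hy : y ≠ 0) (i j k) :
    pd (fun z => Mm H z i j) k y = pd (fun z => Mm H z j i) k y :=
  pd_congr (fun z hz => g.M_symm hz i j) k hy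

lemma smDet {A : Euc n → Matrix (Fin (n+1)) (Fin (n+1)) ℝ} (hA : ∀ i j, Sm (fun z => A z i j)) :
    Sm (fun z => (A z).det) := by
  have e1 : (fun z => (A z).det) = fun z => ∑ σ : Equiv.Perm (Fin (n+1)),
      ((Equiv.Perm.sign σ : ℤ) : ℝ) * ∏ j, A z (σ j) j := by
    funext z
    rw [Matrix.det_apply']
  rw [e1]
  exact Sm.sum fun σ _ => (Sm.const _).mul (Sm.prod fun j _ => hA _ _)

lemma smJ (g : Good H) : Sm (Jd H) := smDet g.smM

lemma smP (g : Good H) (i j) : Sm (fun y => Pm H y i j) := by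
  have h1 : Sm (fun z => (Mm H z).adjugate i j) := by
    simp_rw [Matrix.adjugate_apply]
    refine smDet fun k l => ?_
    by_cases h : k = j
    · subst h; simp only [Matrix.updateRow_self]; exact Sm.const _
    · simp only [Matrix.updateRow_ne h]; exact g.smM k l
  refine ((g.smJ.inv fun y hy => (g.detpos hy).ne').mul h1).congr fun y hy => ?_
  simp only [Pm, Matrix.inv_def, Matrix.smul_apply, smul_eq_mul, Jd, Ring.inverse_eq_inv']

lemma PM (g : Good H) {y : Euc n} (hy : y ≠ 0) : Pm H y * Mm H y = 1 :=
  Matrix.nonsing_inv_mul _ (isUnit_iff_ne_zero.2 (g.detpos hy).ne')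

lemma MP (g : Good H) {y : Euc n} (hy : y ≠ 0) : Mm H y * Pm H y = 1 :=
  Matrix.mul_nonsing_inv _ (isUnit_iff_ne_zero.2 (g.detpos hy).ne')

lemma M_T (g : Good H) {y : Euc n} (hy : y ≠ 0) : (Mm H y)ᵀ = Mm H y := by
  ext i j; exact g.M_symm hy j i

lemma P_T (g : Good H) {y : Euc n} (hy : y ≠ 0) : (Pm H y)ᵀ = Pm H y := by
  rw [Pm, Matrix.transpose_nonsing_inv, g.M_T hy]

lemma P_symm (g : Good H) {y : Euc n} (hy : y ≠ 0) (i j) : Pm H y i j = Pm H y j i := by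
  conv_lhs => rw [← g.P_T hy]
  rfl

lemma pdP (g : Good H) {y : Euc n} (hy : y ≠ 0) (i j k) :
    pd (fun z => Pm H z i j) k y
      = - ∑ a, ∑ b, Pm H y i a * pd (fun z => Mm H z a b) k y * Pm H y b j := by
  have h : ∀ c, (∑ a, pd (fun z => Pm H z i a) k y * Mm H y a c)
      + ∑ a, Pm H y i a * pd (fun z => Mm H z a c) k y = 0 := by
    intro c
    have e1 : pd (fun z => ∑ a, Pm H z i a * Mm H z a c) k y = 0 := by
      rw [pd_congr (g := fun _ => (1 : Matrix (Fin (n+1)) (Fin (n+1)) ℝ) i c) _ k hy, pd_const]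
      intro z hz
      rw [← g.PM hz]; rfl
    rw [pd_sum fun a _ => ((g.smP i a).mul (g.smM a c)).da hy] at e1
    rw [← e1, ← Finset.sum_add_distrib]
    refine Finset.sum_congr rfl fun a _ => ?_
    rw [pd_mul ((g.smP i a).da hy) ((g.smM a c).da hy)]
  have h2 : ∑ c, (∑ a, pd (fun z => Pm H z i a) k y * Mm H y a c) * Pm H y c j
      = pd (fun z => Pm H z i j) k y := by
    have : ∀ a, ∑ c, Mm H y a c * Pm H y c j = if a = j then 1 else 0 := by
      intro a
      have := congrFun (congrFun (g.MP hy) a) j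
      rw [Matrix.mul_apply, Matrix.one_apply] at this
      exact this
    simp_rw [Finset.sum_mul]
    rw [Finset.sum_comm]
    simp_rw [mul_assoc, ← Finset.mul_sum, this]
    simp
  rw [← h2, ← Finset.sum_neg_distrib]
  have : ∀ c, (∑ a, pd (fun z => Pm H z i a) k y * Mm H y a c) = - ∑ a, Pm H y i a * pd (fun z => Mm H z a c) k y :=
    fun c => by linarith [h c]
  simp_rw [this, neg_mul, Finset.sum_mul, Finset.sum_neg_distrib]
  rw [Finset.sum_comm]

lemma piola (g : Good H) {y : Euc n} (hy : y ≠ 0) (i) :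
    ∑ k, pd (fun z => Jd H z * Pm H z k i) k y = 0 := by
  have h : ∀ k, pd (fun z => Jd H z * Pm H z k i) k y
      = Jd H y * ((∑ a, ∑ b, Pm H y a b * pd (fun z => Mm H z b a) k y * Pm H y k i)
        - ∑ a, ∑ b, Pm H y k a * pd (fun z => Mm H z a b) k y * Pm H y b i) := by
    intro k
    rw [pd_mul (g.smJ.da hy) ((g.smP k i).da hy), g.pdP hy]
    have := pd_det (A := Mm H) (fun i j => (g.smM i j).da hy) (g.detpos hy).ne' k
    change pd (Jd H) k y = Jd H y * _ at this
    rw [this]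
    simp_rw [← Finset.sum_mul]
    change _ * (∑ a, ∑ b, Pm H y a b * pd (fun z => Mm H z b a) k y) * _ + _ = _
    ring
  simp_rw [h, ← Finset.mul_sum, Finset.sum_sub_distrib]
  rw [mul_eq_zero]; right
  rw [sub_eq_zero]
  have e : ∀ k a b, Pm H y a b * pd (fun z => Mm H z b a) k y * Pm H y k i
      = Pm H y a b * pd (fun z => Mm H z b k) a y * Pm H y k i := by
    intro k a b
    rw [g.third2 hy b a k, g.third hy a b k, g.third2 hy k b a]
  calc _ = ∑ k, ∑ a, ∑ b, Pm H y a b * pd (fun z => Mm H z b k) a y * Pm H y k i :=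
        Finset.sum_congr rfl fun k _ => Finset.sum_congr rfl fun a _ =>
          Finset.sum_congr rfl fun b _ => e k a b
    _ = ∑ a, ∑ k, ∑ b, Pm H y a b * pd (fun z => Mm H z b k) a y * Pm H y k i := Finset.sum_comm
    _ = _ := Finset.sum_congr rfl fun a _ => Finset.sum_comm

end Good

/-! Part 5: polar coordinates -/

def sE {n : ℕ} (H F : Euc n → ℝ) : ℝ :=
  ∫ x : sphere (0 : Euc n) 1, F x * ((H x) ^ (n + 1))⁻¹ ∂((volume : Measure (Euc n)).toSphere)

lemma polar {n : ℕ} {H F : Euc n → ℝ} (hH : Hg1 H) (hp : ∀ y ≠ 0, 0 < H y) (hF : Hg0 F) (ζ : ℝ → ℝ)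
    (hint : Integrable (fun y => F y * ζ (H y))) :
    ∫ y, F y * ζ (H y) = sE H F * ∫ t in Set.Ioi (0:ℝ), t ^ n * ζ t := by
  set μ : Measure (Euc n) := volume with hμ
  have hdim : Module.finrank ℝ (Euc n) - 1 = n := by simp
  have mp := μ.measurePreserving_homeomorphUnitSphereProd
  rw [hdim] at mp
  set f : Euc n → ℝ := fun y => F y * ζ (H y) with hf
  set G : sphere (0 : Euc n) 1 × Set.Ioi (0:ℝ) → ℝ := fun p => F p.1 * ζ (p.2.1 * H p.1) with hG
  have hGf : ∀ x : ({(0 : Euc n)}ᶜ : Set (Euc n)), G (homeomorphUnitSphereProd (Euc n) x) = f x := by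
    intro x
    have hx : (x : Euc n) ≠ 0 := x.2
    have hn : 0 < ‖(x : Euc n)‖ := norm_pos_iff.2 hx
    simp only [hG, hf, homeomorphUnitSphereProd_apply_snd_coe, homeomorphUnitSphereProd_apply_fst_coe]
    rw [hF _ (inv_pos.2 hn), hH _ (inv_pos.2 hn), mul_inv_cancel_left₀ hn.ne']
  have e1 : ∫ y, f y ∂μ = ∫ x : ({(0)}ᶜ : Set (Euc n)), f x ∂(μ.comap (↑)) := by
    rw [integral_subtype_comap (measurableSet_singleton _).compl f, restrict_compl_singleton]
  have e2 : ∫ x : ({(0)}ᶜ : Set (Euc n)), f x ∂(μ.comap (↑)) =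
      ∫ p, G p ∂(μ.toSphere.prod (Measure.volumeIoiPow n)) := by
    rw [← mp.integral_comp (Homeomorph.measurableEmbedding _)]
    exact integral_congr_ae (Filter.Eventually.of_forall fun x => (hGf x).symm)
  have iG : Integrable G (μ.toSphere.prod (Measure.volumeIoiPow n)) := by
    rw [← mp.integrable_comp_emb (Homeomorph.measurableEmbedding _)]
    have : Integrable (fun x : ({(0)}ᶜ : Set (Euc n)) => f x) (μ.comap (↑)) := by
      have := (integrableOn_iff_comap_subtypeVal (measurableSet_singleton (0 : Euc n)).compl (f := f) (μ := μ)).1 hint.integrableOn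
      exact this
    exact this.congr (Filter.Eventually.of_forall fun x => (hGf x).symm)
  rw [e1, e2, integral_prod _ iG, sE, ← integral_mul_const]
  refine integral_congr_ae (Filter.Eventually.of_forall fun x => ?_)
  have hx0 : (x : Euc n) ≠ 0 := ne_zero_of_mem_unit_sphere x
  have hh := hp x hx0
  simp only [hG]
  rw [integral_const_mul, mul_assoc]
  congr 1
  simp only [Measure.volumeIoiPow, ENNReal.ofReal]
  rw [integral_withDensity_eq_integral_smul (by fun_prop),
    integral_subtype_comap measurableSet_Ioi fun a => Real.toNNReal (a ^ n) • ζ (a * H x)]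
  have c1 := integral_comp_mul_right_Ioi (fun t => t ^ n * ζ t) 0 hh
  simp only [zero_mul, smul_eq_mul] at c1
  rw [pow_succ, mul_inv, mul_assoc, ← c1, ← integral_const_mul]
  refine setIntegral_congr_fun measurableSet_Ioi fun t ht => ?_
  rw [NNReal.smul_def, Real.coe_toNNReal _ (pow_nonneg (le_of_lt ht) _), smul_eq_mul, mul_pow]
  field_simp

lemma sphere_ne {n : ℕ} (x : sphere (0 : Euc n) 1) : (x : Euc n) ≠ 0 := ne_zero_of_mem_unit_sphere x

lemma sE_int {n : ℕ} {H F : Euc n → ℝ} (hH : ContinuousOn H {(0 : Euc n)}ᶜ) (hp : ∀ y ≠ 0, 0 < H y)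
    (hF : ContinuousOn F {(0 : Euc n)}ᶜ) :
    Integrable (fun x : sphere (0 : Euc n) 1 => F x * ((H x) ^ (n + 1))⁻¹)
      ((volume : Measure (Euc n)).toSphere) := by
  have c : ∀ f : Euc n → ℝ, ContinuousOn f {(0 : Euc n)}ᶜ → Continuous (fun x : sphere (0 : Euc n) 1 => f x) := by
    intro f hf
    exact hf.comp_continuous continuous_subtype_val fun x => sphere_ne x
  have : Continuous (fun x : sphere (0 : Euc n) 1 => F x * ((H x) ^ (n + 1))⁻¹) :=
    (c F hF).mul (((c H hH).pow _).inv₀ fun x => (pow_pos (hp x (sphere_ne x)) _).ne')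
  exact (this.integrable_of_hasCompactSupport (HasCompactSupport.of_compactSpace _))

lemma Hg0.bdd {n : ℕ} {F : Euc n → ℝ} (h : Hg0 F) (hF : ContinuousOn F {(0 : Euc n)}ᶜ) :
    ∃ C, 0 ≤ C ∧ ∀ y ≠ 0, |F y| ≤ C := by
  obtain ⟨C, hC⟩ := (isCompact_sphere (0 : Euc n) 1).exists_bound_of_continuousOn
    (hF.mono fun x hx => ne_zero_of_mem_unit_sphere ⟨x, hx⟩)
  refine ⟨max C 0, le_max_right _ _, fun y hy => ?_⟩
  have hn : 0 < ‖y‖ := norm_pos_iff.2 hy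
  rw [← h _ (inv_pos.2 hn) y]
  exact (hC _ (by simp [norm_smul, hn.ne'])).trans (le_max_left _ _)

lemma Hg0.unif_pos {n : ℕ} {F : Euc n → ℝ} (h : Hg0 F) (hF : ContinuousOn F {(0 : Euc n)}ᶜ)
    (hp : ∀ y ≠ 0, 0 < F y) : ∃ c, 0 < c ∧ ∀ y ≠ 0, c ≤ F y := by
  have hne : (sphere (0 : Euc n) 1).Nonempty := NormedSpace.sphere_nonempty.2 zero_le_one
  obtain ⟨x, hx, hm⟩ := (isCompact_sphere (0 : Euc n) 1).exists_isMinOn hne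
    (hF.mono fun x hx => ne_zero_of_mem_unit_sphere ⟨x, hx⟩)
  refine ⟨F x, hp x (ne_zero_of_mem_unit_sphere ⟨x, hx⟩), fun y hy => ?_⟩
  have hn : 0 < ‖y‖ := norm_pos_iff.2 hy
  rw [← h _ (inv_pos.2 hn) y]
  exact hm (by simp [norm_smul, hn.ne'])

lemma meas_of_co {n : ℕ} {F : Euc n → ℝ} (hF : ContinuousOn F {(0 : Euc n)}ᶜ) : Measurable F := by
  classical
  have h := ContinuousOn.measurable_piecewise (s := {(0 : Euc n)}ᶜ) (f := F) (g := F) hF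
    (by rw [compl_compl]; exact continuousOn_singleton _ _) (measurableSet_singleton _).compl
  simpa using h

/-! Part 6: integration by parts -/

namespace Good

variable {n : ℕ} {H : Euc n → ℝ}

lemma H0 (g : Good H) : H 0 = 0 := by
  have := g.hg 2 two_pos 0
  rw [smul_zero] at this; linarith

lemma hgM (g : Good H) (i j) : Hg0 (fun y => Mm H y i j) := by
  have h : Hg1 (fun z => H z * pd H j z) := by
    intro c hc y
    simp only
    rw [g.hg c hc, g.hg.pd j c hc]; ring
  have h2 := h.pd i
  intro c hc y
  by_cases hy : y = 0
  · simp [hy]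
  · simp only
    rw [← g.M_eq hy, ← g.M_eq (smul_ne_zero hc.ne' hy)]
    exact h2 c hc y

lemma hgMm (g : Good H) {c : ℝ} (hc : 0 < c) (y) : Mm H (c • y) = Mm H y := by
  ext i j; exact g.hgM i j c hc y

lemma hgJ (g : Good H) : Hg0 (Jd H) := fun c hc y => by
  simp only [Jd, g.hgMm hc]

lemma hgPm (g : Good H) {c : ℝ} (hc : 0 < c) (y) : Pm H (c • y) = Pm H y := by
  simp only [Pm, g.hgMm hc]

lemma hgP (g : Good H) (i j) : Hg0 (fun y => Pm H y i j) := fun c hc y => by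
  simp only [Pm, g.hgMm hc]

lemma euler (g : Good H) {y : Euc n} (hy : y ≠ 0) : ∑ i, y i * pd H i y = H y := euler1 g.hg g.sm hy

lemma Hy (g : Good H) {y : Euc n} (hy : y ≠ 0) (j) : ∑ i, y i * pd (pd H j) i y = 0 :=
  euler0 (g.hg.pd j) (g.smX j) hy

lemma My (g : Good H) {y : Euc n} (hy : y ≠ 0) : (Mm H y).mulVec (fun j => y j) = fun i => H y * pd H i y := by
  funext i
  simp only [Matrix.mulVec, dotProduct]
  have : ∀ j, Mm H y i j * y j = pd H i y * (y j * pd H j y) + H y * (y j * pd (pd H i) j y) := by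
    intro j
    rw [g.M_symm hy]
    simp only [Mm, Matrix.of_apply]; ring
  simp_rw [this, Finset.sum_add_distrib, ← Finset.mul_sum]
  rw [g.euler hy, g.Hy hy]; ring

lemma PX (g : Good H) {y : Euc n} (hy : y ≠ 0) (i) : ∑ j, Pm H y i j * pd H j y = y i / H y := by
  have h := congrArg (fun v => (Pm H y).mulVec v i) (g.My hy)
  simp only [Matrix.mulVec_mulVec, g.PM hy, Matrix.one_mulVec] at h
  rw [h]
  simp only [Matrix.mulVec, dotProduct]
  have hp := (g.pos y hy).ne'
  rw [Finset.sum_div]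
  refine Finset.sum_congr rfl fun j _ => ?_
  field_simp

lemma lower (g : Good H) : ∃ c, 0 < c ∧ ∀ y, c * ‖y‖ ≤ H y := by
  have hh : Hg0 (fun y => H y / ‖y‖) := by
    intro c hc y
    simp only
    rw [g.hg c hc, norm_smul, Real.norm_of_nonneg hc.le, mul_div_mul_left _ _ hc.ne']
  obtain ⟨c, hc, h⟩ := hh.unif_pos
    (g.sm.co.div continuous_norm.continuousOn fun y hy => norm_ne_zero_iff.2 hy)
    (fun y hy => div_pos (g.pos y hy) (norm_pos_iff.2 hy))
  refine ⟨c, hc, fun y => ?_⟩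
  by_cases hy : y = 0
  · simp [hy, g.H0]
  · have := h y hy
    rwa [le_div_iff₀ (norm_pos_iff.2 hy)] at this

end Good

lemma Hg1.upper {n : ℕ} {f : Euc n → ℝ} (hf : Hg1 f) (hc : ContinuousOn f {(0 : Euc n)}ᶜ) :
    ∃ C, 0 ≤ C ∧ ∀ y, |f y| ≤ C * ‖y‖ := by
  have hh : Hg0 (fun y => f y / ‖y‖) := by
    intro c hc y
    simp only
    rw [hf c hc, norm_smul, Real.norm_of_nonneg hc.le, mul_div_mul_left _ _ hc.ne']
  obtain ⟨C, hC, h⟩ := hh.bdd (hc.div continuous_norm.continuousOn fun y hy => norm_ne_zero_iff.2 hy)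
  refine ⟨C, hC, fun y => ?_⟩
  have h0 : f 0 = 0 := by
    have := hf 2 two_pos 0
    rw [smul_zero] at this; linarith
  by_cases hy : y = 0
  · simp [hy, h0]
  · have := h y hy
    rwa [abs_div, abs_norm, div_le_iff₀ (norm_pos_iff.2 hy)] at this

lemma Hg1.cont {n : ℕ} {f : Euc n → ℝ} (hf : Hg1 f) (hc : ContinuousOn f {(0 : Euc n)}ᶜ) : Continuous f := by
  obtain ⟨C, hC, h⟩ := hf.upper hc
  have h0 : f 0 = 0 := by simpa using h 0
  rw [continuous_iff_continuousAt]
  intro y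
  by_cases hy : y = 0
  · subst hy
    rw [ContinuousAt, h0]
    refine squeeze_zero_norm h ?_
    have : Continuous (fun y : Euc n => C * ‖y‖) := by fun_prop
    simpa using this.tendsto 0
  · exact hc.continuousAt (isOpen_punct.mem_nhds hy)

namespace Good

variable {n : ℕ} {H : Euc n → ℝ}

lemma contH (g : Good H) : Continuous H := g.hg.cont g.sm.co

lemma cs_cont (g : Good H) {w : Euc n → ℝ} (hw : ContinuousOn w {(0 : Euc n)}ᶜ)
    (h0 : ∀ y, H y < 1 → w y = 0) : Continuous w := by
  rw [continuous_iff_continuousAt]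
  intro y
  by_cases hy : y = 0
  · subst hy
    have : w =ᶠ[nhds 0] fun _ => 0 := by
      have : {y | H y < 1} ∈ nhds (0 : Euc n) :=
        (isOpen_lt g.contH continuous_const).mem_nhds (by simp [g.H0])
      filter_upwards [this] with z hz using h0 z hz
    exact continuousAt_const.congr this.symm
  · exact hw.continuousAt (isOpen_punct.mem_nhds hy)

lemma cs_int (g : Good H) {w : Euc n → ℝ} (hw : ContinuousOn w {(0 : Euc n)}ᶜ)
    (h0 : ∀ y, H y < 1 → w y = 0) (h3 : ∀ y, 3 < H y → w y = 0) : Integrable w := by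
  refine (g.cs_cont hw h0).integrable_of_hasCompactSupport ?_
  obtain ⟨c, hc, hl⟩ := g.lower
  refine HasCompactSupport.intro (isCompact_closedBall (0 : Euc n) (3 / c)) fun y hy => ?_
  apply h3
  have h1 : 3 / c < ‖y‖ := by simpa using hy
  rw [div_lt_iff₀ hc] at h1
  linarith [hl y]

end Good

lemma exists_bump : ∃ ζ : ℝ → ℝ, ContDiff ℝ (⊤ : ℕ∞) ζ ∧ (∀ t, t < 1 → ζ t = 0) ∧ (∀ t, 3 < t → ζ t = 0) ∧
    (∀ t, t < 1 → deriv ζ t = 0) ∧ (∀ t, 3 < t → deriv ζ t = 0) ∧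
    (∀ n : ℕ, 0 < ∫ t in Set.Ioi (0:ℝ), t ^ n * ζ t) ∧
    (∀ n : ℕ, ∫ t in Set.Ioi (0:ℝ), t ^ n * (t * deriv ζ t) = - (n + 1) * ∫ t in Set.Ioi (0:ℝ), t ^ n * ζ t) := by
  let f : ContDiffBump (2:ℝ) := ⟨1/2, 1, by norm_num, by norm_num⟩
  have hcd : ContDiff ℝ (⊤ : ℕ∞) f := f.contDiff
  have hz : ∀ t, t ∉ Set.Icc (1:ℝ) 3 → f t = 0 := by
    intro t ht
    apply f.zero_of_le_dist
    change 1 ≤ dist t 2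
    rw [Real.dist_eq]
    by_contra hcon
    push Not at hcon
    rw [abs_lt] at hcon
    exact ht ⟨by linarith, by linarith⟩
  have hcs : HasCompactSupport f := f.hasCompactSupport
  have hloc : ∀ t, t ∉ Set.Icc (1:ℝ) 3 → deriv f t = 0 := by
    intro t ht
    have : f =ᶠ[nhds t] fun _ => 0 := by
      filter_upwards [isClosed_Icc.isOpen_compl.mem_nhds ht] with s hs using hz s hs
    rw [this.deriv_eq]; simp
  have hdc : Continuous (deriv f) := hcd.continuous_deriv (by simp)
  have hfull : ∀ g : ℝ → ℝ, (∀ t, t ∉ Set.Icc (1:ℝ) 3 → g t = 0) → ∫ t in Set.Ioi (0:ℝ), g t = ∫ t, g t := by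
    intro g hg
    apply setIntegral_eq_integral_of_forall_compl_eq_zero
    intro t ht
    apply hg
    intro h
    exact ht (lt_of_lt_of_le one_pos h.1)
  have hint : ∀ g : ℝ → ℝ, Continuous g → (∀ t, t ∉ Set.Icc (1:ℝ) 3 → g t = 0) → Integrable g := by
    intro g hg h
    exact hg.integrable_of_hasCompactSupport (HasCompactSupport.intro isCompact_Icc h)
  refine ⟨f, hcd, fun t ht => hz t fun h => by linarith [h.1], fun t ht => hz t fun h => by linarith [h.2],
    fun t ht => hloc t fun h => by linarith [h.1], fun t ht => hloc t fun h => by linarith [h.2], ?_, ?_⟩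
  · intro n
    rw [hfull _ fun t ht => by rw [hz t ht, mul_zero]]
    have hc : Continuous (fun t => t ^ n * f t) := (continuous_pow n).mul f.continuous
    refine hc.integral_pos_of_hasCompactSupport_nonneg_nonzero (HasCompactSupport.intro isCompact_Icc fun t ht => by rw [hz t ht, mul_zero]) ?_ (x := 2) ?_
    · intro t
      by_cases ht : t ∈ Set.Icc (1:ℝ) 3
      · exact mul_nonneg (pow_nonneg (by linarith [ht.1]) _) f.nonneg
      · simp [hz t ht]
    · have : f 2 = 1 := f.one_of_mem_closedBall (by simp [f.rIn_pos.le])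
      rw [this]; positivity
  · intro n
    rw [hfull _ fun t ht => by rw [hloc t ht, mul_zero, mul_zero], hfull _ fun t ht => by rw [hz t ht, mul_zero]]
    have h := integral_mul_deriv_eq_deriv_mul_of_integrable (u := fun t : ℝ => t ^ (n+1)) (v := f)
      (u' := fun t => ((n:ℝ)+1) * t ^ n) (v' := deriv f)
      (fun t _ => by simpa using hasDerivAt_pow (n+1) t)
      (fun t _ => (hcd.differentiable (by simp) t).hasDerivAt)
      (hint _ ((continuous_pow _).mul hdc) fun t ht => by simp [hloc t ht])
      (hint _ (by have := f.continuous; fun_prop) fun t ht => by simp [hz t ht])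
      (hint _ ((continuous_pow _).mul f.continuous) fun t ht => by simp [hz t ht])
    calc _ = ∫ t, t ^ (n+1) * deriv f t := by congr 1; funext t; ring
      _ = _ := h
      _ = _ := by
        simp_rw [mul_assoc]
        rw [integral_const_mul]; ring

namespace Good

variable {n : ℕ} {H : Euc n → ℝ}

lemma ibp (g : Good H) {ψ : Euc n → ℝ} (hψ : Hg1 ψ) (sψ : Sm ψ) (i : Fin (n+1)) :
    sE H (fun y => Jd H y * ∑ k, Pm H y k i * pd ψ k y)
      = (n + 1) * sE H (fun y => Jd H y * (ψ y * y i / H y ^ 2)) := by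
  obtain ⟨ζ, ζc, z1, z3, d1, d3, zpos, zibp⟩ := exists_bump
  set u : Euc n → ℝ := fun y => ζ (H y) * ψ y with hu
  have su : Sm u := (g.sm.comp ζc).mul sψ
  have pdu : ∀ k, ∀ y ≠ 0, pd u k y = deriv ζ (H y) * pd H k y * ψ y + ζ (H y) * pd ψ k y := by
    intro k y hy
    rw [hu, pd_mul ((g.sm.comp ζc).da hy) (sψ.da hy),
      pd_comp (g.sm.da hy) (ζc.differentiable (by simp) (H y)).hasDerivAt]
  have u1 : ∀ y, H y < 1 → u y = 0 := fun y hy => by simp [hu, z1 _ hy]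
  have u3 : ∀ y, 3 < H y → u y = 0 := fun y hy => by simp [hu, z3 _ hy]
  have unear : ∀ y, H y < 1 → u =ᶠ[nhds y] fun _ => 0 := by
    intro y hy
    filter_upwards [(isOpen_lt g.contH continuous_const).mem_nhds hy] with z hz using u1 z hz
  have pdu1 : ∀ k y, H y < 1 → pd u k y = 0 := by
    intro k y hy
    rw [pd, (unear y hy).fderiv_eq]; simp
  have pdu3 : ∀ k y, 3 < H y → pd u k y = 0 := by
    intro k y hy
    have hy0 : y ≠ 0 := by rintro rfl; rw [g.H0] at hy; linarith
    rw [pdu k y hy0, z3 _ hy, d3 _ hy]; simp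
  have uda : ∀ y, DifferentiableAt ℝ u y := by
    intro y
    by_cases hy : y = 0
    · subst hy
      exact (unear 0 (by simp [g.H0])).differentiableAt_iff.2 (differentiableAt_const _)
    · exact su.da hy
  set A : Fin (n+1) → Euc n → ℝ := fun k y => Jd H y * Pm H y k i with hA
  have sA : ∀ k, Sm (A k) := fun k => g.smJ.mul (g.smP k i)
  have ts : ∀ y ∈ tsupport u, y ≠ 0 := by
    intro y hy h0
    subst h0
    have : (0 : Euc n) ∉ tsupport u := by
      rw [notMem_tsupport_iff_eventuallyEq]
      exact unear 0 (by simp [g.H0])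
    exact this hy
  have i1 : ∀ k, Integrable (fun y => pd (A k) k y * u y) := fun k =>
    g.cs_int (((sA k).pd k).mul su).co (fun y hy => by simp [u1 y hy]) (fun y hy => by simp [u3 y hy])
  have i2 : ∀ k, Integrable (fun y => A k y * pd u k y) := fun k =>
    g.cs_int ((sA k).mul (su.pd k)).co (fun y hy => by simp [pdu1 k y hy]) (fun y hy => by simp [pdu3 k y hy])
  have i3 : ∀ k, Integrable (fun y => A k y * u y) := fun k =>
    g.cs_int ((sA k).mul su).co (fun y hy => by simp [u1 y hy]) (fun y hy => by simp [u3 y hy])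
  have parts : ∀ k, ∫ y, A k y * pd u k y = - ∫ y, pd (A k) k y * u y := fun k =>
    integral_mul_fderiv_eq_neg_fderiv_mul_of_integrable (i1 k) (i2 k) (i3 k)
      (fun y hy => (sA k).da (ts y hy)) (fun y _ => uda y)
  have tot : ∫ y, ∑ k, A k y * pd u k y = 0 := by
    rw [integral_finsetSum _ fun k _ => i2 k]
    simp_rw [parts]
    rw [Finset.sum_neg_distrib, ← integral_finsetSum _ fun k _ => i1 k, neg_eq_zero]
    refine integral_eq_zero_of_ae (Filter.Eventually.of_forall fun y => ?_)
    by_cases hy : y = 0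
    · simp [u1 y (by simp [hy, g.H0])]
    · simp only [Pi.zero_apply]
      rw [← Finset.sum_mul]
      have := g.piola hy i
      simp only [hA]
      rw [this, zero_mul]
  set F1 : Euc n → ℝ := fun y => Jd H y * (ψ y * y i / H y ^ 2) with hF1
  set F2 : Euc n → ℝ := fun y => Jd H y * ∑ k, Pm H y k i * pd ψ k y with hF2
  have sF1 : Sm F1 := g.smJ.mul ((sψ.mul (Sm.coord i)).div (g.sm.pow 2) fun y hy => (pow_pos (g.pos y hy) 2).ne')
  have sF2 : Sm F2 := g.smJ.mul (Sm.sum fun k _ => (g.smP k i).mul (sψ.pd k))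
  have hF1g : Hg0 F1 := by
    intro c hc y
    simp only [hF1]
    rw [g.hgJ c hc, hψ c hc, g.hg c hc]
    simp only [PiLp.smul_apply, smul_eq_mul]
    congr 1
    rw [show c * ψ y * (c * y i) = c^2 * (ψ y * y i) by ring, mul_pow, mul_div_mul_left _ _ (by positivity)]
  have hF2g : Hg0 F2 := by
    intro c hc y
    simp only [hF2]
    rw [g.hgJ c hc]
    congr 1
    refine Finset.sum_congr rfl fun k _ => ?_
    rw [g.hgPm hc, hψ.pd k c hc]
  have key : ∀ y, ∑ k, A k y * pd u k y = F1 y * (H y * deriv ζ (H y)) + F2 y * ζ (H y) := by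
    intro y
    by_cases hy : y = 0
    · have h1 : H y < 1 := by simp [hy, g.H0]
      simp [pdu1 _ y h1, z1 _ h1, d1 _ h1]
    · have hp := (g.pos y hy).ne'
      have hPX := g.PX hy i
      have : ∀ k, A k y * pd u k y = (Jd H y * deriv ζ (H y) * ψ y) * (Pm H y i k * pd H k y)
          + (Jd H y * ζ (H y)) * (Pm H y k i * pd ψ k y) := by
        intro k
        rw [pdu k y hy, hA, g.P_symm hy i k]; ring
      simp_rw [this]
      rw [Finset.sum_add_distrib, ← Finset.mul_sum, ← Finset.mul_sum, hPX, hF1, hF2]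
      field_simp
  have j1 : Integrable (fun y => F1 y * (H y * deriv ζ (H y))) :=
    g.cs_int (sF1.co.mul (g.sm.co.mul ((ζc.continuous_deriv (by simp)).comp_continuousOn g.sm.co)))
      (fun y hy => by simp [d1 _ hy]) (fun y hy => by simp [d3 _ hy])
  have j2 : Integrable (fun y => F2 y * ζ (H y)) :=
    g.cs_int (sF2.co.mul (ζc.continuous.comp_continuousOn g.sm.co))
      (fun y hy => by simp [z1 _ hy]) (fun y hy => by simp [z3 _ hy])
  simp_rw [key] at tot
  rw [integral_add j1 j2, polar g.hg g.pos hF1g (fun t => t * deriv ζ t) j1, polar g.hg g.pos hF2g ζ j2, zibp] at tot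
  have hz := zpos n
  have : (∫ t in Set.Ioi (0:ℝ), t ^ n * ζ t) * (sE H F2 - (n + 1) * sE H F1) = 0 := by linarith
  rcases mul_eq_zero.1 this with h | h
  · exact absurd h hz.ne'
  · linarith

end Good

/-! Part 7: verification of the Brascamp-Lieb hypotheses -/

lemma seg_deriv {n : ℕ} {f : Euc n → ℝ} (sf : Sm f) {m w : Euc n} {s : ℝ} (h : m + s • w ≠ 0) :
    HasDerivAt (fun s : ℝ => f (m + s • w)) (∑ i, w i * pd f i (m + s • w)) s := by
  have h1 : HasDerivAt (fun s : ℝ => m + s • w) w s := by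
    simpa using ((hasDerivAt_id s).smul_const w).const_add m
  have h2 := (sf.da h).hasFDerivAt.comp_hasDerivAt s h1
  rw [fderiv_eq_sum] at h2
  exact h2

lemma seg_first {n : ℕ} {f : Euc n → ℝ} (sf : Sm f) {m w : Euc n}
    (h : ∀ s ∈ Set.Icc (-1:ℝ) 1, m + s • w ≠ 0) {δ : ℝ}
    (hδ : ∀ s ∈ Set.Icc (-1:ℝ) 1, δ ≤ ∑ i, w i * pd f i (m + s • w)) :
    2 * δ ≤ f (m + w) - f (m - w) := by
  have hc : ContinuousOn (fun s : ℝ => f (m + s • w)) (Set.Icc (-1) 1) := fun s hs =>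
    (seg_deriv sf (h s hs)).continuousAt.continuousWithinAt
  obtain ⟨s, hs, he⟩ := exists_hasDerivAt_eq_slope (fun s : ℝ => f (m + s • w))
    (fun s => ∑ i, w i * pd f i (m + s • w)) (by norm_num : (-1:ℝ) < 1) hc
    (fun s hs => seg_deriv sf (h s ⟨hs.1.le, hs.2.le⟩))
  have := hδ s ⟨hs.1.le, hs.2.le⟩
  rw [he] at this
  simp only [one_smul, neg_smul, ← sub_eq_add_neg] at this
  norm_num at this
  linarith

lemma conv_1d {φ φ' φ'' : ℝ → ℝ} {κ : ℝ} (h1 : ∀ s ∈ Set.Icc (-1:ℝ) 1, HasDerivAt φ (φ' s) s)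
    (h2 : ∀ s ∈ Set.Icc (-1:ℝ) 1, HasDerivAt φ' (φ'' s) s) (h : ∀ s ∈ Set.Icc (-1:ℝ) 1, κ ≤ φ'' s) :
    κ ≤ φ 1 + φ (-1) - 2 * φ 0 := by
  have hm : MonotoneOn (fun s => φ' s - κ * s) (Set.Icc (-1:ℝ) 1) := by
    apply monotoneOn_of_hasDerivWithinAt_nonneg (convex_Icc _ _) (f' := fun s => φ'' s - κ * 1)
    · intro s hs
      exact ((h2 s hs).continuousAt.sub (by fun_prop)).continuousWithinAt
    · intro s hs
      have hs' := interior_subset hs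
      exact ((h2 s hs').fun_sub ((hasDerivAt_id s).const_mul κ)).hasDerivWithinAt
    · intro s hs
      linarith [h s (interior_subset hs)]
  have hd : ∀ s ∈ Set.Icc (-1:ℝ) 1, HasDerivAt (fun s => φ s - κ / 2 * s^2) (φ' s - κ * s) s := by
    intro s hs
    have e := ((hasDerivAt_pow 2 s).const_mul (κ/2))
    refine ((h1 s hs).fun_sub e).congr_deriv ?_
    push_cast; ring
  obtain ⟨s, hs, e⟩ := exists_hasDerivAt_eq_slope (fun s => φ s - κ / 2 * s^2) (fun s => φ' s - κ * s)
    (by norm_num : (0:ℝ) < 1) (fun s hs => (hd s ⟨by linarith [hs.1], hs.2⟩).continuousAt.continuousWithinAt)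
    (fun s hs => hd s ⟨by linarith [hs.1], hs.2.le⟩)
  obtain ⟨u, hu, e'⟩ := exists_hasDerivAt_eq_slope (fun s => φ s - κ / 2 * s^2) (fun s => φ' s - κ * s)
    (by norm_num : (-1:ℝ) < 0) (fun s hs => (hd s ⟨hs.1, by linarith [hs.2]⟩).continuousAt.continuousWithinAt)
    (fun s hs => hd s ⟨hs.1.le, by linarith [hs.2]⟩)
  have := hm (a := u) ⟨hu.1.le, by linarith [hu.2]⟩ (b := s) ⟨by linarith [hs.1], hs.2.le⟩ (by linarith [hu.2, hs.1])
  simp only at this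
  rw [e, e'] at this
  norm_num at this
  linarith

/-- the quadratic form -/
def qf {n : ℕ} (H : Euc n → ℝ) (y w : Euc n) : ℝ := ∑ i, ∑ j, w i * w j * Mm H y i j

lemma seg_second {n : ℕ} {H : Euc n → ℝ} (g : Good H) {m w : Euc n}
    (h : ∀ s ∈ Set.Icc (-1:ℝ) 1, m + s • w ≠ 0) {κ : ℝ}
    (hκ : ∀ s ∈ Set.Icc (-1:ℝ) 1, κ ≤ qf H (m + s • w) w) :
    κ ≤ H (m + w) ^ 2 / 2 + H (m - w) ^ 2 / 2 - 2 * (H m ^ 2 / 2) := by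
  have h1 : ∀ s ∈ Set.Icc (-1:ℝ) 1, HasDerivAt (fun s : ℝ => H (m + s • w) ^ 2 / 2)
      (∑ j, w j * (H (m + s • w) * pd H j (m + s • w))) s := by
    intro s hs
    refine (((seg_deriv g.sm (h s hs)).pow 2).div_const 2).congr_deriv ?_
    simp only [Finset.mul_sum, Finset.sum_div]
    exact Finset.sum_congr rfl fun i _ => by push_cast; ring
  have h2 : ∀ s ∈ Set.Icc (-1:ℝ) 1, HasDerivAt (fun s : ℝ => ∑ j, w j * (H (m + s • w) * pd H j (m + s • w)))
      (qf H (m + s • w) w) s := by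
    intro s hs
    have : ∀ j ∈ Finset.univ, HasDerivAt (fun s : ℝ => w j * (H (m + s • w) * pd H j (m + s • w))) 
      (∑ i, w i * w j * Mm H (m + s • w) i j) s := by
      intro j _
      refine (((seg_deriv g.sm (h s hs)).fun_mul (seg_deriv (g.smX j) (h s hs))).const_mul (w j)).congr_deriv ?_
      rw [Finset.sum_mul, Finset.mul_sum, ← Finset.sum_add_distrib, Finset.mul_sum]
      exact Finset.sum_congr rfl fun i _ => by simp only [Mm, Matrix.of_apply]; ring
    refine (HasDerivAt.fun_sum this).congr_deriv ?_
    rw [Finset.sum_comm]; rfl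
  have := conv_1d h1 h2 hκ
  simpa [sub_eq_add_neg] using this

/-! Part 8: uniform estimates -/

lemma sq_compl {d : ℕ} {M : Matrix (Fin d) (Fin d) ℝ} (hM : M.PosDef) (w u : Fin d → ℝ) :
    0 ≤ (∑ i, ∑ j, w i * w j * M i j) + 2 * (∑ i, w i * u i) + ∑ i, ∑ j, M⁻¹ i j * u i * u j := by
  have hs : Mᵀ = M := by
    have := hM.isHermitian
    rwa [Matrix.IsHermitian, Matrix.conjTranspose_eq_transpose_of_trivial] at this
  have hu : IsUnit M.det := isUnit_iff_ne_zero.mpr hM.det_pos.ne'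
  have h := hM.posSemidef.dotProduct_mulVec_nonneg (w + M⁻¹ *ᵥ u)
  have e1 : M *ᵥ (w + M⁻¹ *ᵥ u) = M *ᵥ w + u := by
    rw [Matrix.mulVec_add, Matrix.mulVec_mulVec, Matrix.mul_nonsing_inv _ hu, Matrix.one_mulVec]
  have e2 : (M⁻¹ *ᵥ u) ⬝ᵥ (M *ᵥ w) = u ⬝ᵥ w := by
    rw [Matrix.dotProduct_mulVec, Matrix.vecMul_mulVec, Matrix.transpose_nonsing_inv, hs, Matrix.nonsing_inv_mul _ hu, Matrix.vecMul_one]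
  rw [star_trivial, e1, add_dotProduct, dotProduct_add, dotProduct_add, e2] at h
  have e3 : w ⬝ᵥ M *ᵥ w = ∑ i, ∑ j, w i * w j * M i j := by
    simp only [dotProduct, Matrix.mulVec, Finset.mul_sum]
    exact Finset.sum_congr rfl fun i _ => Finset.sum_congr rfl fun j _ => by ring
  have e4 : (M⁻¹ *ᵥ u) ⬝ᵥ u = ∑ i, ∑ j, M⁻¹ i j * u i * u j := by
    simp only [dotProduct, Matrix.mulVec, Finset.sum_mul]
    exact Finset.sum_congr rfl fun i _ => Finset.sum_congr rfl fun j _ => by ring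
  rw [e3, e4, dotProduct_comm u w] at h
  simp only [dotProduct] at h
  linarith

lemma qf_pos {n : ℕ} {H : Euc n → ℝ} (g : Good H) {y w : Euc n} (hy : y ≠ 0) (hw : w ≠ 0) : 0 < qf H y w := by
  have h := (g.pdf y hy).dotProduct_mulVec_pos (x := fun i => w i) (by
    intro h; apply hw; ext i; exact congrFun h i)
  have e3 : (star fun i => w i) ⬝ᵥ Mm H y *ᵥ (fun i => w i) = qf H y w := by
    simp only [dotProduct, Matrix.mulVec, Finset.mul_sum, star_trivial, qf]
    exact Finset.sum_congr rfl fun i _ => Finset.sum_congr rfl fun j _ => by ring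
  rwa [e3] at h

lemma qf_smul {n : ℕ} {H : Euc n → ℝ} (c : ℝ) (y w : Euc n) : qf H y (c • w) = c^2 * qf H y w := by
  simp only [qf, Finset.mul_sum]
  exact Finset.sum_congr rfl fun i _ => Finset.sum_congr rfl fun j _ => by simp; ring

lemma qf_lower {n : ℕ} {H : Euc n → ℝ} (g : Good H) :
    ∃ c, 0 < c ∧ ∀ y ≠ 0, ∀ w, c * ‖w‖^2 ≤ qf H y w := by
  have hS : IsCompact (sphere (0 : Euc n) 1 ×ˢ sphere (0 : Euc n) 1) :=
    (isCompact_sphere _ _).prod (isCompact_sphere _ _)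
  have hne : (sphere (0 : Euc n) 1 ×ˢ sphere (0 : Euc n) 1).Nonempty := by
    have : (sphere (0 : Euc n) 1).Nonempty := NormedSpace.sphere_nonempty.mpr zero_le_one
    exact this.prod this
  have hc : ContinuousOn (fun p : Euc n × Euc n => qf H p.1 p.2) (sphere (0 : Euc n) 1 ×ˢ sphere (0 : Euc n) 1) := by
    unfold qf
    refine continuousOn_finsetSum _ fun i _ => continuousOn_finsetSum _ fun j _ => ?_
    refine ContinuousOn.mul (by fun_prop) ?_
    refine (g.smM i j).co.comp continuousOn_fst ?_
    rintro ⟨a, b⟩ ⟨ha, hb⟩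
    exact ne_zero_of_mem_unit_sphere (⟨a, ha⟩ : sphere (0 : Euc n) 1)
  obtain ⟨⟨a, b⟩, ⟨ha, hb⟩, hmin⟩ := hS.exists_isMinOn hne hc
  refine ⟨qf H a b, qf_pos g (ne_zero_of_mem_unit_sphere (⟨a, ha⟩ : sphere (0 : Euc n) 1))
    (ne_zero_of_mem_unit_sphere (⟨b, hb⟩ : sphere (0 : Euc n) 1)), fun y hy w => ?_⟩
  by_cases hw : w = 0
  · subst hw; simp [qf]
  have hyp : 0 < ‖y‖ := norm_pos_iff.mpr hy
  have hwp : 0 < ‖w‖ := norm_pos_iff.mpr hw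
  have h1 := hmin (a := (‖y‖⁻¹ • y, ‖w‖⁻¹ • w)) ⟨by simp [norm_smul, hyp.ne'], by simp [norm_smul, hwp.ne']⟩
  simp only [Set.mem_ofPred_eq] at h1
  rw [qf_smul] at h1
  have e : qf H (‖y‖⁻¹ • y) w = qf H y w := by
    simp only [qf, g.hgMm (inv_pos.mpr hyp)]
  rw [e] at h1
  calc qf H a b * ‖w‖^2 ≤ (‖w‖⁻¹^2 * qf H y w) * ‖w‖^2 := by gcongr
    _ = qf H y w := by field_simp

lemma seg_cases {n : ℕ} (m w : Euc n) : (∀ s ∈ Set.Icc (-1:ℝ) 1, m + s • w ≠ 0) ∨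
    ∃ s ∈ Set.Icc (-1:ℝ) 1, m = - (s • w) := by
  by_cases h : ∀ s ∈ Set.Icc (-1:ℝ) 1, m + s • w ≠ 0
  · exact Or.inl h
  · push Not at h
    obtain ⟨s, hs, e⟩ := h
    exact Or.inr ⟨s, hs, eq_neg_of_add_eq_zero_left e⟩

lemma Hg1.nn {n : ℕ} {f : Euc n → ℝ} (hf : Hg1 f) {c : ℝ} (hc : 0 ≤ c) (y : Euc n) : f (c • y) = c * f y := by
  have h0 : f 0 = 0 := by
    have := hf 2 (by norm_num) 0
    rw [smul_zero] at this; linarith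
  rcases hc.eq_or_lt with h | h
  · rw [← h]; simp [h0]
  · exact hf c h y

lemma V_conv {n : ℕ} {H : Euc n → ℝ} (g : Good H) :
    ∃ c, 0 < c ∧ ∀ m w, c * ‖w‖^2 ≤ H (m + w) ^ 2 / 2 + H (m - w) ^ 2 / 2 - 2 * (H m ^ 2 / 2) := by
  obtain ⟨c, hc, hq⟩ := qf_lower g
  obtain ⟨k, hk, hl⟩ := g.lower
  refine ⟨min c (k^2/2), lt_min hc (by positivity), fun m w => ?_⟩
  rcases seg_cases m w with h | ⟨s, hs, e⟩
  · exact seg_second g h fun s hs => (mul_le_mul_of_nonneg_right (min_le_left _ _) (sq_nonneg _)).trans (hq _ (h s hs) w)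
  · have hb : ∀ z : Euc n, ‖z‖ = ‖w‖ → min c (k^2/2) * ‖w‖^2 ≤ H z^2/2 := by
      intro z hz
      have h1 := hl z
      have : (k * ‖z‖)^2 ≤ H z ^2 := by gcongr
      calc _ ≤ (k^2/2) * ‖w‖^2 := mul_le_mul_of_nonneg_right (min_le_right _ _) (sq_nonneg _)
        _ = (k*‖z‖)^2/2 := by rw [hz]; ring
        _ ≤ _ := by linarith
    have e1 : m + w = (1 - s) • w := by rw [e]; module
    have e2 : m - w = (1 + s) • (-w) := by rw [e]; module
    rw [e1, e2, g.hg.nn (by linarith [hs.2]), g.hg.nn (by linarith [hs.1])]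
    rcases le_total 0 s with h0 | h0
    · have e3 : m = s • (-w) := by rw [e]; module
      rw [e3, g.hg.nn h0]
      have := hb (-w) (norm_neg w)
      nlinarith [mul_nonneg (sub_nonneg.2 hs.2) h0, sq_nonneg ((1-s) * H w),
        mul_nonneg (add_nonneg h0 (mul_nonneg (sub_nonneg.2 hs.2) h0)) (sq_nonneg (H (-w)))]
    · have e3 : m = (-s) • w := by rw [e]; module
      rw [e3, g.hg.nn (by linarith)]
      have := hb w rfl
      have h4 : 0 ≤ 1 + s := by linarith [hs.1]
      nlinarith [mul_nonneg h4 (neg_nonneg.2 h0), sq_nonneg ((1+s) * H (-w)),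
        mul_nonneg (add_nonneg (neg_nonneg.2 h0) (mul_nonneg h4 (neg_nonneg.2 h0))) (sq_nonneg (H w))]

lemma abs_lin {n : ℕ} (w : Euc n) (v : Fin (n+1) → ℝ) {C : ℝ} (h : ∀ i, |v i| ≤ C) :
    |∑ i, w i * v i| ≤ (n+1) * C * ‖w‖ := by
  calc |∑ i, w i * v i| ≤ ∑ i : Fin (n+1), C * ‖w‖ := by
        refine (Finset.abs_sum_le_sum_abs _ _).trans (Finset.sum_le_sum fun i _ => ?_)
        rw [abs_mul, mul_comm]
        have := PiLp.norm_apply_le w i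
        rw [Real.norm_eq_abs] at this
        exact mul_le_mul (h i) this (abs_nonneg _) ((abs_nonneg _).trans (h i))
    _ = _ := by simp; ring

lemma F_lip {n : ℕ} {F : Euc n → ℝ} (hF : Hg1 F) (sF : Sm F) :
    ∃ L, 0 ≤ L ∧ (∀ m w, |F (m + w) - F (m - w)| ≤ L * ‖w‖) ∧ ∀ x, |F x| ≤ L * ‖x‖ := by
  obtain ⟨C, hC, hb⟩ := hF.upper sF.co
  choose D hD hDb using fun i => (hF.pd i).bdd (sF.pd i).co
  set E := ∑ i, D i with hE
  have hDE : ∀ i, D i ≤ E := fun i => Finset.single_le_sum (f := D) (fun i _ => hD i) (Finset.mem_univ i)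
  have hE0 : 0 ≤ E := Finset.sum_nonneg fun i _ => hD i
  have key : ∀ m w : Euc n, (∀ s ∈ Set.Icc (-1:ℝ) 1, m + s • w ≠ 0) → -(2 * ((n+1) * E * ‖w‖)) ≤ F (m + w) - F (m - w) := by
    intro m w h
    have := seg_first sF h (δ := -((n+1) * E * ‖w‖)) fun s hs =>
      neg_le_of_abs_le (abs_lin w (fun i => pd F i (m + s • w)) fun i => (hDb i _ (h s hs)).trans (hDE i))
    linarith
  have hn : (0:ℝ) ≤ 2 * ((n+1) * E) := by positivity
  refine ⟨2 * ((n+1) * E) + 2 * C, by positivity, fun m w => ?_, fun x => (hb x).trans ?_⟩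
  · rcases seg_cases m w with h | ⟨s, hs, e⟩
    · have k1 := key m w h
      have k2 := key m (-w) fun s hs => by
        have := h (-s) ⟨by linarith [hs.2], by linarith [hs.1]⟩
        simpa using this
      rw [norm_neg, sub_neg_eq_add, ← sub_eq_add_neg] at k2
      have : 0 ≤ 2 * C * ‖w‖ := by positivity
      rw [abs_le]; constructor <;> linarith
    · have e1 : m + w = (1 - s) • w := by rw [e]; module
      have e2 : m - w = (1 + s) • (-w) := by rw [e]; module
      have h1 := hb (m + w)
      have h2 := hb (m - w)
      have a1 : 0 ≤ 1 - s := by linarith [hs.2]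
      have a2 : 0 ≤ 1 + s := by linarith [hs.1]
      rw [e1, norm_smul, Real.norm_of_nonneg a1] at h1
      rw [e2, norm_smul, norm_neg, Real.norm_of_nonneg a2] at h2
      rw [e1, e2]
      have := mul_nonneg hn (norm_nonneg w)
      refine (abs_sub _ _).trans ?_
      linarith
  · have := mul_nonneg hn (norm_nonneg x)
    have := mul_nonneg hC (norm_nonneg x)
    linarith

open Filter Topology in
lemma Hg0.uc {n : ℕ} {F : Euc n → ℝ} (hF : Hg0 F) (cF : ContinuousOn F {(0 : Euc n)}ᶜ) {η ω : ℝ} (hη : 0 < η)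
    (hω : 0 < ω) : ∀ᶠ δ in 𝓝[>] (0:ℝ), ∀ m p : Euc n, η ≤ ‖m‖ → ‖p - m‖ ≤ δ → |F p - F m| ≤ ω := by
  set A : Set (Euc n) := closedBall 0 (2*η) \ ball 0 (η/2) with hA
  have hAc : IsCompact A := (isCompact_closedBall _ _).diff isOpen_ball
  have hAs : A ⊆ {(0 : Euc n)}ᶜ := by
    rintro y ⟨_, hy⟩ h0
    rw [Set.mem_singleton_iff] at h0
    subst h0
    exact hy (mem_ball_self (by positivity))
  have hu := hAc.uniformContinuousOn_of_continuous (cF.mono hAs)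
  rw [Metric.uniformContinuousOn_iff_le] at hu
  obtain ⟨δ0, hδ0, hu⟩ := hu ω hω
  have h1 : ∀ᶠ δ in 𝓝[>] (0:ℝ), δ < min δ0 (η/2) :=
    nhdsWithin_le_nhds (eventually_lt_nhds (lt_min hδ0 (by positivity)))
  filter_upwards [h1] with δ hδ m p hm hp
  have hm0 : 0 < ‖m‖ := hη.trans_le hm
  set c := η / ‖m‖ with hc
  have hc0 : 0 < c := by positivity
  have hc1 : c ≤ 1 := (div_le_one hm0).2 hm
  rw [← hF c hc0 p, ← hF c hc0 m]
  have nm : ‖c • m‖ = η := by rw [norm_smul, Real.norm_of_nonneg hc0.le, hc]; field_simp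
  have nd : ‖c • p - c • m‖ ≤ δ := by
    rw [← smul_sub, norm_smul, Real.norm_of_nonneg hc0.le]
    exact (mul_le_of_le_one_left (norm_nonneg _) hc1).trans hp
  have hd1 : δ ≤ δ0 := (hδ.trans_le (min_le_left _ _)).le
  have hd2 : δ ≤ η/2 := (hδ.trans_le (min_le_right _ _)).le
  have := hu (c • p) ?_ (c • m) ?_ (by rw [dist_eq_norm]; exact nd.trans hd1)
  · rwa [Real.dist_eq] at this
  · have t1 := norm_sub_norm_le (c • p) (c • m)
    have t2 := norm_sub_norm_le (c • m) (c • p)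
    rw [norm_sub_rev] at t2
    exact ⟨by simp only [mem_closedBall_zero_iff]; linarith, by simp only [mem_ball_zero_iff, not_lt]; linarith⟩
  · exact ⟨by simp only [mem_closedBall_zero_iff]; linarith, by simp only [mem_ball_zero_iff, not_lt]; linarith⟩

/-! Part 9: the Brascamp-Lieb inequality -/

/-- energy density -/
def Nf {n : ℕ} (H F : Euc n → ℝ) (y : Euc n) : ℝ := ∑ i, ∑ j, Pm H y i j * pd F i y * pd F j y

lemma Nf_sm {n : ℕ} {H F : Euc n → ℝ} (g : Good H) (sF : Sm F) : Sm (Nf H F) :=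
  Sm.sum fun i _ => Sm.sum fun j _ => ((g.smP i j).mul (sF.pd i)).mul (sF.pd j)

lemma Nf_hg {n : ℕ} {H F : Euc n → ℝ} (g : Good H) (hF : Hg1 F) : Hg0 (Nf H F) := by
  intro c hc y
  simp only [Nf, g.hgPm hc, hF.pd _ c hc]

lemma Nf_nonneg {n : ℕ} {H F : Euc n → ℝ} (g : Good H) {y : Euc n} (hy : y ≠ 0) : 0 ≤ Nf H F y := by
  have := sq_compl (g.pdf y hy) 0 (fun i => pd F i y)
  simpa [Nf, Pm] using this

open Filter Topology in
lemma near_est {n : ℕ} {H F : Euc n → ℝ} (g : Good H) (hF : Hg1 F) (sF : Sm F) {ε η K : ℝ} (hε : 0 < ε) (hη : 0 < η)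
    (hK : 0 < K) : ∃ t0 > 0, ∀ t, 0 < t → t < t0 → ∀ m w : Euc n, η ≤ ‖m + w‖ → η ≤ ‖m - w‖ → ‖w‖ ≤ K * t →
      m + w ≠ 0 → m - w ≠ 0 → 
      0 ≤ H (m + w) ^ 2 / 2 + H (m - w) ^ 2 / 2 - 2 * (H m ^ 2 / 2) + t * (F (m + w) - F (m - w)) +
        1/2 * t^2 * (Nf H F (m + w) + Nf H F (m - w) + 2 * ε) := by
  set d : ℝ := n + 1 with hd
  have hd0 : 0 < d := by positivity
  set ω := ε / (d^2*K^2 + 2*d*K + 1) with hω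
  have hω0 : 0 < ω := by positivity
  have hη2 : 0 < η/2 := by positivity
  have u1 : ∀ᶠ δ in 𝓝[>] (0:ℝ), ∀ i j, ∀ m p : Euc n, η/2 ≤ ‖m‖ → ‖p - m‖ ≤ δ → |Mm H p i j - Mm H m i j| ≤ ω := by
    rw [Filter.eventually_all]; intro i
    rw [Filter.eventually_all]; intro j
    exact (g.hgM i j).uc (g.smM i j).co hη2 hω0
  have u2 : ∀ᶠ δ in 𝓝[>] (0:ℝ), ∀ i, ∀ m p : Euc n, η/2 ≤ ‖m‖ → ‖p - m‖ ≤ δ → |pd F i p - pd F i m| ≤ ω := by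
    rw [Filter.eventually_all]; intro i
    exact (hF.pd i).uc (sF.pd i).co hη2 hω0
  have u3 := (Nf_hg g hF).uc (Nf_sm g sF).co hη2 hω0
  have u4 : ∀ᶠ δ in 𝓝[>] (0:ℝ), δ < η/2 := nhdsWithin_le_nhds (eventually_lt_nhds hη2)
  obtain ⟨δ, ⟨⟨⟨⟨u1, u2⟩, u3⟩, u4⟩, hδ⟩⟩ := ((((u1.and u2).and u3).and u4).and self_mem_nhdsWithin).exists
  have hδ : 0 < δ := hδ
  refine ⟨δ / K, by positivity, fun t ht htt m w hx hy hw hx0 hy0 => ?_⟩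
  have hwδ : ‖w‖ ≤ δ := by
    rw [lt_div_iff₀ hK] at htt
    linarith
  have hm : η/2 ≤ ‖m‖ := by
    have := norm_add_le m w
    linarith
  have hm0 : m ≠ 0 := by
    rintro rfl; simp at hm; linarith
  have hsw : ∀ s ∈ Set.Icc (-1:ℝ) 1, ‖m + s • w - m‖ ≤ δ := by
    intro s hs
    rw [add_sub_cancel_left, norm_smul]
    have : ‖s‖ ≤ 1 := abs_le.2 hs
    exact (mul_le_of_le_one_left (norm_nonneg _) this).trans hwδ
  have hseg : ∀ s ∈ Set.Icc (-1:ℝ) 1, m + s • w ≠ 0 := by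
    intro s hs h0
    have := hsw s hs
    rw [h0, zero_sub, norm_neg] at this
    linarith
  have a1 := seg_second g hseg (κ := qf H m w - ω * d^2 * ‖w‖^2) (fun s hs => by
    have h1 : |∑ i, w i * ∑ j, w j * (Mm H (m + s • w) i j - Mm H m i j)| ≤ (n+1) * ((n+1) * ω * ‖w‖) * ‖w‖ :=
      abs_lin w (fun i => ∑ j, w j * (Mm H (m + s • w) i j - Mm H m i j)) fun i =>
        abs_lin w (fun j => (Mm H (m + s • w) i j - Mm H m i j)) fun j => u1 i j m _ hm (hsw s hs)
    have h2 : ∑ i, w i * ∑ j, w j * (Mm H (m + s • w) i j - Mm H m i j) = qf H (m + s • w) w - qf H m w := by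
      simp only [qf, ← Finset.sum_sub_distrib, Finset.mul_sum]
      exact Finset.sum_congr rfl fun i _ => Finset.sum_congr rfl fun j _ => by ring
    rw [h2] at h1
    have := neg_le_of_abs_le h1
    have e : (n+1) * ((n+1) * ω * ‖w‖) * ‖w‖ = ω * d^2 * ‖w‖^2 := by rw [hd]; ring
    linarith)
  have a2 := seg_first sF hseg (δ := (∑ i, w i * pd F i m) - ω * d * ‖w‖) (fun s hs => by
    have h1 : |∑ i, w i * (pd F i (m + s • w) - pd F i m)| ≤ (n+1) * ω * ‖w‖ :=
      abs_lin w (fun i => (pd F i (m + s • w) - pd F i m)) fun i => u2 i m _ hm (hsw s hs)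
    simp only [mul_sub, Finset.sum_sub_distrib] at h1
    have := neg_le_of_abs_le h1
    have e : (n+1) * ω * ‖w‖ = ω * d * ‖w‖ := by rw [hd]; ring
    linarith)
  have a3 := neg_le_of_abs_le (u3 m (m + w) hm (by simpa using hwδ))
  have a4 := neg_le_of_abs_le (u3 m (m - w) hm (by simpa using hwδ))
  have a5 := sq_compl (g.pdf m hm0) (fun i => w i) (fun i => t * pd F i m)
  have e1 : ∑ i, ∑ j, (Mm H m)⁻¹ i j * (t * pd F i m) * (t * pd F j m) = t^2 * Nf H F m := by
    simp only [Nf, Finset.mul_sum, Pm]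
    exact Finset.sum_congr rfl fun i _ => Finset.sum_congr rfl fun j _ => by ring
  have e2 : ∑ i, w i * (t * pd F i m) = t * ∑ i, w i * pd F i m := by
    rw [Finset.mul_sum]; exact Finset.sum_congr rfl fun i _ => by ring
  rw [e1, e2] at a5
  change 0 ≤ qf H m w + _ + _ at a5
  have b1 : ω * d^2 * ‖w‖^2 ≤ ω * d^2 * (K * t)^2 := by gcongr
  have b2 : ω * d * ‖w‖ ≤ ω * d * (K * t) := by gcongr
  have b3 : ω * (d^2*K^2 + 2*d*K + 1) = ε := by rw [hω]; field_simp
  have c1 := mul_le_mul_of_nonneg_left a2 ht.le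
  have c2 : t^2 * (2 * Nf H F m - 2 * ω) ≤ t^2 * (Nf H F (m + w) + Nf H F (m - w)) :=
    mul_le_mul_of_nonneg_left (by linarith) (sq_nonneg t)
  have c3 := mul_le_mul_of_nonneg_left b2 ht.le
  have c4 : t^2 * ε = t^2 * (ω * (d^2*K^2 + 2*d*K + 1)) := by rw [b3]
  nlinarith

theorem Good.BL {n : ℕ} {H F : Euc n → ℝ} (g : Good H) (hF : Hg1 F) (sF : Sm F)
    (hmean : ∫ y, F y * Real.exp (-(H y ^ 2 / 2)) = 0) :
    ∫ y, F y ^ 2 * Real.exp (-(H y ^ 2 / 2)) ≤ ∫ y, Nf H F y * Real.exp (-(H y ^ 2 / 2)) := by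
  classical
  obtain ⟨c, hc, hV⟩ := V_conv g
  obtain ⟨L, hL0, hL, hLb⟩ := F_lip hF sF
  obtain ⟨k, hk, hl⟩ := g.lower
  obtain ⟨C, hC, hNb⟩ := (Nf_hg g hF).bdd (Nf_sm g sF).co
  set N : Euc n → ℝ := fun y => if y = 0 then 0 else Nf H F y with hN
  have hNe : ∀ y ≠ 0, N y = Nf H F y := fun y hy => by simp [hN, hy]
  have hxy : ∀ x y : Euc n, ((1/2:ℝ) • (x + y)) + ((1/2:ℝ) • (x - y)) = x ∧ ((1/2:ℝ) • (x + y)) - ((1/2:ℝ) • (x - y)) = y ∧ ‖(1/2:ℝ) • (x - y)‖ = 1/2 * ‖x - y‖ := by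
    intro x y
    refine ⟨by module, by module, ?_⟩
    rw [norm_smul]; norm_num
  have hmain := bl_abs (n+1) (Nat.succ_ne_zero n) (fun y => H y ^ 2 / 2) F N (c/4) L C (k^2/2) (by positivity) (by positivity)
    hL0 (by have := g.contH; fun_prop) (fun x => ?_) (hF.cont sF.co).measurable (fun x y => ?_) hLb ?_ (fun x => ?_) (fun x => ?_) (fun x y => ?_) ?_ hmean
  · refine hmain.trans (le_of_eq (integral_congr_ae ?_))
    have : ∀ᵐ y : Euc n, y ≠ 0 := by
      have := measure_singleton (μ := (volume : Measure (Euc n))) 0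
      exact compl_mem_ae_iff.mpr this
    filter_upwards [this] with y hy
    rw [hNe y hy]
  · have h1 := hl x
    have : (k * ‖x‖)^2 ≤ H x ^2 := by gcongr
    calc _ = (k*‖x‖)^2/2 := by ring
        _ ≤ _ := by linarith
  · obtain ⟨e1, e2, e3⟩ := hxy x y
    have := hL ((1/2:ℝ) • (x + y)) ((1/2:ℝ) • (x - y))
    rw [e1, e2, e3] at this
    refine this.trans ?_
    have := mul_nonneg hL0 (norm_nonneg (x - y))
    linarith
  · apply meas_of_co
    exact (Nf_sm g sF).co.congr fun y hy => hNe y hy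
  · by_cases hx : x = 0
    · simp [hN, hx]
    · rw [hNe x hx]; exact Nf_nonneg g hx
  · by_cases hx : x = 0
    · simpa [hN, hx] using hC
    · rw [hNe x hx]; exact (le_abs_self _).trans (hNb x hx)
  · obtain ⟨e1, e2, e3⟩ := hxy x y
    have := hV ((1/2:ℝ) • (x + y)) ((1/2:ℝ) • (x - y))
    rw [e1, e2, e3] at this
    refine le_trans (le_of_eq ?_) this
    ring
  · intro ε hε η hη
    have hK : 0 < L / c + 1 := by positivity
    obtain ⟨t0, ht0, h⟩ := near_est g hF sF hε hη hK
    refine ⟨t0, ht0, fun t ht htt x y hx hy => ?_⟩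
    obtain ⟨e1, e2, e3⟩ := hxy x y
    have hx0 : x ≠ 0 := by rintro rfl; simp at hx; linarith
    have hy0 : y ≠ 0 := by rintro rfl; simp at hy; linarith
    rw [hNe x hx0, hNe y hy0]
    rcases le_total ‖(1/2:ℝ) • (x - y)‖ ((L/c+1) * t) with hw | hw
    · have := h t ht htt ((1/2:ℝ) • (x + y)) ((1/2:ℝ) • (x - y))
      rw [e1, e2] at this
      exact this hx hy hw hx0 hy0
    · have h1 := hV ((1/2:ℝ) • (x + y)) ((1/2:ℝ) • (x - y))
      have h2 := neg_le_of_abs_le (hL ((1/2:ℝ) • (x + y)) ((1/2:ℝ) • (x - y)))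
      rw [e1, e2] at h1 h2
      set W := ‖(1/2:ℝ) • (x - y)‖ with hW
      have hW0 : 0 ≤ W := norm_nonneg _
      have h3 : L * t ≤ c * W := by
        have : c * ((L/c+1) * t) ≤ c * W := by gcongr
        have e : c * ((L/c+1) * t) = L * t + c * t := by field_simp
        have : 0 < c * t := by positivity
        linarith
      have h4 : L * t * W ≤ c * W * W := by gcongr
      have h5 := mul_le_mul_of_nonneg_left h2 ht.le
      have h6 : 0 ≤ 1/2 * t^2 * (Nf H F x + Nf H F y + 2 * ε) := by
        have := Nf_nonneg (F := F) g hx0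
        have := Nf_nonneg (F := F) g hy0
        positivity
      nlinarith

/-! Part 10: calculus of the spherical functional -/

lemma sE_congr {n : ℕ} {H f g : Euc n → ℝ} (h : ∀ y ≠ 0, f y = g y) : sE H f = sE H g := by
  unfold sE
  congr 1
  funext x
  rw [h x (sphere_ne x)]

lemma sE_sub {n : ℕ} {H f g : Euc n → ℝ} (G : Good H) (sf : Sm f) (sg : Sm g) :
    sE H (fun y => f y - g y) = sE H f - sE H g := by
  unfold sE
  rw [← integral_sub (sE_int G.sm.co G.pos sf.co) (sE_int G.sm.co G.pos sg.co)]
  congr 1; funext x; ring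

lemma sE_add {n : ℕ} {H f g : Euc n → ℝ} (G : Good H) (sf : Sm f) (sg : Sm g) :
    sE H (fun y => f y + g y) = sE H f + sE H g := by
  unfold sE
  rw [← integral_add (sE_int G.sm.co G.pos sf.co) (sE_int G.sm.co G.pos sg.co)]
  congr 1; funext x; ring

lemma sE_smul {n : ℕ} {H f : Euc n → ℝ} (c : ℝ) : sE H (fun y => c * f y) = c * sE H f := by
  unfold sE
  rw [← integral_const_mul]
  congr 1; funext x; ring

lemma sE_sum {n : ℕ} {H : Euc n → ℝ} {ι : Type*} {s : Finset ι} {f : ι → Euc n → ℝ} (G : Good H) (sf : ∀ i, Sm (f i)) :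
    sE H (fun y => ∑ i ∈ s, f i y) = ∑ i ∈ s, sE H (f i) := by
  unfold sE
  rw [← integral_finsetSum _ fun i _ => sE_int G.sm.co G.pos (sf i).co]
  congr 1; funext x; rw [Finset.sum_mul]

lemma sE_nonneg {n : ℕ} {H f : Euc n → ℝ} (G : Good H) (h : ∀ y ≠ 0, 0 ≤ f y) : 0 ≤ sE H f := by
  unfold sE
  refine integral_nonneg fun x => ?_
  exact mul_nonneg (h x (sphere_ne x)) (inv_nonneg.2 (pow_nonneg (G.pos x (sphere_ne x)).le _))

lemma sE_zero_imp {n : ℕ} {H f : Euc n → ℝ} (G : Good H) (sf : Sm f) (h : ∀ y ≠ 0, 0 ≤ f y) (h0 : sE H f ≤ 0)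
    (x : sphere (0 : Euc n) 1) : f x = 0 := by
  have h1 : sE H f = 0 := le_antisymm h0 (sE_nonneg G h)
  unfold sE at h1
  have c : ∀ f : Euc n → ℝ, ContinuousOn f {(0 : Euc n)}ᶜ → Continuous (fun x : sphere (0 : Euc n) 1 => f x) := by
    intro f hf
    exact hf.comp_continuous continuous_subtype_val fun x => sphere_ne x
  have hc : Continuous (fun x : sphere (0 : Euc n) 1 => f x * ((H x) ^ (n + 1))⁻¹) :=
    (c f sf.co).mul (((c H G.sm.co).pow _).inv₀ fun x => (pow_pos (G.pos x (sphere_ne x)) _).ne')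
  have hnn : 0 ≤ (fun x : sphere (0 : Euc n) 1 => f x * ((H x) ^ (n + 1))⁻¹) := fun x =>
    mul_nonneg (h x (sphere_ne x)) (inv_nonneg.2 (pow_nonneg (G.pos x (sphere_ne x)).le _))
  rw [integral_eq_zero_iff_of_nonneg hnn (sE_int G.sm.co G.pos sf.co)] at h1
  have h2 := Continuous.ae_eq_iff_eq _ hc continuous_const |>.1 (h1 : _ =ᵐ[_] fun _ => (0:ℝ))
  have h3 := congrFun h2 x
  rcases mul_eq_zero.1 h3 with h | h
  · exact h
  · exact absurd h (inv_ne_zero (pow_pos (G.pos x (sphere_ne x)) _).ne')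

lemma sE_one_pos {n : ℕ} {H : Euc n → ℝ} (G : Good H) : 0 < sE H (fun _ => 1) := by
  by_contra h
  obtain ⟨x, hx⟩ := (NormedSpace.sphere_nonempty (x := (0 : Euc n)) (r := 1)).2 zero_le_one
  exact one_ne_zero (sE_zero_imp G (Sm.const 1) (fun _ _ => zero_le_one) (not_lt.1 h) ⟨x, hx⟩)

lemma gauss_mom (k : ℕ) : ∫ t in Set.Ioi (0:ℝ), t ^ k * Real.exp (-(t^2/2)) =
    (1/2:ℝ) ^ (-((k:ℝ)+1)/2) * (1/2) * Real.Gamma (((k:ℝ)+1)/2) := by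
  have h := integral_rpow_mul_exp_neg_mul_rpow (p := 2) (q := k) (b := 1/2) (by norm_num) (neg_one_lt_zero.trans_le (Nat.cast_nonneg k)) (by norm_num)
  rw [← h]
  refine setIntegral_congr_fun measurableSet_Ioi fun t ht => ?_
  simp only [Real.rpow_natCast, Real.rpow_two]
  congr 2; ring

lemma gauss_mom_pos (k : ℕ) : 0 < ∫ t in Set.Ioi (0:ℝ), t ^ k * Real.exp (-(t^2/2)) := by
  rw [gauss_mom]
  have := Real.Gamma_pos_of_pos (s := ((k:ℝ)+1)/2) (by positivity)
  positivity

lemma gauss_mom_succ (n : ℕ) : ∫ t in Set.Ioi (0:ℝ), t ^ (n+2) * Real.exp (-(t^2/2)) =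
    (n+1) * ∫ t in Set.Ioi (0:ℝ), t ^ n * Real.exp (-(t^2/2)) := by
  rw [gauss_mom, gauss_mom]
  have e : (((n+2:ℕ):ℝ)+1)/2 = ((n:ℝ)+1)/2 + 1 := by push_cast; ring
  have e' : -(((n+2:ℕ):ℝ)+1)/2 = -((n:ℝ)+1)/2 - 1 := by push_cast; ring
  rw [e, e', Real.Gamma_add_one (by positivity), Real.rpow_sub_one (by norm_num)]
  ring

lemma gint {n : ℕ} {H A : Euc n → ℝ} (g : Good H) (hA : Hg0 A) (sA : Sm A) (k : ℕ) :
    Integrable (fun y => A y * (H y ^ k * Real.exp (-(H y ^ 2 / 2)))) := by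
  obtain ⟨c, hc, hl⟩ := g.lower
  obtain ⟨C, hC, hu⟩ := g.hg.upper g.sm.co
  obtain ⟨D, hD, hd⟩ := hA.bdd sA.co
  have h := weight_int (n+1) (Nat.succ_ne_zero n) (fun y => H y ^ 2 / 2) (fun y => A y * H y ^ k) (c^2/2) (by positivity)
    (by have := g.contH; fun_prop) (fun x => by
      have h1 := hl x
      have : (c * ‖x‖)^2 ≤ H x ^2 := by gcongr
      calc _ = (c*‖x‖)^2/2 := by ring
        _ ≤ _ := by linarith) ((meas_of_co sA.co).mul (g.contH.measurable.pow_const k)) ((D + |A 0|) * C^k) k (fun x => by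
      rw [abs_mul, abs_pow]
      have h1 : |A x| ≤ D + |A 0| := by
        by_cases hx : x = 0
        · rw [hx]; linarith
        · have := hd x hx
          linarith [abs_nonneg (A 0)]
      have h2 : |H x|^k ≤ C^k * (1 + ‖x‖)^k := by
        rw [← mul_pow]
        have := hu x
        gcongr
        nlinarith [norm_nonneg x]
      rw [mul_assoc]
      exact mul_le_mul h1 h2 (by positivity) (by positivity))
  refine h.congr (Filter.Eventually.of_forall fun y => ?_)
  simp only; ring

lemma polar_k {n : ℕ} {H A : Euc n → ℝ} (g : Good H) (hA : Hg0 A) (sA : Sm A) (k : ℕ) :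
    ∫ y, A y * (H y ^ k * Real.exp (-(H y ^ 2 / 2))) = sE H A * ∫ t in Set.Ioi (0:ℝ), t ^ (n + k) * Real.exp (-(t^2/2)) := by
  rw [polar g.hg g.pos hA (fun t => t ^ k * Real.exp (-(t^2/2))) (gint g hA sA k)]
  congr 1
  refine setIntegral_congr_fun measurableSet_Ioi fun t _ => ?_
  ring

lemma ae_ne {n : ℕ} : ∀ᵐ y : Euc n, y ≠ 0 :=
  compl_mem_ae_iff.mpr (measure_singleton (μ := (volume : Measure (Euc n))) 0)

lemma BLs {n : ℕ} {H G : Euc n → ℝ} (g : Good H) (hG : Hg1 G) (sG : Sm G) :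
    (n+1) * sE H (fun y => (G y / H y)^2) - n * ((sE H (fun y => G y / H y))^2 / sE H (fun _ => 1)) ≤ sE H (Nf H G) := by
  have p1 := sE_one_pos g
  set E1 := sE H (fun _ => 1) with hE1
  set f : Euc n → ℝ := fun y => G y / H y with hf
  have Hne : ∀ y ≠ 0, H y ≠ 0 := fun y hy => (g.pos y hy).ne'
  have sf : Sm f := sG.div g.sm Hne
  have hgf : Hg0 f := fun c hc y => by
    simp only [hf]; rw [hG c hc, g.hg c hc, mul_div_mul_left _ _ hc.ne']
  set c := sE H f / E1 with hc
  set F : Euc n → ℝ := fun y => G y - c * H y with hFd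
  have sF : Sm F := sG.sub ((Sm.const c).mul g.sm)
  have hF : Hg1 F := fun a ha y => by simp only [hFd]; rw [hG a ha, g.hg a ha]; ring
  set A : Euc n → ℝ := fun y => f y - c with hA
  have sA : Sm A := sf.sub (Sm.const c)
  have hgA : Hg0 A := fun a ha y => by simp only [hA]; rw [hgf a ha]
  have FA : ∀ y ≠ 0, F y = A y * H y := fun y hy => by
    have := Hne y hy
    simp only [hFd, hA, hf]; field_simp
  have hmean : ∫ y, F y * Real.exp (-(H y ^ 2 / 2)) = 0 := by
    have e : ∫ y, F y * Real.exp (-(H y ^ 2 / 2)) = ∫ y, A y * (H y ^ 1 * Real.exp (-(H y ^ 2 / 2))) := by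
      refine integral_congr_ae ?_
      filter_upwards [ae_ne] with y hy
      rw [FA y hy]; ring
    rw [e, polar_k g hgA sA 1]
    have : sE H A = 0 := by
      have e2 : sE H (fun _ => c) = c * E1 := by
        have := sE_smul (H := H) (f := fun _ => 1) c
        simpa using this
      rw [hA, sE_sub g sf (Sm.const c), e2, hc]; field_simp; ring
    rw [this, zero_mul]
  have h := g.BL hF sF hmean
  have e1 : ∫ y, F y ^ 2 * Real.exp (-(H y ^ 2 / 2)) = ∫ y, A y ^ 2 * (H y ^ 2 * Real.exp (-(H y ^ 2 / 2))) := by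
    refine integral_congr_ae ?_
    filter_upwards [ae_ne] with y hy
    rw [FA y hy]; ring
  have e2 : ∫ y, Nf H F y * Real.exp (-(H y ^ 2 / 2)) = ∫ y, Nf H F y * (H y ^ 0 * Real.exp (-(H y ^ 2 / 2))) := by
    simp
  have hgA2 : Hg0 (fun y => A y ^ 2) := fun a ha y => by simp only; rw [hgA a ha]
  rw [e1, e2, polar_k g hgA2 (sA.pow 2) 2, polar_k g (Nf_hg g hF) (Nf_sm g sF) 0, gauss_mom_succ, add_zero] at h
  have mp := gauss_mom_pos n
  set I := ∫ t in Set.Ioi (0:ℝ), t ^ n * Real.exp (-(t^2/2)) with hI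
  have h' : (n+1) * sE H (fun y => A y ^ 2) ≤ sE H (Nf H F) := by
    refine le_of_mul_le_mul_right ?_ mp
    linarith
  have q : ∀ B : Euc n → ℝ, Sm B → sE H (fun y => B y - 2 * c * f y + c^2 * 1) = sE H B - 2 * c * sE H f + c^2 * E1 := by
    intro B sB
    rw [sE_add g (sB.sub ((Sm.const (2*c)).mul sf)) (Sm.const (c^2*1)), sE_sub g sB ((Sm.const (2*c)).mul sf),
      sE_smul (2*c), sE_smul (c^2)]
  have e3 : sE H (fun y => A y ^ 2) = sE H (fun y => (f y)^2) - 2 * c * sE H f + c^2 * E1 := by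
    rw [← q _ (sf.pow 2)]
    exact sE_congr fun y _ => by simp only [hA]; ring
  have e4 : sE H (Nf H F) = sE H (Nf H G) - 2 * c * sE H f + c^2 * E1 := by
    rw [← q _ (Nf_sm g sG)]
    refine sE_congr fun y hy => ?_
    have hpd : ∀ i, pd F i y = pd G i y - c * pd H i y := fun i => by
      have e : DifferentiableAt ℝ (fun y => c * H y) y := (g.sm.da hy).const_mul c
      rw [hFd, pd_sub (sG.da hy) e, pd_mul (differentiableAt_const c) (g.sm.da hy), pd_const]
      ring
    have k1 : ∑ i, ∑ j, Pm H y i j * pd G i y * pd H j y = f y := by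
      have : ∀ i, ∑ j, Pm H y i j * pd G i y * pd H j y = (y i * pd G i y) / H y := fun i => by
        have := g.PX hy i
        calc ∑ j, Pm H y i j * pd G i y * pd H j y = pd G i y * ∑ j, Pm H y i j * pd H j y := by
              rw [Finset.mul_sum]; exact Finset.sum_congr rfl fun j _ => by ring
          _ = _ := by rw [this]; ring
      rw [Finset.sum_congr rfl fun i _ => this i, ← Finset.sum_div, euler1 hG sG hy]
    have k2 : ∑ i, ∑ j, Pm H y i j * pd H i y * pd G j y = f y := by
      rw [← k1, Finset.sum_comm]
      refine Finset.sum_congr rfl fun i _ => Finset.sum_congr rfl fun j _ => ?_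
      rw [g.P_symm hy]; ring
    have k3 : ∑ i, ∑ j, Pm H y i j * pd H i y * pd H j y = 1 := by
      have : ∀ i, ∑ j, Pm H y i j * pd H i y * pd H j y = (y i * pd H i y) / H y := fun i => by
        have := g.PX hy i
        calc ∑ j, Pm H y i j * pd H i y * pd H j y = pd H i y * ∑ j, Pm H y i j * pd H j y := by
              rw [Finset.mul_sum]; exact Finset.sum_congr rfl fun j _ => by ring
          _ = _ := by rw [this]; ring
      rw [Finset.sum_congr rfl fun i _ => this i, ← Finset.sum_div, g.euler hy, div_self (Hne y hy)]
    have : Nf H F y = Nf H G y - c * (∑ i, ∑ j, Pm H y i j * pd G i y * pd H j y) - c * (∑ i, ∑ j, Pm H y i j * pd H i y * pd G j y)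
        + c^2 * ∑ i, ∑ j, Pm H y i j * pd H i y * pd H j y := by
      simp only [Nf, hpd, Finset.mul_sum, ← Finset.sum_sub_distrib, ← Finset.sum_add_distrib]
      exact Finset.sum_congr rfl fun i _ => Finset.sum_congr rfl fun j _ => by ring
    rw [this, k1, k2, k3]; ring
  rw [e3, e4] at h'
  have e5 : sE H f = c * E1 := by rw [hc]; field_simp
  have e6 : (sE H f)^2 / E1 = c^2 * E1 := by rw [e5]; field_simp
  rw [e6]
  rw [e5] at h'
  linarith

/-! Part 11: pointwise identities -/

def rho {n : ℕ} (H : Euc n → ℝ) (y : Euc n) : ℝ := ∑ j, pd H j y ^ 2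

def phi {n : ℕ} (H : Euc n → ℝ) (b : ℝ) (y : Euc n) : ℝ := H y ^ b * (‖y‖ ^ 2) ^ (-b/2)

lemma nsq_pos {n : ℕ} {y : Euc n} (hy : y ≠ 0) : 0 < ‖y‖ ^ 2 := by
  have := norm_pos_iff.2 hy
  positivity

lemma nsq_eq {n : ℕ} (y : Euc n) : ‖y‖ ^ 2 = ∑ i, y i ^ 2 := by
  rw [EuclideanSpace.norm_sq_eq]; simp

namespace Good

variable {n : ℕ} {H : Euc n → ℝ}

lemma rho_sm (g : Good H) : Sm (rho H) := Sm.sum fun i _ => (g.smX i).pow 2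

lemma rho_hg (g : Good H) : Hg0 (rho H) := fun c hc y => by
  simp only [rho, g.hg.pd _ c hc]

lemma rho_pos (g : Good H) {y : Euc n} (hy : y ≠ 0) : 0 < rho H y := by
  have h0 : 0 ≤ rho H y := Finset.sum_nonneg fun i _ => sq_nonneg _
  refine h0.lt_of_ne fun h => ?_
  have h1 : ∀ i, pd H i y = 0 := fun i => by
    have := (Finset.sum_eq_zero_iff_of_nonneg (fun i _ => sq_nonneg (pd H i y))).1 h.symm i (Finset.mem_univ i)
    exact pow_eq_zero_iff (by norm_num) |>.1 this
  have := g.euler hy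
  simp only [h1, mul_zero, Finset.sum_const_zero] at this
  exact (g.pos y hy).ne this

lemma phi_pos (g : Good H) (b : ℝ) {y : Euc n} (hy : y ≠ 0) : 0 < phi H b y :=
  mul_pos (Real.rpow_pos_of_pos (g.pos y hy) _) (Real.rpow_pos_of_pos (nsq_pos hy) _)

lemma phi_sm (g : Good H) (b : ℝ) : Sm (phi H b) :=
  (g.sm.rpow g.pos b).mul (Sm.normsq.rpow (fun y hy => nsq_pos hy) _)

lemma H_nonneg (g : Good H) (y : Euc n) : 0 ≤ H y := by
  by_cases hy : y = 0
  · rw [hy, g.H0]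
  · exact (g.pos y hy).le

lemma phi_hg (g : Good H) (b : ℝ) : Hg0 (phi H b) := fun c hc y => by
  have e : (c^2) ^ (-b/2) = c ^ (-b) := by
    rw [← Real.rpow_natCast, ← Real.rpow_mul hc.le]; congr 1; push_cast; ring
  have e2 : c ^ b * c ^ (-b) = 1 := by rw [← Real.rpow_add hc]; simp
  simp only [phi]
  rw [g.hg c hc, norm_smul, Real.norm_of_nonneg hc.le, mul_pow, Real.mul_rpow hc.le (g.H_nonneg y),
    Real.mul_rpow (sq_nonneg c) (sq_nonneg _), e]
  linear_combination (H y ^ b * (‖y‖^2) ^ (-b/2)) * e2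

lemma pd_rho (g : Good H) {y : Euc n} (hy : y ≠ 0) (i) :
    H y * pd (rho H) i y = 2 * ((∑ j, Mm H y i j * pd H j y) - rho H y * pd H i y) := by
  have e1 : pd (rho H) i y = ∑ j, 2 * (pd H j y * pd (pd H j) i y) := by
    have : rho H = fun y => ∑ j, pd H j y * pd H j y := by funext z; simp [rho, sq]
    rw [this, pd_sum fun j _ => ((g.smX j).mul (g.smX j)).da hy]
    exact Finset.sum_congr rfl fun j _ => by rw [pd_mul ((g.smX j).da hy) ((g.smX j).da hy)]; ring
  rw [e1, rho, Finset.sum_mul, ← Finset.sum_sub_distrib, Finset.mul_sum, Finset.mul_sum]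
  exact Finset.sum_congr rfl fun j _ => by simp only [Mm, Matrix.of_apply]; ring

lemma P_rho (g : Good H) {y : Euc n} (hy : y ≠ 0) (k) :
    ∑ i, Pm H y i k * pd (rho H) i y = 2 / H y * (pd H k y - rho H y * y k / H y) := by
  have hH := (g.pos y hy).ne'
  have e : ∀ i, Pm H y i k * pd (rho H) i y = 2 / H y * (Pm H y k i * (∑ j, Mm H y i j * pd H j y) - rho H y * (Pm H y k i * pd H i y)) := by
    intro i
    rw [g.P_symm hy i k]
    have := g.pd_rho hy i
    have h2 : pd (rho H) i y = 2 / H y * ((∑ j, Mm H y i j * pd H j y) - rho H y * pd H i y) := by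
      field_simp; linarith
    rw [h2]; ring
  rw [Finset.sum_congr rfl fun i _ => e i, ← Finset.mul_sum, Finset.sum_sub_distrib, ← Finset.mul_sum, g.PX hy]
  have e3 : ∑ i, Pm H y k i * ∑ j, Mm H y i j * pd H j y = pd H k y := by
    have : (Pm H y *ᵥ (Mm H y *ᵥ fun j => pd H j y)) k = pd H k y := by
      rw [Matrix.mulVec_mulVec, g.PM hy, Matrix.one_mulVec]
    simpa [Matrix.mulVec, dotProduct] using this
  rw [e3]; ring

lemma pd_phi (g : Good H) (b : ℝ) {y : Euc n} (hy : y ≠ 0) (i) :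
    pd (phi H b) i y = b * phi H b y * (pd H i y / H y - y i / ‖y‖^2) := by
  have hn : DifferentiableAt ℝ (fun y : Euc n => ‖y‖^2) y := Sm.normsq.da hy
  have s1 := (g.sm.rpow g.pos b).da hy
  have s2 := ((Sm.normsq (n := n)).rpow (fun y hy => nsq_pos hy) (-b/2)).da hy
  have e : phi H b = fun y => H y ^ b * (‖y‖ ^ 2) ^ (-b/2) := rfl
  rw [e, pd_mul s1 s2, pd_rpow (g.sm.da hy) (g.pos y hy), pd_rpow hn (nsq_pos hy), pd_normsq]
  ring

/-- `⟨P y, y⟩` defect -/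
def D0 (H : Euc n → ℝ) (y : Euc n) : ℝ := (∑ i, ∑ j, Pm H y i j * y i * y j) / ‖y‖^2 - ‖y‖^2 / H y ^2

lemma Pv (g : Good H) {y : Euc n} (hy : y ≠ 0) (i) :
    ∑ j, Pm H y i j * (pd H j y / H y - y j / ‖y‖^2) = y i / H y ^2 - (∑ j, Pm H y i j * y j) / ‖y‖^2 := by
  have : ∀ j, Pm H y i j * (pd H j y / H y - y j / ‖y‖^2) = (Pm H y i j * pd H j y) / H y - (Pm H y i j * y j) / ‖y‖^2 :=
    fun j => by ring
  rw [Finset.sum_congr rfl fun j _ => this j, Finset.sum_sub_distrib, ← Finset.sum_div, ← Finset.sum_div, g.PX hy]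
  rw [div_div, sq (H y)]

lemma Pvy (g : Good H) {y : Euc n} (hy : y ≠ 0) :
    ∑ i, ∑ j, Pm H y i j * (pd H j y / H y - y j / ‖y‖^2) * y i = - D0 H y := by
  have : ∀ i, ∑ j, Pm H y i j * (pd H j y / H y - y j / ‖y‖^2) * y i =
      y i ^2 / H y ^2 - (∑ j, Pm H y i j * y i * y j) / ‖y‖^2 := fun i => by
    rw [← Finset.sum_mul, g.Pv hy, sub_mul, div_mul_eq_mul_div, div_mul_eq_mul_div, Finset.sum_mul, ← sq]
    congr 2
    exact Finset.sum_congr rfl fun j _ => by ring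
  rw [Finset.sum_congr rfl fun i _ => this i, Finset.sum_sub_distrib, ← Finset.sum_div, ← Finset.sum_div, ← nsq_eq, D0]
  ring

lemma yv (g : Good H) {y : Euc n} (hy : y ≠ 0) : ∑ i, y i * (pd H i y / H y - y i / ‖y‖^2) = 0 := by
  have : ∀ i, y i * (pd H i y / H y - y i / ‖y‖^2) = (y i * pd H i y) / H y - (y i^2) / ‖y‖^2 :=
    fun j => by ring
  rw [Finset.sum_congr rfl fun j _ => this j, Finset.sum_sub_distrib, ← Finset.sum_div, ← Finset.sum_div, g.euler hy, ← nsq_eq,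
    div_self (g.pos y hy).ne', div_self (nsq_pos hy).ne', sub_self]

lemma Pvv (g : Good H) {y : Euc n} (hy : y ≠ 0) :
    ‖y‖^2 * (∑ i, ∑ j, Pm H y i j * (pd H i y / H y - y i / ‖y‖^2) * (pd H j y / H y - y j / ‖y‖^2)) = D0 H y := by
  set v : Fin (n+1) → ℝ := fun i => pd H i y / H y - y i / ‖y‖^2 with hv
  have h1 : ∀ i, ∑ j, Pm H y i j * v i * v j = v i * (y i / H y ^2) - (∑ j, Pm H y i j * y j * v i) / ‖y‖^2 := fun i => by
    have := g.Pv hy i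
    calc ∑ j, Pm H y i j * v i * v j = v i * ∑ j, Pm H y i j * v j := by
          rw [Finset.mul_sum]; exact Finset.sum_congr rfl fun j _ => by ring
      _ = _ := by rw [this, ← Finset.sum_mul]; ring
  change ‖y‖^2 * (∑ i, ∑ j, Pm H y i j * v i * v j) = D0 H y
  rw [Finset.sum_congr rfl fun i _ => h1 i, Finset.sum_sub_distrib, ← Finset.sum_div]
  have h2 : ∑ i, v i * (y i / H y ^2) = 0 := by
    have := g.yv hy
    calc _ = (∑ i, y i * v i) / H y^2 := by
          rw [Finset.sum_div]; exact Finset.sum_congr rfl fun j _ => by ring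
      _ = 0 := by rw [this, zero_div]
  have h3 : ∑ i, ∑ j, Pm H y i j * y j * v i = - D0 H y := by
    rw [← g.Pvy hy, Finset.sum_comm]
    refine Finset.sum_congr rfl fun i _ => Finset.sum_congr rfl fun j _ => ?_
    rw [g.P_symm hy]; ring
  rw [h2, h3]
  have := (nsq_pos hy).ne'
  field_simp; ring

lemma D0_nonneg (g : Good H) {y : Euc n} (hy : y ≠ 0) : 0 ≤ D0 H y := by
  rw [← g.Pvv hy]
  refine mul_nonneg (sq_nonneg _) ?_
  have := sq_compl (g.pdf y hy) 0 (fun i => pd H i y / H y - y i / ‖y‖^2)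
  simpa [Pm] using this

end Good

/-! Part 12: integral inequality -/

namespace Good

variable {n : ℕ} {H : Euc n → ℝ}

lemma pd_G (g : Good H) (b : ℝ) {y : Euc n} (hy : y ≠ 0) (i k) :
    pd (fun z => phi H b z * z i) k y = phi H b y * (b * (pd H k y / H y - y k / ‖y‖^2) * y i + if k = i then 1 else 0) := by
  rw [pd_mul ((g.phi_sm b).da hy) ((Sm.coord i).da hy), g.pd_phi b hy, pd_coord]
  ring

lemma Nf_G (g : Good H) (b : ℝ) {y : Euc n} (hy : y ≠ 0) :
    ∑ i, Nf H (fun z => phi H b z * z i) y = phi H b y ^2 * (b^2 * D0 H y - 2 * b * D0 H y + ∑ i, Pm H y i i) := by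
  set v : Fin (n+1) → ℝ := fun i => pd H i y / H y - y i / ‖y‖^2 with hv
  have h1 : ∀ i, Nf H (fun z => phi H b z * z i) y = phi H b y ^2 * (b^2 * (y i^2 * ∑ k, ∑ l, Pm H y k l * v k * v l)
      + 2 * b * (∑ k, Pm H y i k * v k * y i) + Pm H y i i) := by
    intro i
    have e : Nf H (fun z => phi H b z * z i) y = ∑ k, ∑ l, (phi H b y ^2 * b^2 * y i^2 * (Pm H y k l * v k * v l)
      + phi H b y^2 * b * y i * (Pm H y k l * v k * (if l = i then 1 else 0))
      + phi H b y^2 * b * y i * (Pm H y k l * v l * (if k = i then 1 else 0))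
      + phi H b y^2 * (Pm H y k l * (if k = i then 1 else 0) * (if l = i then 1 else 0))) := by
      simp only [Nf, g.pd_G b hy]
      exact Finset.sum_congr rfl fun k _ => Finset.sum_congr rfl fun l _ => by simp only [hv]; ring
    rw [e]
    simp only [Finset.sum_add_distrib, ← Finset.mul_sum]
    have e1 : ∑ k, ∑ l, (Pm H y k l * v k * (if l = i then 1 else 0)) = ∑ k, Pm H y i k * v k := by
      refine Finset.sum_congr rfl fun k _ => ?_
      simp only [mul_ite, mul_one, mul_zero, Finset.sum_ite_eq', Finset.mem_univ, if_true]
      rw [g.P_symm hy]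
    have e2 : ∑ k, ∑ l, (Pm H y k l * v l * (if k = i then 1 else 0)) = ∑ k, Pm H y i k * v k := by
      rw [Finset.sum_comm]
      refine Finset.sum_congr rfl fun k _ => ?_
      simp
    have e3 : ∑ k, ∑ l, (Pm H y k l * (if k = i then 1 else 0) * (if l = i then 1 else 0)) = Pm H y i i := by
      simp
    rw [e1, e2, e3, ← Finset.sum_mul]
    ring
  rw [Finset.sum_congr rfl fun i _ => h1 i, ← Finset.mul_sum]
  congr 1
  simp only [Finset.sum_add_distrib, ← Finset.mul_sum]
  rw [← Finset.sum_mul, ← nsq_eq, g.Pvv hy, g.Pvy hy]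
  ring

lemma pd_psi (g : Good H) (a : ℝ) {f : Euc n → ℝ} (sf : Sm f) {y : Euc n} (hy : y ≠ 0) (k) :
    pd (fun z => rho H z ^ (-a/2) * f z) k y = rho H y ^ (-a/2) * (pd f k y - a/2 * f y * (pd (rho H) k y / rho H y)) := by
  rw [pd_mul ((g.rho_sm.rpow (fun y hy => g.rho_pos hy) _).da hy) (sf.da hy), pd_rpow (g.rho_sm.da hy) (g.rho_pos hy)]
  ring

lemma J_psi (g : Good H) {a b : ℝ} (hJ : ∀ y ≠ 0, Jd H y = rho H y ^ (a/2) * phi H b y) {y : Euc n} (hy : y ≠ 0) :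
    Jd H y * rho H y ^ (-a/2) = phi H b y := by
  rw [hJ y hy]
  have : rho H y ^ (a/2) * rho H y ^ (-a/2) = 1 := by
    rw [← Real.rpow_add (g.rho_pos hy)]
    rw [show a/2 + -a/2 = 0 by ring, Real.rpow_zero]
  linear_combination phi H b y * this

lemma P_psi (g : Good H) {a b : ℝ} (hJ : ∀ y ≠ 0, Jd H y = rho H y ^ (a/2) * phi H b y) {f : Euc n → ℝ} (sf : Sm f)
    {y : Euc n} (hy : y ≠ 0) (i) :
    Jd H y * ∑ k, Pm H y k i * pd (fun z => rho H z ^ (-a/2) * f z) k y =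
      phi H b y * ((∑ k, Pm H y k i * pd f k y) - a * f y / H y * (pd H i y / rho H y - y i / H y)) := by
  have hr := (g.rho_pos hy).ne'
  have hH := (g.pos y hy).ne'
  have h1 : ∀ k, Pm H y k i * pd (fun z => rho H z ^ (-a/2) * f z) k y =
      rho H y ^ (-a/2) * (Pm H y k i * pd f k y - a/2 * f y / rho H y * (Pm H y k i * pd (rho H) k y)) := fun k => by
    rw [g.pd_psi a sf hy]; ring
  rw [Finset.sum_congr rfl fun k _ => h1 k, ← Finset.mul_sum, Finset.sum_sub_distrib, ← Finset.mul_sum, g.P_rho hy,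
    ← mul_assoc, g.J_psi hJ hy]
  field_simp

lemma psi_hg (g : Good H) (a : ℝ) {f : Euc n → ℝ} (hf : Hg1 f) : Hg1 (fun z => rho H z ^ (-a/2) * f z) :=
  fun c hc y => by simp only; rw [g.rho_hg c hc, hf c hc]; ring

lemma psi_sm (g : Good H) (a : ℝ) {f : Euc n → ℝ} (sf : Sm f) : Sm (fun z => rho H z ^ (-a/2) * f z) :=
  (g.rho_sm.rpow (fun y hy => g.rho_pos hy) _).mul sf

def wv (H : Euc n → ℝ) (b : ℝ) (i : Fin (n+1)) (y : Euc n) : ℝ := phi H b y * (y i / H y - pd H i y / rho H y)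

lemma Hne (g : Good H) : ∀ y ≠ 0, H y ≠ 0 := fun y hy => (g.pos y hy).ne'
lemma rhone (g : Good H) : ∀ y ≠ 0, rho H y ≠ 0 := fun y hy => (g.rho_pos hy).ne'

lemma wv_sm (g : Good H) (b : ℝ) (i) : Sm (wv H b i) :=
  (g.phi_sm b).mul (((Sm.coord i).div g.sm g.Hne).sub ((g.smX i).div g.rho_sm g.rhone))

lemma mean_id (g : Good H) {a b : ℝ} (hJ : ∀ y ≠ 0, Jd H y = rho H y ^ (a/2) * phi H b y) (i) :
    n * sE H (fun y => phi H b y * y i / H y) = a * sE H (wv H b i) := by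
  have h := g.ibp (g.psi_hg a g.hg) (g.psi_sm a g.sm) i
  have sfi : Sm (fun y => phi H b y * y i / H y) := ((g.phi_sm b).mul (Sm.coord i)).div g.sm g.Hne
  have e1 : sE H (fun y => Jd H y * ∑ k, Pm H y k i * pd (fun z => rho H z ^ (-a/2) * H z) k y) =
      sE H (fun y => phi H b y * y i / H y) + a * sE H (wv H b i) := by
    rw [← sE_smul, ← sE_add g sfi ((Sm.const a).mul (g.wv_sm b i))]
    refine sE_congr fun y hy => ?_
    have hr := (g.rho_pos hy).ne'
    have hH := (g.pos y hy).ne'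
    rw [g.P_psi hJ g.sm hy]
    have : ∑ k, Pm H y k i * pd H k y = y i / H y := by
      rw [← g.PX hy i]
      exact Finset.sum_congr rfl fun k _ => by rw [g.P_symm hy]
    rw [this, wv]
    field_simp; ring
  have e2 : sE H (fun y => Jd H y * (rho H y ^ (-a/2) * H y * y i / H y ^ 2)) = sE H (fun y => phi H b y * y i / H y) := by
    refine sE_congr fun y hy => ?_
    have hH := (g.pos y hy).ne'
    rw [← g.J_psi hJ hy]
    field_simp
  rw [e1, e2] at h
  linarith

lemma main_ineq (g : Good H) {a b : ℝ} (hb0 : 0 ≤ b) (hb1 : b ≤ 1)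
    (hJ : ∀ y ≠ 0, Jd H y = rho H y ^ (a/2) * phi H b y) :
    a * sE H (fun y => ∑ i, wv H b i y ^ 2) ≤ n * ((∑ i, sE H (fun y => phi H b y * y i / H y) ^ 2) / sE H (fun _ => 1)) := by
  set G : Fin (n+1) → Euc n → ℝ := fun i y => phi H b y * y i with hG
  have sG : ∀ i, Sm (G i) := fun i => (g.phi_sm b).mul (Sm.coord i)
  have hgG : ∀ i, Hg1 (G i) := fun i c hc y => by
    simp only [hG]; rw [g.phi_hg b c hc]; simp; ring
  have sf : ∀ i, Sm (fun y => G i y / H y) := fun i => (sG i).div g.sm g.Hne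
  -- Brascamp-Lieb summed
  have h1 : (n+1) * sE H (fun y => ∑ i, (G i y / H y)^2) - n * ((∑ i, sE H (fun y => G i y / H y) ^ 2) / sE H (fun _ => 1))
      ≤ sE H (fun y => ∑ i, Nf H (G i) y) := by
    rw [sE_sum g fun i => (sf i).pow 2, sE_sum g fun i => Nf_sm g (sG i), Finset.mul_sum, Finset.sum_div, Finset.mul_sum,
      ← Finset.sum_sub_distrib]
    exact Finset.sum_le_sum fun i _ => BLs g (hgG i) (sG i)
  -- integration by parts summed
  have sψ : ∀ i, Sm (fun z => rho H z ^ (-a/2) * G i z) := fun i => g.psi_sm a (sG i)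
  have sI : ∀ i, Sm (fun y => Jd H y * ∑ k, Pm H y k i * pd (fun z => rho H z ^ (-a/2) * G i z) k y) := fun i =>
    g.smJ.mul (Sm.sum fun k _ => (g.smP k i).mul ((sψ i).pd k))
  have h2 : sE H (fun y => ∑ i, Jd H y * ∑ k, Pm H y k i * pd (fun z => rho H z ^ (-a/2) * G i z) k y) =
      (n+1) * sE H (fun y => ∑ i, (G i y / H y)^2) := by
    rw [sE_sum g sI, sE_sum g fun i => (sf i).pow 2, Finset.mul_sum]
    refine Finset.sum_congr rfl fun i _ => ?_
    rw [g.ibp (g.psi_hg a (hgG i)) (sψ i) i]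
    congr 1
    refine sE_congr fun y hy => ?_
    have hH := (g.pos y hy).ne'
    have := g.J_psi hJ hy
    simp only [hG]
    rw [← this]
    field_simp
  rw [← h2] at h1
  have sw : Sm (fun y => ∑ i, wv H b i y ^ 2) := Sm.sum fun i _ => (g.wv_sm b i).pow 2
  have h3 : a * sE H (fun y => ∑ i, wv H b i y ^ 2) + sE H (fun y => ∑ i, Nf H (G i) y) ≤
      sE H (fun y => ∑ i, Jd H y * ∑ k, Pm H y k i * pd (fun z => rho H z ^ (-a/2) * G i z) k y) := by
    rw [← sE_smul, ← sE_add g ((Sm.const a).mul sw) (Sm.sum fun i _ => Nf_sm g (sG i)), ← sub_nonneg,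
      ← sE_sub g (Sm.sum fun i _ => sI i) (((Sm.const a).mul sw).add (Sm.sum fun i _ => Nf_sm g (sG i)))]
    refine sE_nonneg g fun y hy => ?_
    have hr := (g.rho_pos hy).ne'
    have hH := (g.pos y hy).ne'
    have k1 : ∑ i, Nf H (G i) y = phi H b y ^2 * (b^2 * D0 H y - 2 * b * D0 H y + ∑ i, Pm H y i i) := g.Nf_G b hy
    have k2 : ∑ i, wv H b i y ^ 2 = phi H b y^2 * (‖y‖^2 / H y^2 - 1 / rho H y) := by
      have : ∀ i, wv H b i y ^2 = phi H b y^2 * (y i^2 / H y^2 - 2 * (y i * pd H i y) / (H y * rho H y) + pd H i y ^2 / rho H y^2) := fun i => by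
        rw [wv]; field_simp; ring
      rw [Finset.sum_congr rfl fun i _ => this i, ← Finset.mul_sum, Finset.sum_add_distrib, Finset.sum_sub_distrib,
        ← Finset.sum_div, ← Finset.sum_div, ← Finset.sum_div, ← Finset.mul_sum, g.euler hy, ← nsq_eq]
      change phi H b y^2 * (‖y‖^2 / H y^2 - 2 * H y / (H y * rho H y) + rho H y / rho H y^2) = _
      field_simp; ring
    have k3 : ∑ i, Jd H y * ∑ k, Pm H y k i * pd (fun z => rho H z ^ (-a/2) * G i z) k y =
        phi H b y^2 * (- b * D0 H y + (∑ i, Pm H y i i) + a * (‖y‖^2 / H y^2 - 1 / rho H y)) := by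
      have : ∀ i, Jd H y * ∑ k, Pm H y k i * pd (fun z => rho H z ^ (-a/2) * G i z) k y =
          phi H b y^2 * (b * (∑ k, Pm H y i k * (pd H k y / H y - y k / ‖y‖^2) * y i) + Pm H y i i
            + a * (y i^2 / H y^2 - (y i * pd H i y) / (H y * rho H y))) := fun i => by
        rw [g.P_psi hJ (sG i) hy]
        have e : ∑ k, Pm H y k i * pd (G i) k y = phi H b y * (b * (∑ k, Pm H y i k * (pd H k y / H y - y k / ‖y‖^2) * y i) + Pm H y i i) := by
          have e0 : ∀ k, Pm H y k i * pd (G i) k y = phi H b y * (b * (Pm H y i k * (pd H k y / H y - y k / ‖y‖^2) * y i) +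
              (if k = i then Pm H y k i else 0)) := fun k => by
            simp only [hG]
            rw [g.pd_G b hy, g.P_symm hy k i]
            split_ifs <;> ring
          rw [Finset.sum_congr rfl fun k _ => e0 k, ← Finset.mul_sum, Finset.sum_add_distrib, ← Finset.mul_sum]
          simp
        rw [e]
        generalize (∑ k, Pm H y i k * (pd H k y / H y - y k / ‖y‖^2) * y i) = S
        simp only [hG]
        field_simp
        ring
      rw [Finset.sum_congr rfl fun i _ => this i, ← Finset.mul_sum, Finset.sum_add_distrib, Finset.sum_add_distrib,
        ← Finset.mul_sum, ← Finset.mul_sum, Finset.sum_sub_distrib,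
        ← Finset.sum_div, ← Finset.sum_div, g.euler hy, ← nsq_eq, g.Pvy hy]
      field_simp
    rw [k1, k2, k3]
    have h5 := mul_nonneg (mul_nonneg (mul_nonneg hb0 (sub_nonneg.2 hb1)) (g.D0_nonneg hy)) (sq_nonneg (phi H b y))
    nlinarith
  linarith

end Good

/-! Part 13: rigidity -/

namespace Good

variable {n : ℕ} {H : Euc n → ℝ}

lemma w_const (g : Good H) (hn : 1 ≤ n) {a b : ℝ} (ha0 : 0 < a) (han : a ≤ n) (hb0 : 0 ≤ b) (hb1 : b ≤ 1)
    (hJ : ∀ y ≠ 0, Jd H y = rho H y ^ (a/2) * phi H b y) :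
    ∃ c : Fin (n+1) → ℝ, ∀ i, ∀ x : sphere (0 : Euc n) 1, wv H b i x = c i := by
  have hE := sE_one_pos g
  have h := g.main_ineq hb0 hb1 hJ
  set E1 := sE H (fun _ => 1) with hE1
  have hn0 : (0:ℝ) < n := by exact_mod_cast hn
  have hm : ∀ i, sE H (fun y => phi H b y * y i / H y) = a / n * sE H (wv H b i) := fun i => by
    have := g.mean_id hJ i
    field_simp; linarith
  simp only [hm, mul_pow, ← Finset.mul_sum] at h
  set c : Fin (n+1) → ℝ := fun i => sE H (wv H b i) / E1 with hc
  have hc' : ∀ i, sE H (wv H b i) = c i * E1 := fun i => by simp only [hc]; field_simp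
  refine ⟨c, ?_⟩
  have sw := g.wv_sm b
  have key : sE H (fun y => ∑ i, (wv H b i y - c i)^2) ≤ 0 := by
    have e : ∀ i, sE H (fun y => (wv H b i y - c i)^2) = sE H (fun y => wv H b i y ^2) - c i^2 * E1 := fun i => by
      have : sE H (fun y => (wv H b i y - c i)^2) = sE H (fun y => wv H b i y ^2 - 2 * c i * wv H b i y + c i^2 * 1) :=
        sE_congr fun y _ => by ring
      rw [this, sE_add g (((sw i).pow 2).sub ((Sm.const (2*c i)).mul (sw i))) (Sm.const (c i^2*1)),
        sE_sub g ((sw i).pow 2) ((Sm.const (2*c i)).mul (sw i)), sE_smul (2*c i), sE_smul (c i^2), hc']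
      ring
    rw [sE_sum g fun i => ((sw i).sub (Sm.const (c i))).pow 2, Finset.sum_congr rfl fun i _ => e i, Finset.sum_sub_distrib]
    rw [sE_sum g fun i => (sw i).pow 2] at h
    simp only [hc', mul_pow, ← Finset.sum_mul] at h ⊢
    set T := ∑ i, c i^2 with hT
    have hT0 : 0 ≤ T := Finset.sum_nonneg fun i _ => sq_nonneg _
    set S := ∑ i, sE H (fun y => wv H b i y ^2) with hS
    have e1 : n * ((a/n)^2 * (T * E1^2) / E1) = a * (a / n * (T * E1)) := by field_simp
    have h1 : a * S ≤ a * (a / n * (T * E1)) := by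
      rw [← e1]
      simpa [div_pow] using h
    have h2 : S ≤ a / n * (T * E1) := le_of_mul_le_mul_left h1 ha0
    have h3 : a / n * (T * E1) ≤ 1 * (T * E1) :=
      mul_le_mul_of_nonneg_right ((div_le_one hn0).2 han) (mul_nonneg hT0 hE.le)
    linarith
  intro i x
  have h0 := sE_zero_imp g (Sm.sum fun i _ => ((sw i).sub (Sm.const (c i))).pow 2)
    (fun y _ => Finset.sum_nonneg fun i _ => sq_nonneg _) key x
  have := (Finset.sum_eq_zero_iff_of_nonneg (fun i _ => sq_nonneg (wv H b i x - c i))).1 h0 i (Finset.mem_univ i)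
  have := pow_eq_zero_iff (by norm_num) |>.1 this
  linarith

lemma X_eq (g : Good H) {b : ℝ}  (h : ∃ c : Fin (n+1) → ℝ, ∀ i, ∀ x : sphere (0 : Euc n) 1, wv H b i x = c i) :
    ∀ y ≠ 0, ∀ i, pd H i y = H y * y i / ‖y‖^2 := by
  obtain ⟨c, hc⟩ := h
  have hwX : ∀ y : Euc n, y ≠ 0 → ∑ i, wv H b i y * pd H i y = 0 := by
    intro y hy
    have hr := (g.rho_pos hy).ne'
    have hH := (g.pos y hy).ne'
    have : ∀ i, wv H b i y * pd H i y = phi H b y * ((y i * pd H i y) / H y - pd H i y^2 / rho H y) := fun i => by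
      rw [wv]; ring
    rw [Finset.sum_congr rfl fun i _ => this i, ← Finset.mul_sum, Finset.sum_sub_distrib, ← Finset.sum_div, ← Finset.sum_div,
      g.euler hy]
    change phi H b y * (H y / H y - rho H y / rho H y) = 0
    rw [div_self hr, div_self hH]; ring
  have hc0 : ∀ i, c i = 0 := by
    by_contra hne
    set C : Euc n := WithLp.toLp 2 c with hC
    have hC0 : C ≠ 0 := by
      intro h0; apply hne; intro i
      have := congrArg (fun v : Euc n => v i) h0
      simpa [hC] using this
    have hCn : 0 < ‖C‖ := norm_pos_iff.2 hC0
    set x : sphere (0 : Euc n) 1 := ⟨‖C‖⁻¹ • C, by simp [norm_smul, hCn.ne']⟩ with hx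
    have h1 := hwX x (sphere_ne x)
    simp only [hc] at h1
    have h2 := g.euler (sphere_ne x)
    have h3 : ∑ i, (x : Euc n) i * pd H i x = ‖C‖⁻¹ * ∑ i, c i * pd H i x := by
      rw [Finset.mul_sum]
      refine Finset.sum_congr rfl fun i _ => ?_
      have : (x : Euc n) i = ‖C‖⁻¹ * c i := by simp [hx, hC]
      rw [this]; ring
    rw [h3, h1, mul_zero] at h2
    exact (g.pos x (sphere_ne x)).ne h2
  have hs : ∀ x : sphere (0 : Euc n) 1, ∀ i, pd H i x = H x * (x : Euc n) i := by
    intro x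
    have hy := sphere_ne x
    have hr := (g.rho_pos hy)
    have hH := (g.pos x hy)
    have h1 : ∀ i, pd H i x = rho H x / H x * (x : Euc n) i := fun i => by
      have := hc i x
      rw [hc0, wv] at this
      have := (mul_eq_zero.1 this).resolve_left (g.phi_pos b hy).ne'
      field_simp at this ⊢
      linarith
    have h2 : rho H x / H x = H x := by
      have he := g.euler hy
      have e : ∀ i, (x : Euc n) i * pd H i x = rho H x / H x * ((x : Euc n) i)^2 := fun i => by rw [h1]; ring
      rw [Finset.sum_congr rfl fun i _ => e i, ← Finset.mul_sum, ← nsq_eq] at he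
      have : ‖(x : Euc n)‖ = 1 := by simp
      rw [this] at he
      linarith
    intro i
    rw [h1, h2]
  intro y hy i
  have hyp : 0 < ‖y‖ := norm_pos_iff.2 hy
  have := hs ⟨‖y‖⁻¹ • y, by simp [norm_smul, hyp.ne']⟩ i
  simp only at this
  rw [g.hg.pd i _ (inv_pos.2 hyp), g.hg _ (inv_pos.2 hyp)] at this
  rw [this]
  simp only [PiLp.smul_apply, smul_eq_mul]
  field_simp

lemma is_norm (g : Good H) (hn : 1 ≤ n) (h : ∀ y ≠ 0, ∀ i, pd H i y = H y * y i / ‖y‖^2) :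
    ∃ c, 0 < c ∧ ∀ y, H y = c * ‖y‖ := by
  set q : Euc n → ℝ := fun y => H y ^2 * (‖y‖^2)⁻¹ with hq
  have sinv : Sm (fun y : Euc n => (‖y‖^2)⁻¹) := Sm.normsq.inv fun y hy => (nsq_pos hy).ne'
  have sq' : Sm q := (g.sm.pow 2).mul sinv
  have hpd : ∀ y ≠ 0, ∀ i, pd q i y = 0 := by
    intro y hy i
    have hny := (nsq_pos hy).ne'
    have e : q = fun y => (H y * H y) * (‖y‖^2)⁻¹ := by funext z; simp [hq, sq]
    have hn : DifferentiableAt ℝ (fun y : Euc n => ‖y‖^2) y := Sm.normsq.da hy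
    rw [e, pd_mul ((g.sm.mul g.sm).da hy) (sinv.da hy), pd_mul (g.sm.da hy) (g.sm.da hy),
      pd_comp hn (hasDerivAt_inv hny), pd_normsq, h y hy]
    have : ‖y‖ ≠ 0 := by simpa using hy
    field_simp; ring
  have hfd : ∀ y : Euc n, y ≠ 0 → fderiv ℝ q y = 0 := by
    intro y hy
    ext z
    rw [fderiv_eq_sum]; simp [hpd y hy]
  have hpc : IsPreconnected ({(0 : Euc n)}ᶜ) := by
    refine (isConnected_compl_singleton_of_one_lt_rank ?_ 0).isPreconnected
    rw [← Module.finrank_eq_rank]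
    simp
    omega
  obtain ⟨e, he⟩ : ∃ e : Euc n, e ≠ 0 := exists_ne 0
  have hconst : ∀ y : Euc n, y ≠ 0 → q y = q e := fun y hy =>
    isOpen_punct.is_const_of_fderiv_eq_zero hpc (fun z hz => (sq'.da hz).differentiableWithinAt) (fun z hz => hfd z hz) hy he
  have hqe : 0 < q e := mul_pos (pow_pos (g.pos e he) 2) (inv_pos.2 (nsq_pos he))
  refine ⟨Real.sqrt (q e), Real.sqrt_pos.2 hqe, fun y => ?_⟩
  by_cases hy : y = 0
  · rw [hy, g.H0]; simp
  · have hny := (nsq_pos hy).ne'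
    rw [← hconst y hy]
    simp only [hq]
    rw [Real.sqrt_mul (sq_nonneg _), Real.sqrt_inv, Real.sqrt_sq (g.H_nonneg y), Real.sqrt_sq (norm_nonneg y)]
    have : ‖y‖ ≠ 0 := by simpa using hy
    field_simp

lemma norm_one (g : Good H) {a b c : ℝ} (hc : 0 < c) (hab : a + b < 2 * (n+1)) (h : ∀ y, H y = c * ‖y‖)
    (h' : ∀ y ≠ 0, ∀ i, pd H i y = H y * y i / ‖y‖^2)
    (hJ : ∀ y ≠ 0, Jd H y = rho H y ^ (a/2) * phi H b y) : c = 1 := by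
  obtain ⟨y, hy⟩ : ∃ e : Euc n, e ≠ 0 := exists_ne 0
  have hyp : 0 < ‖y‖ := norm_pos_iff.2 hy
  have hX : ∀ z : Euc n, z ≠ 0 → ∀ j, H z * pd H j z = c^2 * z j := fun z hz j => by
    have : ‖z‖ ≠ 0 := by simpa using hz
    rw [h' z hz, h]; field_simp
  have hM : Mm H y = c^2 • (1 : Matrix (Fin (n+1)) (Fin (n+1)) ℝ) := by
    ext i j
    rw [← g.M_eq hy, pd_congr (g := fun z => c^2 * z j) (fun z hz => hX z hz j) i hy,
      pd_mul (differentiableAt_const _) ((Sm.coord j).da hy), pd_const, pd_coord]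
    simp [Matrix.one_apply]
  have hJ1 : Jd H y = c ^ (2 * ((n:ℝ)+1)) := by
    rw [Jd, hM, Matrix.det_smul, Matrix.det_one, mul_one, Fintype.card_fin, ← pow_mul, ← Real.rpow_natCast]
    push_cast; rfl
  have hrho : rho H y = c^2 := by
    have : ∀ i, pd H i y ^2 = c^2 / ‖y‖^2 * y i^2 := fun i => by
      rw [h' y hy, h]; field_simp
    rw [rho, Finset.sum_congr rfl fun i _ => this i, ← Finset.mul_sum, ← nsq_eq]; field_simp
  have hphi : phi H b y = c ^ b := by
    rw [phi, h, Real.mul_rpow hc.le hyp.le]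
    have e : (‖y‖^2) ^ (-b/2) = ‖y‖ ^ (-b) := by
      rw [← Real.rpow_natCast, ← Real.rpow_mul hyp.le]; congr 1; push_cast; ring
    have e2 : ‖y‖ ^ b * ‖y‖ ^ (-b) = 1 := by rw [← Real.rpow_add hyp]; simp
    rw [e, mul_assoc, e2, mul_one]
  have e3 : (c^2) ^ (a/2) = c ^ a := by
    rw [← Real.rpow_natCast, ← Real.rpow_mul hc.le]; congr 1; push_cast; ring
  have h3 := hJ y hy
  rw [hJ1, hrho, hphi, e3, ← Real.rpow_add hc] at h3
  have h4 := congrArg Real.log h3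
  rw [Real.log_rpow hc, Real.log_rpow hc] at h4
  have h5 : Real.log c = 0 := by
    have : (2 * ((n:ℝ)+1) - (a+b)) * Real.log c = 0 := by linarith
    exact (mul_eq_zero.1 this).resolve_left (by linarith)
  rw [← Real.exp_log hc, h5, Real.exp_zero]

theorem rigidity (g : Good H) (hn : 1 ≤ n) {a b : ℝ} (ha0 : 0 < a) (han : a ≤ n) (hb0 : 0 ≤ b) (hb1 : b ≤ 1)
    (hJ : ∀ y ≠ 0, Jd H y = rho H y ^ (a/2) * phi H b y) : ∀ y, H y = ‖y‖ := by
  have hX := g.X_eq (g.w_const hn ha0 han hb0 hb1 hJ)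
  obtain ⟨c, hc, hh⟩ := g.is_norm hn hX
  have hn0 : (0:ℝ) ≤ n := Nat.cast_nonneg n
  have := g.norm_one hc (by linarith) hh hX hJ
  intro y
  rw [hh, this, one_mul]

end Good

/-! Part 14: from the statement to `Good` -/

lemma conj_matrix {m : ℕ} (B : Matrix (Fin m) (Fin m) ℝ) (x X : Fin m → ℝ) (h : ℝ) (hh : h ≠ 0)
    (h1 : B *ᵥ x = h • x) (h2 : x ᵥ* B = h • x) (h3 : x ⬝ᵥ x = 1) (h4 : X ⬝ᵥ x = h) :
    ∃ E : Matrix (Fin m) (Fin m) ℝ, E.det = 1 ∧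
      Matrix.of (fun i j => X i * X j + h * (B i j - h * (x i * x j))) = Eᴴ * (h • B) * E := by
  set v : Fin m → ℝ := h⁻¹ • X - x with hv
  have hX : ∀ i, X i = h * (v i + x i) := fun i => by
    simp only [hv, Pi.sub_apply, Pi.smul_apply, smul_eq_mul]; field_simp; ring
  have hvx : v ⬝ᵥ x = 0 := by
    rw [hv, sub_dotProduct, smul_dotProduct, h3, h4, smul_eq_mul, inv_mul_cancel₀ hh, sub_self]
  refine ⟨1 + vecMulVec x v, ?_, ?_⟩
  · rw [Matrix.vecMulVec_eq Unit, Matrix.det_one_add_replicateCol_mul_replicateRow, hvx, add_zero]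
  · have e : (1 + vecMulVec x v)ᴴ = 1 + vecMulVec v x := by
      rw [Matrix.conjTranspose_eq_transpose_of_trivial, Matrix.transpose_add, Matrix.transpose_one,
        Matrix.transpose_vecMulVec]
    have e2 : B * (1 + vecMulVec x v) = B + h • vecMulVec x v := by
      rw [Matrix.mul_add, Matrix.mul_one, Matrix.mul_vecMulVec, h1, Matrix.smul_vecMulVec]
    have e3 : vecMulVec v x * B = h • vecMulVec v x := by
      rw [Matrix.vecMulVec_mul, h2, Matrix.vecMulVec_smul]
    have e4 : vecMulVec v x * vecMulVec x v = vecMulVec v v := by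
      rw [Matrix.vecMulVec_mul_vecMulVec, h3]; simp
    rw [e, Matrix.mul_assoc, Matrix.smul_mul, e2, Matrix.mul_smul, Matrix.add_mul, Matrix.one_mul,
      Matrix.mul_add, e3, Matrix.mul_smul, e4]
    ext i j
    simp only [Matrix.of_apply, Matrix.smul_apply, Matrix.add_apply, Matrix.vecMulVec_apply,
      smul_eq_mul, hX]
    ring

lemma hgMm_pre {n : ℕ} {H : Euc n → ℝ} (hg : Hg1 H) (sm : Sm H) {c : ℝ} (hc : 0 < c) {y : Euc n}
    (hy : y ≠ 0) : Mm H (c • y) = Mm H y := by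
  ext i j
  have h : Hg1 (fun z => H z * pd H j z) := by
    intro c hc y
    simp only
    rw [hg c hc, hg.pd j c hc]; ring
  have M_eq : ∀ z : Euc n, z ≠ 0 → pd (fun z => H z * pd H j z) i z = Mm H z i j := by
    intro z hz
    rw [pd_mul (sm.da hz) ((sm.pd j).da hz)]
    rfl
  rw [← M_eq _ hy, ← M_eq _ (smul_ne_zero hc.ne' hy)]
  exact h.pd i c hc y

lemma Mm_conj {n : ℕ} {H : Euc n → ℝ} (hg : Hg1 H) (sm : Sm H) {x : Euc n} (hx : ‖x‖ = 1)
    (hp : 0 < H x) : ∃ E : Matrix (Fin (n+1)) (Fin (n+1)) ℝ, E.det = 1 ∧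
      Mm H x = Eᴴ * (H x • bmat n H x) * E := by
  have hx0 : x ≠ 0 := by rintro rfl; simp at hx
  have h3 : ∑ i, x i * x i = 1 := by
    have := nsq_eq x
    rw [hx] at this
    simp only [← pow_two]; linarith
  have hB : ∀ i j, bmat n H x i j = pd (pd H j) i x + H x * (x i * x j) := fun i j => rfl
  have E0 : ∀ j, ∑ i, x i * pd (pd H j) i x = 0 := fun j => euler0 (hg.pd j) (sm.pd j) hx0
  obtain ⟨E, hE, h⟩ := conj_matrix (bmat n H x) (fun i => x i) (fun i => pd H i x) (H x) hp.ne'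
    (by
      ext i
      simp only [Matrix.mulVec, dotProduct, hB, Pi.smul_apply, smul_eq_mul]
      have : ∀ j, (pd (pd H j) i x + H x * (x i * x j)) * x j
        = x j * pd (pd H i) j x + H x * x i * (x j * x j) := fun j => by
        rw [pd_symm sm hx0 i j]; ring
      rw [Finset.sum_congr rfl fun j _ => this j, Finset.sum_add_distrib, E0, ← Finset.mul_sum, h3]
      ring)
    (by
      ext j
      simp only [Matrix.vecMul, dotProduct, hB, Pi.smul_apply, smul_eq_mul]
      have : ∀ i, x i * (pd (pd H j) i x + H x * (x i * x j))
        = x i * pd (pd H j) i x + H x * x j * (x i * x i) := fun i => by ring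
      rw [Finset.sum_congr rfl fun j _ => this j, Finset.sum_add_distrib, E0, ← Finset.mul_sum, h3]
      ring)
    h3
    (by
      have := euler1 hg sm hx0
      simp only [dotProduct]
      rw [← this]
      exact Finset.sum_congr rfl fun i _ => mul_comm _ _)
  refine ⟨E, hE, ?_⟩
  rw [← h]
  ext i j
  simp only [Mm, Matrix.of_apply, hB]
  ring

lemma Good.mk_pre {n : ℕ} {H : Euc n → ℝ} (hg : Hg1 H) (sm : Sm H)
    (hpos : ∀ x ∈ sphere (0 : Euc n) 1, 0 < H x)
    (hposdef : ∀ x ∈ sphere (0 : Euc n) 1, (bmat n H x).PosDef) : Good H := by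
  have key : ∀ y : Euc n, y ≠ 0 → ‖‖y‖⁻¹ • y‖ = 1 := fun y hy => by
    rw [norm_smul, norm_inv, norm_norm, inv_mul_cancel₀ (norm_ne_zero_iff.2 hy)]
  have ip : ∀ y : Euc n, y ≠ 0 → 0 < ‖y‖⁻¹ := fun y hy => inv_pos.2 (norm_pos_iff.2 hy)
  refine ⟨hg, sm, fun y hy => ?_, fun y hy => ?_⟩
  · have := hpos (‖y‖⁻¹ • y) (by simpa using key y hy)
    rw [hg _ (ip y hy)] at this
    exact pos_of_mul_pos_right this (ip y hy).le
  · rw [← hgMm_pre hg sm (ip y hy) hy]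
    have hm : ‖y‖⁻¹ • y ∈ sphere (0 : Euc n) 1 := by simpa using key y hy
    obtain ⟨E, hE, h⟩ := Mm_conj hg sm (key y hy) (hpos _ hm)
    rw [h]
    refine ((hposdef _ hm).smul (hpos _ hm)).conjTranspose_mul_mul_same ?_
    apply Matrix.mulVec_injective_of_isUnit
    rw [Matrix.isUnit_iff_isUnit_det, hE]; exact isUnit_one

lemma grad_nsq {n : ℕ} {H : Euc n → ℝ} (x : Euc n) : ‖gradient H x‖ ^ 2 = rho H x := by
  rw [nsq_eq, rho]
  refine Finset.sum_congr rfl fun i _ => ?_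
  have : ⟪gradient H x, EuclideanSpace.single i (1:ℝ)⟫ = pd H i x := inner_gradient_left
  rw [← this, EuclideanSpace.inner_single_right]
  simp

lemma Jd_eq_pre {n : ℕ} {H : Euc n → ℝ} (g : Good H) {p q : ℝ}
    (heq : ∀ x ∈ sphere (0 : Euc n) 1,
      H x ^ (p - 1) * ‖gradient H x‖ ^ ((n : ℝ) + 1 - q) * gaussCurv n H x = 1) :
    ∀ y ≠ 0, Jd H y = rho H y ^ (((n:ℝ)+1-q)/2) * phi H ((n:ℝ)+1+p) y := by
  have key : ∀ x : Euc n, ‖x‖ = 1 → Jd H x = rho H x ^ (((n:ℝ)+1-q)/2) * phi H ((n:ℝ)+1+p) x := by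
    intro x hx
    have hx0 : x ≠ 0 := by rintro rfl; simp at hx
    have hp := g.pos x hx0
    obtain ⟨E, hE, h⟩ := Mm_conj g.hg g.sm hx hp
    have hJ : Jd H x = H x ^ (n+1) * (bmat n H x).det := by
      rw [Jd, h, Matrix.det_mul, Matrix.det_mul, Matrix.det_conjTranspose, hE, Matrix.det_smul]
      simp
    have h1 := heq x (by simpa using hx)
    have hD : (bmat n H x).det ≠ 0 := by
      intro h0
      rw [gaussCurv, sigman, h0] at h1
      simp at h1
    have e1 : ‖gradient H x‖ ^ ((n:ℝ)+1-q) = rho H x ^ (((n:ℝ)+1-q)/2) := by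
      rw [← grad_nsq, ← Real.rpow_natCast, ← Real.rpow_mul (norm_nonneg _)]
      congr 1; push_cast; ring
    rw [e1, gaussCurv, sigman, Real.rpow_sub hp, Real.rpow_one] at h1
    have h2 : (bmat n H x).det = H x ^ p * rho H x ^ (((n:ℝ)+1-q)/2) := by
      field_simp at h1
      linarith
    have e3 : H x ^ ((n:ℝ)+1+p) = H x ^ (n+1) * H x ^ p := by
      rw [Real.rpow_add hp, ← Real.rpow_natCast]; push_cast; rfl
    rw [hJ, h2, phi, hx, e3]
    simp
    ring
  intro y hy
  have hi : 0 < ‖y‖⁻¹ := inv_pos.2 (norm_pos_iff.2 hy)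
  have := key (‖y‖⁻¹ • y) (by
    rw [norm_smul, norm_inv, norm_norm, inv_mul_cancel₀ (norm_ne_zero_iff.2 hy)])
  rwa [g.hgJ _ hi, g.rho_hg _ hi, g.phi_hg _ _ hi] at this


/-- If a smooth, closed, strictly convex hypersurface `M = ∂K` in `ℝ^{n+1}`
(`n ≥ 2`) enclosing the origin, with positive support function `h` (encoded by its
1-homogeneous extension `H`), satisfies the isotropic `L_p` dual Minkowski equation
`h^{p-1} |Dh|^{n+1-q} 𝒦 = 1` on `S^n`, with `-(n+1) ≤ p ≤ -n` and `1 ≤ q < n+1`,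
then `M` is the unit sphere. -/
theorem isotropic_Lp_dual_Minkowski_uniqueness_case2
    (n : ℕ) (hn : 2 ≤ n) (p q : ℝ)
    (H : Euc n → ℝ) (K : Set (Euc n))
    (hK : K = {y : Euc n | ∀ x : Euc n, ⟪x, y⟫ ≤ H x})
    (hhomog : ∀ c : ℝ, 0 < c → ∀ x : Euc n, H (c • x) = c * H x)
    (hconv : ConvexOn ℝ Set.univ H)
    (hsmooth : ContDiffOn ℝ (⊤ : ℕ∞) H {(0 : Euc n)}ᶜ)
    (hpos : ∀ x ∈ sphere (0 : Euc n) 1, 0 < H x)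
    (hposdef : ∀ x ∈ sphere (0 : Euc n) 1, (bmat n H x).PosDef)
    (heq : ∀ x ∈ sphere (0 : Euc n) 1,
      H x ^ (p - 1) * ‖gradient H x‖ ^ ((n : ℝ) + 1 - q) * gaussCurv n H x = 1)
    (hp1 : -((n : ℝ) + 1) ≤ p) (hp2 : p ≤ -(n : ℝ))
    (hq1 : (1 : ℝ) ≤ q) (hq2 : q < (n : ℝ) + 1) :
    frontier K = sphere (0 : Euc n) 1 := by
  have g : Good H := Good.mk_pre hhomog hsmooth hpos hposdef
  have hN : ∀ y, H y = ‖y‖ := g.rigidity (by omega) (by linarith) (by linarith) (by linarith)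
    (by linarith) (Jd_eq_pre g heq)
  have hb : K = closedBall (0 : Euc n) 1 := by
    rw [hK]
    ext y
    simp only [Set.mem_ofPred_eq, mem_closedBall, dist_zero_right, hN]
    constructor
    · intro h
      have h1 := h y
      rw [real_inner_self_eq_norm_sq] at h1
      by_contra hc
      push Not at hc
      nlinarith
    · intro h x
      refine (real_inner_le_norm x y).trans ?_
      nlinarith [norm_nonneg x]
  rw [hb, frontier_closedBall _ one_ne_zero]
end
end

section
/- Let K ⊂ ℝ^{n+1} be a smooth, strictly convex body with the origin in its interior, with support function h, Gauss curvature 𝒦, inverse Gauss map X = Dh, and centro-affine Laplacian Δ. Then, for every x ∈ S^n, ΔX + nX = h ∇̄ log(h^{n+2}/𝒦), where the identity holds componentwise for the ℝ^{n+1}-valued map X. -/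
open MeasureTheory Matrix Metric
open scoped RealInnerProductSpace

noncomputable section

open Filter Topology

lemma hasDerivAt_det_aux {m : ℕ} (M : ℝ → Matrix (Fin m) (Fin m) ℝ)
    (M' : Matrix (Fin m) (Fin m) ℝ) (t : ℝ)
    (h : ∀ j k, HasDerivAt (fun s => M s j k) (M' j k) t) (hu : IsUnit (M t).det) :
    HasDerivAt (fun s => (M s).det) ((M t).det * trace ((M t)⁻¹ * M')) t := by
  have h1 : HasDerivAt (fun s => (M s).det)
      (∑ σ : Equiv.Perm (Fin m), (Equiv.Perm.sign σ : ℤ) *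
        (∑ k, (∏ j ∈ Finset.univ.erase k, M t (σ j) j) • M' (σ k) k)) t := by
    simp only [Matrix.det_apply']
    refine HasDerivAt.fun_sum fun σ _ => ?_
    exact (HasDerivAt.fun_finsetProd fun j _ => h (σ j) j).const_mul _
  convert h1 using 1
  have h2 : (M t).det * trace ((M t)⁻¹ * M') = trace ((M t).adjugate * M') := by
    rw [Matrix.inv_def, Matrix.smul_mul, Matrix.trace_smul, smul_eq_mul, ← mul_assoc,
      Ring.mul_inverse_cancel _ hu, one_mul]
  rw [h2]
  have h3 : ∀ k, ((M t).adjugate * M') k k = ((M t).updateCol k (fun j => M' j k)).det := by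
    intro k
    rw [← Matrix.cramer_apply, Matrix.cramer_eq_adjugate_mulVec]
    rfl
  simp only [Matrix.trace, Matrix.diag_apply, h3, Matrix.det_apply']
  rw [Finset.sum_comm]
  refine Finset.sum_congr rfl fun σ _ => ?_
  rw [Finset.mul_sum]
  refine Finset.sum_congr rfl fun k _ => ?_
  congr 1
  rw [← Finset.prod_erase_mul _ _ (Finset.mem_univ k), smul_eq_mul]
  congr 1
  · refine Finset.prod_congr rfl fun j hj => ?_
    rw [Matrix.updateCol_ne (Finset.ne_of_mem_erase hj)]
  · simp

lemma gradient_coord (n : ℕ) (F : Euc n → ℝ) (x : Euc n) (i : Fin (n + 1)) :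
    gradient F x i = fderiv ℝ F x (EuclideanSpace.single i 1) := by
  have h := InnerProductSpace.toDual_symm_apply (𝕜 := ℝ) (x := (EuclideanSpace.single i 1 : Euc n))
    (y := fderiv ℝ F x)
  rw [← h, EuclideanSpace.inner_single_right]
  simp [gradient]

lemma fderiv_vec_sum (n : ℕ) (F : Euc n → ℝ) (x y : Euc n) :
    fderiv ℝ F x y = ∑ j, fderiv ℝ F x (EuclideanSpace.single j 1) * y j := by
  conv_lhs => rw [← (EuclideanSpace.basisFun (Fin (n+1)) ℝ).sum_repr y]
  simp [mul_comm]

lemma fderiv_comm_aux {n : ℕ} {F : Euc n → ℝ} {x : Euc n} (hF : ContDiffAt ℝ 2 F x) (v w : Euc n) :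
    fderiv ℝ (fun y => fderiv ℝ F y v) x w = fderiv ℝ (fun y => fderiv ℝ F y w) x v := by
  have hd : DifferentiableAt ℝ (fderiv ℝ F) x :=
    (hF.fderiv_right (m := 1) (by norm_num)).differentiableAt (by norm_num)
  have hs := hF.isSymmSndFDerivAt (by simp)
  have key : ∀ v, fderiv ℝ (fun y => fderiv ℝ F y v) x = (fderiv ℝ (fderiv ℝ F) x).flip v := by
    intro v
    rw [fderiv_clm_apply hd (differentiableAt_const v)]
    simp
  rw [key, key]
  simpa using hs w v

lemma smooth_dir {n : ℕ} {F : Euc n → ℝ} {x : Euc n} (hF : ContDiffAt ℝ (⊤ : ℕ∞) F x) (v : Euc n) :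
    ContDiffAt ℝ (⊤ : ℕ∞) (fun y => fderiv ℝ F y v) x :=
  (hF.fderiv_right (m := (⊤ : ℕ∞)) (by exact_mod_cast le_top)).clm_apply contDiffAt_const

lemma euler_aux {n : ℕ} {F : Euc n → ℝ} {x : Euc n} (hF : DifferentiableAt ℝ F x)
    (φ : ℝ → ℝ) (d : ℝ) (hφ : HasDerivAt φ d 1)
    (hh : ∀ c : ℝ, 0 < c → F (c • x) = φ c * F x) : fderiv ℝ F x x = d * F x := by
  have h1 : HasDerivAt (fun c : ℝ => F (c • x)) (fderiv ℝ F x x) 1 := by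
    have h2 : HasDerivAt (fun c : ℝ => c • x) x 1 := by
      simpa using (hasDerivAt_id (1:ℝ)).smul_const x
    have h3 : HasFDerivAt F (fderiv ℝ F x) ((1:ℝ) • x) := by simpa using hF.hasFDerivAt
    exact h3.comp_hasDerivAt (1:ℝ) h2
  have h4 : HasDerivAt (fun c : ℝ => F (c • x)) (d * F x) 1 := by
    refine (hφ.mul_const (F x)).congr_of_eventuallyEq ?_
    filter_upwards [eventually_gt_nhds (zero_lt_one' ℝ)] with c hc using hh c hc
  exact h1.unique h4

lemma dir_homog {n : ℕ} {F : Euc n → ℝ} (a : ℝ) (c : ℝ) (hc : 0 < c)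
    (hh : ∀ x, F (c • x) = a * F x) (x v : Euc n) :
    fderiv ℝ F (c • x) v = c⁻¹ * a * fderiv ℝ F x v := by
  have h1 := fderiv_comp_smul (𝕜 := ℝ) (f := F) (x := x) c
  have h2 : (fun y => F (c • y)) = fun y => a • F y := by funext y; simp [hh]
  rw [h2, show (fun y => a • F y) = a • F from rfl, fderiv_const_smul_field] at h1
  have h3 := congrArg (fun L => L v) h1
  simp only [Pi.smul_apply, _root_.smul_apply, smul_eq_mul] at h3
  rw [mul_assoc, h3]; field_simp

/-- The pure linear algebra behind the identity. -/
lemma algebra_aux {m : ℕ} (B E T : Matrix (Fin m) (Fin m) ℝ) (x p : Fin m → ℝ) (h : ℝ)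
    (i : Fin m) (hh : h ≠ 0) (hB : B = E + h • vecMulVec x x) (hsymm : Bᵀ = B)
    (hu : IsUnit B.det) (hx : x ⬝ᵥ x = 1) (hEx : E *ᵥ x = 0) (hp : p ⬝ᵥ x = h) :
    trace (B⁻¹ * (p i • B + vecMulVec p (E.col i) + vecMulVec (E.col i) p + h • T))
      = m * p i + 2 * (p i - x i * h) + h * trace (B⁻¹ * T) ∧
    trace (B⁻¹ * (x i • E + T + (p i - 3 * x i * h) • vecMulVec x x
        + h • (vecMulVec (Pi.single i 1) x + vecMulVec x (Pi.single i 1))))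
      = (m - 2) * x i + p i / h + trace (B⁻¹ * T) := by
  have hCs : (B⁻¹)ᵀ = B⁻¹ := by rw [Matrix.transpose_nonsing_inv, hsymm]
  have hCB : B⁻¹ * B = 1 := Matrix.nonsing_inv_mul _ hu
  have tv : ∀ a b : Fin m → ℝ, trace (B⁻¹ * vecMulVec a b) = (B⁻¹ *ᵥ a) ⬝ᵥ b := by
    intro a b; rw [Matrix.mul_vecMulVec, Matrix.trace_vecMulVec]
  have sy : ∀ a b : Fin m → ℝ, (B⁻¹ *ᵥ a) ⬝ᵥ b = (B⁻¹ *ᵥ b) ⬝ᵥ a := by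
    intro a b
    rw [dotProduct_comm, Matrix.dotProduct_mulVec, ← Matrix.mulVec_transpose, hCs]
  have hBx : B *ᵥ x = h • x := by
    rw [hB, Matrix.add_mulVec, hEx, Matrix.smul_mulVec, Matrix.vecMulVec_mulVec, hx]
    simp
  have hCx : B⁻¹ *ᵥ x = h⁻¹ • x := by
    have : B⁻¹ *ᵥ (B *ᵥ x) = x := by rw [Matrix.mulVec_mulVec, hCB, Matrix.one_mulVec]
    rw [hBx, Matrix.mulVec_smul] at this
    rw [← this, smul_smul, inv_mul_cancel₀ hh, one_smul]
    rw [this]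
  have hq : E.col i = B *ᵥ (Pi.single i 1) - (h * x i) • x := by
    ext j
    rw [hB]
    simp [Matrix.vecMulVec_apply]
    ring
  have hCq : B⁻¹ *ᵥ E.col i = Pi.single i 1 - x i • x := by
    rw [hq, Matrix.mulVec_sub, Matrix.mulVec_mulVec, hCB, Matrix.one_mulVec, Matrix.mulVec_smul,
      hCx, smul_smul]
    congr 2; field_simp
  have hE : E = B - h • vecMulVec x x := by rw [hB]; abel
  constructor
  · simp only [Matrix.mul_add, Matrix.mul_smul, Matrix.trace_add, Matrix.trace_smul, tv, hCB,
      Matrix.trace_one, smul_eq_mul, Fintype.card_fin]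
    rw [sy p, hCq, sub_dotProduct, smul_dotProduct, dotProduct_comm x p, hp]
    simp; ring
  · rw [hE]
    simp only [Matrix.mul_add, Matrix.mul_sub, Matrix.mul_smul, Matrix.trace_add,
      Matrix.trace_sub, Matrix.trace_smul, tv, hCB,
      Matrix.trace_one, smul_eq_mul, Fintype.card_fin]
    rw [sy (Pi.single i 1) x, hCx, smul_dotProduct, smul_dotProduct, hx]
    simp; field_simp; ring

/-- For a smooth, strictly convex body `K ⊂ ℝ^{n+1}` with the origin in its
interior, support function `h` (1-homogeneous extension `H`), Gauss curvature `𝒦`, inverse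
Gauss map `X = Dh = gradient H` and centro-affine Laplacian `Δ`, one has, componentwise on
`S^n`: `ΔX + nX = h ∇̄ log(h^{n+2}/𝒦)`. -/
theorem centro_affine_main_identity
    (n : ℕ) (hn : 2 ≤ n)
    (H : Euc n → ℝ) (K : Set (Euc n))
    (hK : K = {y : Euc n | ∀ x : Euc n, ⟪x, y⟫ ≤ H x})
    (hhomog : ∀ c : ℝ, 0 < c → ∀ x : Euc n, H (c • x) = c * H x)
    (hconv : ConvexOn ℝ Set.univ H)
    (hsmooth : ContDiffOn ℝ (⊤ : ℕ∞) H {(0 : Euc n)}ᶜ)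
    (hpos : ∀ x ∈ sphere (0 : Euc n) 1, 0 < H x)
    (hposdef : ∀ x ∈ sphere (0 : Euc n) 1, (bmat n H x).PosDef) :
    ∀ x ∈ sphere (0 : Euc n) 1, ∀ i : Fin (n + 1),
      caLap n H (fun y => gradient H y i) x + n * gradient H x i
        = H x * sphGrad n (logQ n H) x i := by
  intro x hx i
  have hxn : ‖x‖ = 1 := by simpa using hx
  have hx0 : x ≠ 0 := by rintro rfl; simp at hxn
  have hne : ∀ᶠ y in 𝓝 x, y ≠ 0 := isOpen_ne.mem_nhds hx0
  have hHs : ∀ y : Euc n, y ≠ 0 → ContDiffAt ℝ (⊤ : ℕ∞) H y := fun y hy =>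
    hsmooth.contDiffAt (isOpen_compl_singleton.mem_nhds hy)
  set e : Fin (n + 1) → Euc n := fun j => EuclideanSpace.single j 1 with he
  set G : Fin (n + 1) → Euc n → ℝ := fun j y => fderiv ℝ H y (e j) with hG
  have hGs : ∀ j y, y ≠ 0 → ContDiffAt ℝ (⊤ : ℕ∞) (G j) y := fun j y hy => smooth_dir (hHs y hy) _
  set E : Fin (n + 1) → Fin (n + 1) → Euc n → ℝ := fun j k y => fderiv ℝ (G k) y (e j) with hE
  have hEs : ∀ j k y, y ≠ 0 → ContDiffAt ℝ (⊤ : ℕ∞) (E j k) y :=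
    fun j k y hy => smooth_dir (hGs k y hy) _
  have hEe : ∀ j k y, ehess n H y j k = E j k y := fun j k y => rfl
  have two_le : (2 : WithTop ℕ∞) ≤ ((⊤ : ℕ∞) : WithTop ℕ∞) :=
    WithTop.coe_le_coe.mpr (le_top : (2 : ℕ∞) ≤ ⊤)
  have hEsymm : ∀ j k y, y ≠ 0 → E j k y = E k j y := fun j k y hy =>
    fderiv_comm_aux ((hHs y hy).of_le two_le) _ _
  have top_ne : (((⊤ : ℕ∞) : WithTop ℕ∞)) ≠ 0 := by simp
  have hHd : ∀ y, y ≠ 0 → DifferentiableAt ℝ H y := fun y hy => (hHs y hy).differentiableAt top_ne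
  have hGd : ∀ j y, y ≠ 0 → DifferentiableAt ℝ (G j) y :=
    fun j y hy => (hGs j y hy).differentiableAt top_ne
  have hEd : ∀ j k y, y ≠ 0 → DifferentiableAt ℝ (E j k) y :=
    fun j k y hy => (hEs j k y hy).differentiableAt top_ne
  -- homogeneity
  have hGh : ∀ j (c : ℝ), 0 < c → ∀ y, G j (c • y) = G j y := by
    intro j c hc y
    have := dir_homog c c hc (hhomog c hc) y (e j)
    rw [inv_mul_cancel₀ hc.ne', one_mul] at this
    exact this
  have hEh : ∀ j k (c : ℝ), 0 < c → ∀ y, E j k (c • y) = c⁻¹ * E j k y := by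
    intro j k c hc y
    have := dir_homog 1 c hc (F := G k) (by simpa using hGh k c hc) y (e j)
    rw [mul_one] at this
    exact this
  -- Euler
  have hEulH : ∑ j, G j x * x j = H x := by
    have := euler_aux (hHd x hx0) id 1 (hasDerivAt_id 1) (fun c hc => hhomog c hc x)
    rw [fderiv_vec_sum, one_mul] at this
    exact this
  have hEulG : ∀ k, ∑ j, E j k x * x j = 0 := by
    intro k
    have := euler_aux (hGd k x hx0) (fun _ => 1) 0 (hasDerivAt_const _ _)
      (fun c hc => by simpa using hGh k c hc x)
    rw [fderiv_vec_sum, zero_mul] at this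
    exact this
  have hgrad : ∀ y, gradient H y i = G i y := fun y => gradient_coord n H y i
  -- third derivatives
  set T : Matrix (Fin (n + 1)) (Fin (n + 1)) ℝ := Matrix.of fun j k => fderiv ℝ (E j k) x (e i)
    with hT
  have hTsymm : ∀ j k, fderiv ℝ (E k i) x (e j) = T j k := by
    intro j k
    have h1 : E k i =ᶠ[𝓝 x] E i k := by
      filter_upwards [hne] with y hy using hEsymm k i y hy
    rw [h1.fderiv_eq]
    exact fderiv_comm_aux ((hGs k x hx0).of_le two_le) _ _
  have hH0 : 0 < H x := hpos x hx
  set B := bmat n H x with hB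
  set Em := ehess n H x with hEm
  have hu : IsUnit B.det := isUnit_iff_ne_zero.mpr (hposdef x hx).det_pos.ne'
  have hBT : Bᵀ = B := by
    have := (hposdef x hx).isHermitian
    rwa [Matrix.IsHermitian, Matrix.conjTranspose_eq_transpose_of_trivial] at this
  have hBE : B = Em + H x • vecMulVec (fun j => x j) (fun j => x j) := by
    ext j k; simp [hB, bmat, hEm, Matrix.vecMulVec_apply]
  have hxx : (fun j => x j) ⬝ᵥ (fun j => x j) = 1 := by
    have := EuclideanSpace.real_norm_sq_eq x
    rw [hxn] at this
    simp only [dotProduct]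
    simp only [← sq]
    linarith
  have hEx : Em *ᵥ (fun j => x j) = 0 := by
    ext k
    have := hEulG k
    simp only [Matrix.mulVec, dotProduct, hEm, hEe, Pi.zero_apply]
    rw [← this]
    exact Finset.sum_congr rfl fun j _ => by rw [hEsymm k j x hx0]
  obtain ⟨a1, a2⟩ := algebra_aux B Em T (fun j => x j) (fun j => G j x) (H x) i hH0.ne' hBE hBT hu
    hxx hEx hEulH
  -- left-hand side
  have hleft : bmat n (fun y => H y * gradient H (‖y‖⁻¹ • y) i) x =
      G i x • B + vecMulVec (fun j => G j x) (Em.col i) + vecMulVec (Em.col i) (fun j => G j x)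
        + H x • T := by
    have h1 : (fun y => H y * gradient H (‖y‖⁻¹ • y) i) =ᶠ[𝓝 x] fun y => H y * G i y := by
      filter_upwards [hne] with y hy
      rw [hgrad, hGh i _ (by positivity)]
    have h2 : ∀ k, (fun y => fderiv ℝ (fun y => H y * gradient H (‖y‖⁻¹ • y) i) y (e k)) =ᶠ[𝓝 x]
        fun y => H y * E k i y + G i y * G k y := by
      intro k
      filter_upwards [hne, h1.eventuallyEq_nhds] with y hy h1y
      rw [h1y.fderiv_eq, fderiv_fun_mul (hHd y hy) (hGd i y hy)]
      simp [hE, hG]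
    ext j k
    have h3 : ehess n (fun y => H y * gradient H (‖y‖⁻¹ • y) i) x j k =
        H x * T j k + E k i x * G j x + (G i x * E j k x + G k x * E j i x) := by
      have : ehess n (fun y => H y * gradient H (‖y‖⁻¹ • y) i) x j k =
        fderiv ℝ (fun y => fderiv ℝ (fun y => H y * gradient H (‖y‖⁻¹ • y) i) y (e k)) x (e j) := rfl
      rw [this, (h2 k).fderiv_eq, fderiv_fun_add ((hHd x hx0).fun_mul (hEd k i x hx0))
        ((hGd i x hx0).fun_mul (hGd k x hx0)), fderiv_fun_mul (hHd x hx0) (hEd k i x hx0),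
        fderiv_fun_mul (hGd i x hx0) (hGd k x hx0)]
      rw [← hTsymm]
      simp [hE, hG]
    have h4 := h1.self_of_nhds
    simp only at h4
    rw [bmat, Matrix.add_apply, h3, Matrix.of_apply, h4, hBE]
    simp [Matrix.vecMulVec_apply, hEm, hEe]
    ring
  -- right-hand side
  set M : Euc n → Matrix (Fin (n + 1)) (Fin (n + 1)) ℝ := fun y => Matrix.of fun j k =>
    ‖y‖ * E j k y + H y * (‖y‖⁻¹) ^ 3 * (y j * y k) with hM
  have hMb : ∀ y, y ≠ 0 → bmat n H (‖y‖⁻¹ • y) = M y := by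
    intro y hy
    have hc : 0 < ‖y‖⁻¹ := by positivity
    ext j k
    rw [bmat, Matrix.add_apply, hEe, hEh j k _ hc, Matrix.of_apply, hhomog _ hc]
    simp [hM]
    ring
  have hsph : ∀ y : Euc n, y ≠ 0 → ‖y‖⁻¹ • y ∈ sphere (0 : Euc n) 1 := by
    intro y hy
    simp [norm_smul, hy]
  have hMx : M x = B := by
    rw [← hMb x hx0, hxn]; simp [hB]
  set W : Euc n → ℝ := fun y =>
    (n + 1) * (Real.log (H y) - Real.log ‖y‖) + Real.log (M y).det with hW
  have hHpos : ∀ y, y ≠ 0 → 0 < H y := by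
    intro y hy
    have := hpos _ (hsph y hy)
    rw [hhomog _ (by positivity)] at this
    exact pos_of_mul_pos_right this (by positivity)
  have hWeq : (fun y => logQ n H (‖y‖⁻¹ • y)) =ᶠ[𝓝 x] W := by
    filter_upwards [hne] with y hy
    have hc : 0 < ‖y‖⁻¹ := by positivity
    have hh := hHpos y hy
    have hd : 0 < (M y).det := by
      rw [← hMb y hy]; exact (hposdef _ (hsph y hy)).det_pos
    have hp : 0 < ‖y‖⁻¹ * H y := by positivity
    have : (‖y‖⁻¹ * H y) ^ (n + 2) / ((M y).det / (‖y‖⁻¹ * H y))⁻¹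
        = (‖y‖⁻¹ * H y) ^ (n + 1) * (M y).det := by
      generalize ‖y‖⁻¹ * H y = a at hp
      field_simp
      ring
    rw [logQ, gaussCurv, sigman, hMb y hy, hhomog _ hc, this, Real.log_mul (by positivity) hd.ne',
      Real.log_pow, Real.log_mul hc.ne' hh.ne', Real.log_inv]
    simp only [hW]
    push_cast
    ring
  have hnd : DifferentiableAt ℝ (fun y : Euc n => ‖y‖) x :=
    (contDiffAt_norm ℝ hx0 (n := 1)).differentiableAt (by norm_num)
  have hcoord : ∀ j, DifferentiableAt ℝ (fun y : Euc n => y j) x := fun j => by fun_prop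
  have hMd : ∀ j k, DifferentiableAt ℝ (fun y => M y j k) x := by
    intro j k
    simp only [hM, Matrix.of_apply]
    exact (hnd.mul (hEd j k x hx0)).add
      (((hHd x hx0).mul ((hnd.inv (by simp [hx0])).pow 3)).mul ((hcoord j).mul (hcoord k)))
  have hdetd : DifferentiableAt ℝ (fun y => (M y).det) x := by
    simp only [Matrix.det_apply']
    refine DifferentiableAt.fun_sum fun σ _ => ?_
    refine DifferentiableAt.const_mul ?_ _
    exact (HasFDerivAt.finsetProd fun j _ => (hMd (σ j) j).hasFDerivAt).differentiableAt
  have hdetx : (M x).det ≠ 0 := by rw [hMx]; exact hu.ne_zero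
  have hWd : DifferentiableAt ℝ W x := by
    have h1 := (hHd x hx0).log hH0.ne'
    have h2 := hnd.log (by simp [hx0])
    exact ((h1.sub h2).const_mul _).add (hdetd.log hdetx)
  -- derivatives along the line
  have line : ∀ F : Euc n → ℝ, DifferentiableAt ℝ F x →
      HasDerivAt (fun t : ℝ => F (x + t • e i)) (fderiv ℝ F x (e i)) 0 := by
    intro F hF
    have h2 : HasDerivAt (fun t : ℝ => x + t • e i) (e i) 0 := by
      simpa using ((hasDerivAt_id (0:ℝ)).smul_const (e i)).const_add x
    have h3 : HasFDerivAt F (fderiv ℝ F x) (x + (0:ℝ) • e i) := by simpa using hF.hasFDerivAt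
    exact h3.comp_hasDerivAt (0:ℝ) h2
  have hx_0 : x + (0:ℝ) • e i = x := by simp
  have dN : HasDerivAt (fun t : ℝ => ‖x + t • e i‖) (x i) 0 := by
    have h1 := line _ hnd
    have h2 : HasDerivAt (fun t : ℝ => x + t • e i) (e i) 0 := by
      simpa using ((hasDerivAt_id (0:ℝ)).smul_const (e i)).const_add x
    have h3 := h2.norm_sq
    have h4 := h1.pow 2
    have h5 := h3.unique h4
    simp [hxn, he, EuclideanSpace.inner_single_right] at h5
    have h6 : fderiv ℝ (fun y : Euc n => ‖y‖) x (e i) = x i := by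
      simp only [he]; linarith
    rwa [h6] at h1
  have dH := line H (hHd x hx0)
  have dE := fun j k => line (E j k) (hEd j k x hx0)
  have dc : ∀ j, HasDerivAt (fun t : ℝ => (x + t • e i) j) ((Pi.single i 1 : Fin (n+1) → ℝ) j) 0 := by
    intro j
    have : (fun t : ℝ => (x + t • e i) j) = fun t => x j + t * (Pi.single i 1 : Fin (n+1) → ℝ) j := by
      funext t; simp [he, Pi.single_apply]
    rw [this]
    simpa using ((hasDerivAt_id (0:ℝ)).mul_const ((Pi.single i 1 : Fin (n+1) → ℝ) j)).const_add (x j)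
  set M' : Matrix (Fin (n + 1)) (Fin (n + 1)) ℝ := x i • Em + T
      + (G i x - 3 * x i * H x) • vecMulVec (fun j => x j) (fun j => x j)
      + H x • (vecMulVec (Pi.single i 1) (fun j => x j) + vecMulVec (fun j => x j) (Pi.single i 1))
    with hM'
  have dM : ∀ j k, HasDerivAt (fun t : ℝ => M (x + t • e i) j k) (M' j k) 0 := by
    intro j k
    simp only [hM, Matrix.of_apply]
    have h := (dN.mul (dE j k)).add
      ((dH.mul ((dN.inv (by simp [hx0])).pow 3)).mul ((dc j).mul (dc k)))
    refine h.congr_deriv ?_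
    simp only [Pi.mul_apply, Pi.pow_apply, Pi.inv_apply, hx_0, hxn]
    simp [hM', hT, hEm, hEe, Matrix.vecMulVec_apply]
    ring
  have ddet : HasDerivAt (fun t : ℝ => (M (x + t • e i)).det) (B.det * trace (B⁻¹ * M')) 0 := by
    have h := hasDerivAt_det_aux (fun t : ℝ => M (x + t • e i)) M' 0 dM
    simp only [hx_0, hMx] at h
    exact h hu
  have dW : HasDerivAt (fun t : ℝ => W (x + t • e i))
      ((n + 1) * (G i x / H x - x i) + trace (B⁻¹ * M')) 0 := by
    have h1 := dH.log (by rw [hx_0]; exact hH0.ne')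
    have h2 := dN.log (by rw [hx_0]; simp [hx0])
    have h3 := ddet.log (by rw [hx_0]; exact hdetx)
    refine (((h1.sub h2).const_mul ((n:ℝ) + 1)).add h3).congr_deriv ?_
    simp only [hx_0, hMx, hxn, div_one]
    rw [mul_div_cancel_left₀ _ hu.ne_zero]
  have hWf := (line W hWd).unique dW
  have hR : sphGrad n (logQ n H) x i = (n + 1) * (G i x / H x - x i) + trace (B⁻¹ * M') := by
    rw [sphGrad, gradient_coord, hWeq.fderiv_eq]
    exact hWf
  rw [hR, caLap, hleft, a1, hgrad, a2]
  push_cast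
  field_simp
  ring
end
end
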